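/- (Posterior concentration for nonparametric Gaussian regression.) Let a ≥ 1, d ∈ ℕ, β > 0, K ≥ 1, F ≥ 1, σ_0² > 0 and ν ∈ [0,1). Suppose (X_i, Y_i), i = 1, …, n, are i.i.d. with X ∼ P_X supported on X ⊆ [−a,a]^d and Y | X ∼ N(f_0(X), σ_0²), where f_0 ∈ H_d^β(K) and ‖f_0‖_∞ ≤ F. Consider the Bayesian model Y_i ∼ N(T_F ∘ f_{θ,ρν}(X_i), σ²) where f_{θ,ρν} is a Leaky-ReLU DNN with architecture (L_n, (d, r_n, …, r_n, 1)), L_n = ⌈C_L log n⌉ and r_n = ⌈C_r n^{d/(2(2β+d))}⌉ for the constants C_L, C_r of the bounded-parameter approximation theorem, with independent priors Π_θ on ℝ^{T_n} satisfying Assumption 1 and Π_{σ²} satisfying Assumption 2. Then for ε_n = n^{−β/(2β+d)} (log n)^γ with γ > 2 and any sequence M_n → ∞, the posterior mass Π_n( (θ, σ²) : ‖T_F ∘ f_{θ,ρν} − f_0‖_{2,P_X} + |σ² − σ_0²| > M_n ε_n | D^{(n)} ) converges to 0 in probability under the law P_0^n of the training data. -/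

import Mathlib

open MeasureTheory ProbabilityTheory Filter
open scoped ENNReal NNReal

noncomputable section

/-- Leaky-ReLU activation. -/
def lrelu (ν x : ℝ) : ℝ := max x (ν * x)

/-- A fully connected Leaky-ReLU network with input dimension `d` and hidden width `r`:
a first affine layer `ℝ^d → ℝ^r`, a list of inner affine layers `ℝ^r → ℝ^r`, and an
output affine layer `ℝ^r → ℝ`.  Each affine layer except the last is followed by the
componentwise Leaky-ReLU activation.  The number of hidden layers (the depth) is
`hid.length + 1`. -/
structure LNet (d r : ℕ) where
  W0 : Fin r → Fin d → ℝ
  b0 : Fin r → ℝ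
  hid : List ((Fin r → Fin r → ℝ) × (Fin r → ℝ))
  Wout : Fin r → ℝ
  bout : ℝ

/-- Evaluation of a Leaky-ReLU network. -/
def LNet.eval (ν : ℝ) {d r : ℕ} (net : LNet d r) (x : Fin d → ℝ) : ℝ :=
  let h := net.hid.foldl
    (fun (h : Fin r → ℝ) p => fun i => lrelu ν ((∑ j, p.1 i j * h j) + p.2 i))
    (fun i => lrelu ν ((∑ j, net.W0 i j * x j) + net.b0 i))
  (∑ i, net.Wout i * h i) + net.bout

/-- All weights and biases of the network are bounded by `B` in absolute value. -/
def LNet.bounded {d r : ℕ} (net : LNet d r) (B : ℝ) : Prop :=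
  (∀ i j, |net.W0 i j| ≤ B) ∧ (∀ i, |net.b0 i| ≤ B) ∧
  (∀ p ∈ net.hid, (∀ i j, |p.1 i j| ≤ B) ∧ (∀ i, |p.2 i| ≤ B)) ∧
  (∀ i, |net.Wout i| ≤ B) ∧ |net.bout| ≤ B

/-- Membership in the class `F_{ρν}^{DNN}(L, r, B)` of Leaky-ReLU networks with
architecture `(L, (d, r, …, r, 1))` and all parameters bounded by `B`. -/
def memDNN (ν : ℝ) (d L r : ℕ) (B : ℝ) (f : (Fin d → ℝ) → ℝ) : Prop :=
  ∃ net : LNet d r, net.hid.length + 1 = L ∧ net.bounded B ∧ ∀ x, f x = net.eval ν x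

/-- The cube `[−a,a]^d`. -/
def cube (a : ℝ) (d : ℕ) : Set (Fin d → ℝ) := {x | ∀ i, x i ∈ Set.Icc (-a) a}

/-- Partial derivative of `f : ℝ^d → ℝ` in coordinate `i`. -/
def pder {d : ℕ} (i : Fin d) (f : (Fin d → ℝ) → ℝ) : (Fin d → ℝ) → ℝ :=
  fun x => fderiv ℝ f x (Pi.single i 1)

/-- Multi-index partial derivative `∂^α f = ∂_1^{α 1} ⋯ ∂_d^{α d} f`. -/
def pderm {d : ℕ} (α : Fin d → ℕ) (f : (Fin d → ℝ) → ℝ) : (Fin d → ℝ) → ℝ :=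
  (List.finRange d).foldr (fun i g => (pder i)^[α i] g) f

/-- Membership in the Hölder ball `H_d^β(K)` on `[−a,a]^d`: `f` is `⌊β⌋`-times
continuously differentiable and there are bounds `S α` on `|∂^α f|` over the cube for all
multi-indices with `|α|₁ < β`, and Hölder constants `H α` for `∂^α f` (with exponent
`β − ⌊β⌋`, with respect to the sup-norm) for all multi-indices with `|α|₁ = ⌊β⌋`, whose
total sum is at most `K`. -/
def memHolder (a : ℝ) (d : ℕ) (β K : ℝ) (f : (Fin d → ℝ) → ℝ) : Prop :=
  ContDiff ℝ (⌊β⌋₊ : ℕ∞) f ∧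
  ∃ S H : (Fin d → Fin (⌊β⌋₊ + 1)) → ℝ,
    (∀ α : Fin d → Fin (⌊β⌋₊ + 1), ((∑ i, (α i : ℕ) : ℕ) : ℝ) < β →
      ∀ x ∈ cube a d, |pderm (fun i => (α i : ℕ)) f x| ≤ S α) ∧
    (∀ α : Fin d → Fin (⌊β⌋₊ + 1), (∑ i, (α i : ℕ)) = ⌊β⌋₊ →
      ∀ x₁ ∈ cube a d, ∀ x₂ ∈ cube a d, x₁ ≠ x₂ →
        |pderm (fun i => (α i : ℕ)) f x₁ - pderm (fun i => (α i : ℕ)) f x₂| ≤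
          H α * ‖x₁ - x₂‖ ^ (β - (⌊β⌋₊ : ℝ))) ∧
    (∑ α ∈ Finset.univ.filter
        (fun α : Fin d → Fin (⌊β⌋₊ + 1) => ((∑ i, (α i : ℕ) : ℕ) : ℝ) < β), S α) +
      (∑ α ∈ Finset.univ.filter
        (fun α : Fin d → Fin (⌊β⌋₊ + 1) => (∑ i, (α i : ℕ)) = ⌊β⌋₊), H α) ≤ K

/-- Index type for the parameters `θ` of a DNN with architecture `(L, (d, r, …, r, 1))`:
first-layer weights and biases, the `L−1` inner-layer weight matrices and bias vectors,
and the output-layer weights and bias.  Its cardinality is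
`T = (d+1)r + (L−1)(r+1)r + (r+1)`. -/
abbrev ParamIdx (d r L : ℕ) : Type :=
  (Fin r × Fin d) ⊕ Fin r ⊕ (Fin (L - 1) × Fin r × Fin r) ⊕ (Fin (L - 1) × Fin r) ⊕
    Fin r ⊕ Unit

/-- The Leaky-ReLU network with architecture `(L, (d, r, …, r, 1))` determined by the
parameter vector `θ`. -/
def netOfParams (ν : ℝ) (d r L : ℕ) (θ : ParamIdx d r L → ℝ) (x : Fin d → ℝ) : ℝ :=
  let h0 : Fin r → ℝ := fun i =>
    lrelu ν ((∑ j, θ (Sum.inl (i, j)) * x j) + θ (Sum.inr (Sum.inl i)))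
  let h : Fin r → ℝ := (List.finRange (L - 1)).foldl
    (fun h l => fun i =>
      lrelu ν ((∑ j, θ (Sum.inr (Sum.inr (Sum.inl (l, i, j)))) * h j) +
        θ (Sum.inr (Sum.inr (Sum.inr (Sum.inl (l, i))))))) h0
  (∑ i, θ (Sum.inr (Sum.inr (Sum.inr (Sum.inr (Sum.inl i))))) * h i) +
    θ (Sum.inr (Sum.inr (Sum.inr (Sum.inr (Sum.inr ())))))

/-- Truncation operator `T_F(x) = min(max(x, −F), F)`. -/
def trunc (F x : ℝ) : ℝ := min (max x (-F)) F

/-- The Gaussian density with mean `m` and variance `s`, evaluated at `y`. -/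
def gpdf (m s y : ℝ) : ℝ :=
  (Real.sqrt (2 * Real.pi * s))⁻¹ * Real.exp (-((y - m) ^ 2) / (2 * s))

/-- The joint law of `(X, Y)` where `X ∼ P_X` and `Y | X ∼ N(f₀(X), v)`. -/
def gaussRegLaw (d : ℕ) (PX : Measure (Fin d → ℝ)) (f₀ : (Fin d → ℝ) → ℝ) (v : ℝ≥0) :
    Measure ((Fin d → ℝ) × ℝ) :=
  PX.bind fun x => (gaussianReal (f₀ x) v).map fun y => (x, y)

/-- Posterior mass of the set `A` under prior `prior` and likelihood `lik`. -/
def postMass {α : Type*} [MeasurableSpace α] (prior : Measure α) (lik : α → ℝ)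
    (A : Set α) : ℝ≥0∞ :=
  (∫⁻ p in A, ENNReal.ofReal (lik p) ∂prior) / ∫⁻ p, ENNReal.ofReal (lik p) ∂prior

/-- The `L²(P_X)` distance `‖g − h‖_{2,P_X}`. -/
def l2dist (d : ℕ) (PX : Measure (Fin d → ℝ)) (g h : (Fin d → ℝ) → ℝ) : ℝ :=
  Real.sqrt (∫ x, (g x - h x) ^ 2 ∂PX)

/-- The Gaussian regression likelihood of `(θ, σ²)` given the data `D`. -/
def gaussLik (ν F : ℝ) (d r L : ℕ) {n : ℕ} (D : Fin n → (Fin d → ℝ) × ℝ)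
    (p : (ParamIdx d r L → ℝ) × ℝ) : ℝ :=
  ∏ i, gpdf (trunc F (netOfParams ν d r L p.1 (D i).1)) p.2 (D i).2

/-- The depth `L_n = ⌈C_L log n⌉` of the Bayesian model. -/
def Ldepth (CL : ℝ) (n : ℕ) : ℕ := ⌈CL * Real.log n⌉₊

/-- The width `r_n = ⌈C_r n^{d/(2(2β+d))}⌉` of the Bayesian model. -/
def rwidth (Cr β : ℝ) (d n : ℕ) : ℕ :=
  ⌈Cr * (n : ℝ) ^ ((d : ℝ) / (2 * (2 * β + d)))⌉₊


/-- A separating linear form exists among `ℓ_k = ∑ k^{e j} X_j`, `k ≤ |S|² W`. -/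
lemma exists_sep_form {σ S : Type*} [Fintype σ] [Fintype S] (e : σ → ℕ)
    (he : Function.Injective e) (W : ℕ) (heW : ∀ j, e j ≤ W)
    (x : S → σ → ℝ) (hx : Function.Injective x) :
    ∃ k ∈ Finset.range (Fintype.card S * Fintype.card S * W + 1),
      Function.Injective (fun s => ∑ j, (k : ℝ) ^ (e j) * x s j) := by
  classical
  let P : S × S → Polynomial ℝ := fun q =>
    if q.1 = q.2 then 1 else ∑ j, Polynomial.C (x q.1 j - x q.2 j) * Polynomial.X ^ (e j)
  have hPne : ∀ q, P q ≠ 0 := by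
    intro q
    by_cases h : q.1 = q.2
    · simp [P, h]
    · simp only [P, h, if_false]
      obtain ⟨j, hj⟩ : ∃ j, x q.1 j ≠ x q.2 j := by
        by_contra hcon
        push Not at hcon
        exact h (hx (funext hcon))
      intro h0
      have := congrArg (fun p => Polynomial.coeff p (e j)) h0
      simp only [Polynomial.finsetSum_coeff, Polynomial.coeff_C_mul, Polynomial.coeff_X_pow,
        Polynomial.coeff_zero] at this
      rw [Finset.sum_eq_single j] at this
      · simp at this
        exact hj (by linarith)
      · intro i _ hij
        rw [if_neg, mul_zero]
        intro h'
        exact hij (he h').symm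
      · simp
  have hdeg : (∏ q, P q).natDegree ≤ Fintype.card S * Fintype.card S * W := by
    refine (Polynomial.natDegree_prod_le _ _).trans ?_
    have : ∀ q ∈ (Finset.univ : Finset (S × S)), (P q).natDegree ≤ W := by
      intro q _
      by_cases h : q.1 = q.2
      · simp [P, h]
      · simp only [P, h, if_false]
        refine Polynomial.natDegree_sum_le_of_forall_le _ _ ?_
        intro j _
        exact (Polynomial.natDegree_C_mul_X_pow_le _ _).trans (heW j)
    refine (Finset.sum_le_card_nsmul _ _ _ this).trans ?_
    simp [Fintype.card_prod]
  by_contra hcon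
  push Not at hcon
  have : (∏ q, P q) = 0 := by
    refine Polynomial.eq_zero_of_natDegree_lt_card_of_eval_eq_zero' _
      ((Finset.range (Fintype.card S * Fintype.card S * W + 1)).image (fun k : ℕ => (k : ℝ))) ?_ ?_
    · intro r hr
      obtain ⟨k, hk, rfl⟩ := Finset.mem_image.1 hr
      have h1 := hcon k hk
      unfold Function.Injective at h1
      push Not at h1
      obtain ⟨s, s', h1, h2⟩ := h1
      rw [Polynomial.eval_prod]
      refine Finset.prod_eq_zero (Finset.mem_univ (s, s')) ?_
      simp only [P, h2, if_false]
      rw [Polynomial.eval_finsetSum]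
      simp only [Polynomial.eval_mul, Polynomial.eval_C, Polynomial.eval_pow, Polynomial.eval_X]
      rw [← sub_eq_zero, ← Finset.sum_sub_distrib] at h1
      rw [← h1]
      exact Finset.sum_congr rfl (fun j _ => by ring)
    · rw [Finset.card_image_of_injective _ Nat.cast_injective, Finset.card_range]
      omega
  exact (Finset.prod_ne_zero_iff.2 (fun q _ => hPne q)) this

lemma exists_relation {σ : Type*} [Fintype σ] {I : Type*} [Fintype I] (R : ℕ)
    (φ : I → MvPolynomial σ ℝ) (hφ : ∀ i, (φ i).totalDegree ≤ R)
    (hcard : (R + 1) ^ Fintype.card σ < Fintype.card I) :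
    ∃ c : I → ℝ, c ≠ 0 ∧ ∑ i, c i • φ i = 0 := by
  classical
  let f : (I → ℝ) →ₗ[ℝ] ((σ → Fin (R + 1)) → ℝ) :=
    { toFun := fun c m => MvPolynomial.coeff
        (Finsupp.equivFunOnFinite.symm (fun j => (m j : ℕ))) (∑ i, c i • φ i)
      map_add' := by
        intro a b; ext m
        simp [add_smul, Finset.sum_add_distrib, MvPolynomial.coeff_sum, add_mul]
      map_smul' := by
        intro a b; ext m
        simp [MvPolynomial.coeff_sum, Finset.mul_sum, mul_assoc] }
  have hker := LinearMap.ker_ne_bot_of_finrank_lt (f := f) (by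
    simp only [Module.finrank_fintype_fun_eq_card]
    simpa using hcard)
  obtain ⟨c, hc, hc0⟩ := (Submodule.ne_bot_iff _).1 hker
  refine ⟨c, hc0, ?_⟩
  have hdeg : (∑ i, c i • φ i).totalDegree ≤ R := by
    refine (MvPolynomial.totalDegree_finsetSum _ _).trans ?_
    refine Finset.sup_le ?_
    intro i _
    exact (MvPolynomial.totalDegree_smul_le _ _).trans (hφ i)
  ext m
  rw [MvPolynomial.coeff_zero]
  by_cases hm : ∀ j, m j ≤ R
  · have h1 := congrFun (LinearMap.mem_ker.1 hc) (fun j => ⟨m j, Nat.lt_succ_of_le (hm j)⟩)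
    have h2 : (Finsupp.equivFunOnFinite.symm (fun j => m j)) = m := by
      ext j; simp
    simpa [f, h2] using h1
  · push Not at hm
    obtain ⟨j, hj⟩ := hm
    refine MvPolynomial.coeff_eq_zero_of_totalDegree_lt ?_
    refine lt_of_le_of_lt hdeg (lt_of_lt_of_le hj ?_)
    exact Finset.single_le_sum (f := fun i => m i) (fun _ _ => Nat.zero_le _)
      (Finsupp.mem_support_iff.2 (by omega))

lemma count_crit {σ S : Type*} [Fintype σ] [DecidableEq σ] [Fintype S] (E : ℕ)
    (hE : 1 ≤ E) (G : MvPolynomial σ ℝ) (H : σ → MvPolynomial σ ℝ)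
    (hG : G.totalDegree ≤ E) (hH : ∀ i, (H i).totalDegree ≤ E)
    (hx : ∀ v : σ → ℝ, ∃ x : S → σ → ℝ, Function.Injective x ∧
      ∀ s, MvPolynomial.eval (x s) G ≠ 0 ∧
        ∀ i, MvPolynomial.eval (x s) (H i) = v i * MvPolynomial.eval (x s) G) :
    Fintype.card S ≤ (Fintype.card σ * E + 1) ^ Fintype.card σ := by
  classical
  set W := Fintype.card σ with hW
  set A := (W * E + 1) ^ W with hA
  set B := A + 1 with hB
  let e : σ → ℕ := fun j => (Fintype.equivFin σ j : ℕ)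
  have he : Function.Injective e := fun i j hij =>
    (Fintype.equivFin σ).injective (Fin.ext hij)
  have heW : ∀ j, e j ≤ W := fun j => (Fintype.equivFin σ j).2.le
  let ℓ : ℕ → MvPolynomial σ ℝ := fun k => ∑ j, MvPolynomial.C ((k : ℝ) ^ (e j)) * MvPolynomial.X j
  have hℓ : ∀ k, (ℓ k).totalDegree ≤ 1 := by
    intro k
    refine (MvPolynomial.totalDegree_finsetSum _ _).trans (Finset.sup_le ?_)
    intro j _
    refine (MvPolynomial.totalDegree_mul _ _).trans ?_
    rw [MvPolynomial.totalDegree_C, MvPolynomial.totalDegree_X]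
  let φ : ℕ → Fin (A + 1) × (σ → Fin B) → MvPolynomial σ ℝ := fun k q =>
    (ℓ k) ^ (q.1 : ℕ) * ∏ i, ((H i) ^ (q.2 i : ℕ) * G ^ (B - (q.2 i : ℕ)))
  have hφ : ∀ k q, (φ k q).totalDegree ≤ A + W * B * E := by
    intro k q
    refine (MvPolynomial.totalDegree_mul _ _).trans (add_le_add ?_ ?_)
    · refine (MvPolynomial.totalDegree_pow _ _).trans ?_
      have := q.1.2
      calc (q.1 : ℕ) * (ℓ k).totalDegree ≤ A * 1 :=
            Nat.mul_le_mul (by omega) (hℓ k)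
        _ = A := mul_one _
    · refine (MvPolynomial.totalDegree_finsetProd _ _).trans ?_
      have : ∀ i ∈ (Finset.univ : Finset σ),
          ((H i) ^ (q.2 i : ℕ) * G ^ (B - (q.2 i : ℕ))).totalDegree ≤ B * E := by
        intro i _
        refine (MvPolynomial.totalDegree_mul _ _).trans ?_
        have h1 := (MvPolynomial.totalDegree_pow (H i) (q.2 i : ℕ)).trans
          (Nat.mul_le_mul_left _ (hH i))
        have h2 := (MvPolynomial.totalDegree_pow G (B - (q.2 i : ℕ))).trans
          (Nat.mul_le_mul_left _ hG)
        have h3 : (q.2 i : ℕ) + (B - (q.2 i : ℕ)) = B := by have := (q.2 i).2; omega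
        calc _ ≤ (q.2 i : ℕ) * E + (B - (q.2 i : ℕ)) * E := add_le_add h1 h2
          _ = B * E := by rw [← add_mul, h3]
      refine (Finset.sum_le_card_nsmul _ _ _ this).trans ?_
      simp [hW, mul_assoc]
  have hrel : ∀ k, ∃ c : Fin (A + 1) × (σ → Fin B) → ℝ, c ≠ 0 ∧ ∑ i, c i • φ k i = 0 := by
    intro k
    refine exists_relation _ (φ k) (hφ k) ?_
    have h1 : A + W * B * E + 1 = B * (W * E + 1) := by rw [hB]; ring
    rw [h1, mul_pow, ← hW, ← hA]
    simp only [Fintype.card_prod, Fintype.card_fin, Fintype.card_fun, ← hW]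
    rw [mul_comm]
    exact Nat.mul_lt_mul_of_pos_right (Nat.lt_succ_self A) (pow_pos (Nat.succ_pos A) _)
  choose c hc0 hc using hrel
  have hne : ∀ k, ∃ q, c k q ≠ 0 := fun k => Function.ne_iff.1 (hc0 k)
  choose q hq using hne
  let mon : (σ → Fin B) → (σ →₀ ℕ) := fun b => Finsupp.equivFunOnFinite.symm (fun j => (b j : ℕ))
  have hmon : Function.Injective mon := by
    intro b b' hb
    funext j
    have := DFunLike.congr_fun hb j
    exact Fin.ext (by simpa [mon] using this)
  let Q : ℕ → Fin (A + 1) → MvPolynomial σ ℝ := fun k a =>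
    ∑ b, MvPolynomial.monomial (mon b) (c k (a, b))
  have hQ : ∀ k, Q k (q k).1 ≠ 0 := by
    intro k h0
    have := congrArg (MvPolynomial.coeff (mon (q k).2)) h0
    simp only [Q, MvPolynomial.coeff_sum, MvPolynomial.coeff_monomial,
      MvPolynomial.coeff_zero] at this
    rw [Finset.sum_eq_single (q k).2] at this
    · simp at this
      exact hq k this
    · intro b _ hb
      rw [if_neg (fun h => hb (hmon h))]
    · simp
  set K0 := Fintype.card S * Fintype.card S * W + 1
  have hprod : ∏ k ∈ Finset.range K0, Q k (q k).1 ≠ 0 :=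
    Finset.prod_ne_zero_iff.2 (fun k _ => hQ k)
  obtain ⟨v, hv⟩ : ∃ v, MvPolynomial.eval v (∏ k ∈ Finset.range K0, Q k (q k).1) ≠ 0 := by
    by_contra hcon
    push Not at hcon
    exact hprod (MvPolynomial.funext (fun v => by rw [hcon v, map_zero]))
  obtain ⟨x, hxi, hx⟩ := hx v
  obtain ⟨k, hk, hinj⟩ := exists_sep_form e he W heW x hxi
  have hvk : MvPolynomial.eval v (Q k (q k).1) ≠ 0 := by
    rw [map_prod] at hv
    exact Finset.prod_ne_zero_iff.1 hv k hk
  let P : Polynomial ℝ := ∑ a : Fin (A + 1), Polynomial.C (MvPolynomial.eval v (Q k a)) *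
    Polynomial.X ^ (a : ℕ)
  have hPdeg : P.natDegree ≤ A := by
    refine Polynomial.natDegree_sum_le_of_forall_le _ _ ?_
    intro a _
    exact (Polynomial.natDegree_C_mul_X_pow_le _ _).trans (by have := a.2; omega)
  have hPne : P ≠ 0 := by
    intro h0
    have := congrArg (fun p => Polynomial.coeff p ((q k).1 : ℕ)) h0
    simp only [P, Polynomial.finsetSum_coeff, Polynomial.coeff_C_mul, Polynomial.coeff_X_pow,
      Polynomial.coeff_zero] at this
    rw [Finset.sum_eq_single (q k).1] at this
    · simp at this
      exact hvk this
    · intro i _ hij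
      rw [if_neg, mul_zero]
      intro h'
      exact hij (Fin.ext h').symm
    · simp
  have hroot : ∀ s, P.eval (∑ j, (k : ℝ) ^ (e j) * x s j) = 0 := by
    intro s
    obtain ⟨hG0, hHs⟩ := hx s
    have h1 := congrArg (MvPolynomial.eval (x s)) (hc k)
    set g := MvPolynomial.eval (x s) G
    have hl : MvPolynomial.eval (x s) (ℓ k) = ∑ j, (k : ℝ) ^ (e j) * x s j := by
      simp [ℓ]
    set t := ∑ j, (k : ℝ) ^ (e j) * x s j
    have h2 : ∀ q : Fin (A + 1) × (σ → Fin B), MvPolynomial.eval (x s) (φ k q) =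
        (g ^ B) ^ W * (t ^ (q.1 : ℕ) * ∏ i, v i ^ (q.2 i : ℕ)) := by
      intro q
      simp only [φ, map_mul, map_pow, hl, map_prod, hHs]
      have : ∀ i, (v i * g) ^ (q.2 i : ℕ) * g ^ (B - (q.2 i : ℕ)) =
          v i ^ (q.2 i : ℕ) * g ^ B := by
        intro i
        rw [mul_pow, mul_assoc, ← pow_add]
        congr 2
        have := (q.2 i).2; omega
      change t ^ (q.1 : ℕ) * ∏ i, (v i * g) ^ (q.2 i : ℕ) * g ^ (B - (q.2 i : ℕ)) = _
      rw [Finset.prod_congr rfl (fun i _ => this i), Finset.prod_mul_distrib, Finset.prod_const,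
        Finset.card_univ, ← hW]
      ring
    simp only [map_sum, MvPolynomial.smul_eval, h2, map_zero] at h1
    have h3 : (g ^ B) ^ W * P.eval t = 0 := by
      rw [← h1, Polynomial.eval_finsetSum, Finset.mul_sum, Fintype.sum_prod_type]
      refine Finset.sum_congr rfl (fun a _ => ?_)
      rw [Polynomial.eval_mul, Polynomial.eval_C, Polynomial.eval_pow, Polynomial.eval_X]
      simp only [Q, map_sum, MvPolynomial.eval_monomial]
      rw [Finset.sum_mul, Finset.mul_sum]
      refine Finset.sum_congr rfl (fun b _ => ?_)
      rw [Finsupp.prod_fintype _ _ (by simp)]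
      simp only [mon, Finsupp.equivFunOnFinite_symm_apply_apply]
      ring
    rcases mul_eq_zero.1 h3 with h | h
    · exact absurd h (pow_ne_zero _ (pow_ne_zero _ hG0))
    · exact h
  by_contra hcon
  push Not at hcon
  exact hPne (Polynomial.eq_zero_of_natDegree_lt_card_of_eval_eq_zero P hinj hroot (by omega))

lemma totalDegree_pderiv_le' {σ : Type*} (i : σ) (p : MvPolynomial σ ℝ) :
    (MvPolynomial.pderiv i p).totalDegree ≤ p.totalDegree := by
  classical
  refine Finset.sup_le ?_
  intro m hm
  have h1 : MvPolynomial.coeff m (MvPolynomial.pderiv i p) ≠ 0 := MvPolynomial.mem_support_iff.1 hm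
  rw [MvPolynomial.coeff_pderiv] at h1
  have h2 : MvPolynomial.coeff (m + Finsupp.single i 1) p ≠ 0 := by
    intro h; apply h1; rw [h]; simp
  have h3 := MvPolynomial.le_totalDegree (MvPolynomial.mem_support_iff.2 h2)
  refine le_trans ?_ h3
  rw [Finsupp.sum_add_index' (by simp) (by simp)]
  exact Nat.le_add_right _ _

lemma hasDerivAt_eval_update {σ : Type*} [DecidableEq σ] (x : σ → ℝ) (i : σ)
    (p : MvPolynomial σ ℝ) (t : ℝ) :
    HasDerivAt (fun t => MvPolynomial.eval (Function.update x i t) p)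
      (MvPolynomial.eval (Function.update x i t) (MvPolynomial.pderiv i p)) t := by
  induction p using MvPolynomial.induction_on with
  | C a => simpa using hasDerivAt_const t a
  | add p q hp hq => simpa using hp.fun_add hq
  | mul_X p j hp =>
    have hX : HasDerivAt (fun t => Function.update x i t j) (if j = i then 1 else 0) t := by
      by_cases h : j = i
      · subst h; simpa using hasDerivAt_id' t
      · simpa [h] using hasDerivAt_const t (x j)
    have := hp.fun_mul hX
    simp only [map_mul, MvPolynomial.eval_X]
    have he : (MvPolynomial.eval (Function.update x i t)) ((MvPolynomial.pderiv i)
        (p * MvPolynomial.X j)) = (MvPolynomial.eval (Function.update x i t))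
        ((MvPolynomial.pderiv i) p) * Function.update x i t j +
        (MvPolynomial.eval (Function.update x i t)) p * if j = i then 1 else 0 := by
      by_cases h : j = i
      · subst h; simp [MvPolynomial.pderiv_mul]; ring
      · simp [MvPolynomial.pderiv_mul, h, MvPolynomial.pderiv_X_of_ne h]; ring
    rw [he]
    exact this

lemma exists_crit {σ ι : Type*} [Fintype σ] [DecidableEq σ] [Fintype ι]
    (p : ι → MvPolynomial σ ℝ) (R : ℝ) (z : σ → ℝ) (hz : ∑ j, z j ^ 2 < R)
    (hzp : ∀ i, MvPolynomial.eval z (p i) ≠ 0) (v : σ → ℝ) :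
    let G := (MvPolynomial.C R - ∑ j, MvPolynomial.X j ^ 2) * ∏ i, p i
    ∃ x, MvPolynomial.eval x G ≠ 0 ∧
      (∀ i, 0 < MvPolynomial.eval z (p i) * MvPolynomial.eval x (p i)) ∧
      ∀ i, MvPolynomial.eval x (MvPolynomial.pderiv i G) = v i * MvPolynomial.eval x G := by
  intro G
  have hGe : ∀ x, MvPolynomial.eval x G = (R - ∑ j, x j ^ 2) * ∏ i, MvPolynomial.eval x (p i) := by
    intro x; simp [G, map_prod]
  let h : (σ → ℝ) → ℝ := fun x => (MvPolynomial.eval x G) ^ 2 * Real.exp (-2 * ∑ j, v j * x j)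
  let C : Set (σ → ℝ) := {x | ∑ j, x j ^ 2 ≤ R ∧
    ∀ i, 0 ≤ MvPolynomial.eval z (p i) * MvPolynomial.eval x (p i)}
  have hcont : ∀ q : MvPolynomial σ ℝ, Continuous fun x : σ → ℝ => MvPolynomial.eval x q :=
    fun q => MvPolynomial.continuous_eval q
  have hsq : Continuous fun x : σ → ℝ => ∑ j, x j ^ 2 := by fun_prop
  have hCcl : IsClosed C := by
    have : C = {x | ∑ j, x j ^ 2 ≤ R} ∩
      ⋂ i, {x | 0 ≤ MvPolynomial.eval z (p i) * MvPolynomial.eval x (p i)} := by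
      ext x; simp [C]
    rw [this]
    refine (isClosed_le hsq continuous_const).inter (isClosed_iInter fun i => ?_)
    exact isClosed_le continuous_const (continuous_const.mul (hcont _))
  have hCb : C ⊆ Metric.closedBall 0 (R + 1) := by
    intro x hx
    rw [mem_closedBall_zero_iff, pi_norm_le_iff_of_nonneg]
    · intro j
      have h1 : x j ^ 2 ≤ ∑ j, x j ^ 2 :=
        Finset.single_le_sum (f := fun j => x j ^ 2) (fun _ _ => sq_nonneg _) (Finset.mem_univ j)
      have h2 := hx.1
      have : |x j| ^ 2 ≤ R := by rw [sq_abs]; linarith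
      rw [Real.norm_eq_abs]
      nlinarith [abs_nonneg (x j), sq_nonneg (|x j| - 1)]
    · have : 0 ≤ ∑ j, z j ^ 2 := Finset.sum_nonneg fun _ _ => sq_nonneg _
      linarith
  have hCc : IsCompact C := (isCompact_closedBall _ _).of_isClosed_subset hCcl hCb
  have hzC : z ∈ C := ⟨hz.le, fun i => mul_self_nonneg _⟩
  have hhc : Continuous h := by
    refine ((hcont G).pow 2).mul (Real.continuous_exp.comp ?_)
    fun_prop
  obtain ⟨x, hxC, hxmax⟩ := hCc.exists_isMaxOn ⟨z, hzC⟩ hhc.continuousOn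
  have hGz : MvPolynomial.eval z G ≠ 0 := by
    rw [hGe]
    exact mul_ne_zero (by linarith) (Finset.prod_ne_zero_iff.2 fun i _ => hzp i)
  have hhz : 0 < h z := by positivity
  have hhx : 0 < h x := lt_of_lt_of_le hhz (hxmax hzC)
  have hGx : MvPolynomial.eval x G ≠ 0 := by
    intro h0
    simp only [h, h0] at hhx
    norm_num at hhx
  have hGx' := hGx
  rw [hGe] at hGx'
  obtain ⟨hx1, hx2⟩ := mul_ne_zero_iff.1 hGx'
  have hx3 : ∀ i, MvPolynomial.eval x (p i) ≠ 0 := fun i =>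
    Finset.prod_ne_zero_iff.1 hx2 i (Finset.mem_univ i)
  have hpos : ∀ i, 0 < MvPolynomial.eval z (p i) * MvPolynomial.eval x (p i) := fun i =>
    lt_of_le_of_ne (hxC.2 i) (mul_ne_zero (hzp i) (hx3 i)).symm
  have hlt : ∑ j, x j ^ 2 < R := lt_of_le_of_ne hxC.1 (fun h => hx1 (by rw [h]; ring))
  have hnear : ∀ᶠ y in nhds x, y ∈ C := by
    have h1 : ∀ᶠ y in nhds x, ∑ j, y j ^ 2 < R :=
      (hsq.tendsto x).eventually_lt_const hlt
    have h2 : ∀ᶠ y in nhds x, ∀ i, 0 < MvPolynomial.eval z (p i) * MvPolynomial.eval y (p i) := by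
      refine eventually_all.2 fun i => ?_
      exact ((continuous_const.mul (hcont (p i))).tendsto x).eventually_const_lt (hpos i)
    filter_upwards [h1, h2] with y hy1 hy2
    exact ⟨hy1.le, fun i => (hy2 i).le⟩
  refine ⟨x, hGx, hpos, fun i => ?_⟩
  have hup : Function.update x i (x i) = x := Function.update_eq_self i x
  have hlin : HasDerivAt (fun t => ∑ j, v j * Function.update x i t j) (v i) (x i) := by
    have h1 : ∀ j ∈ (Finset.univ : Finset σ),
        HasDerivAt (fun t => v j * Function.update x i t j) (if j = i then v j else 0) (x i) := by
      intro j _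
      by_cases h : j = i
      · subst h; simpa using (hasDerivAt_id' (x j)).const_mul (v j)
      · simpa [h] using hasDerivAt_const (x i) (v j * x j)
    have := HasDerivAt.fun_sum h1
    simpa using this
  have hd := ((hasDerivAt_eval_update x i G (x i)).pow 2).mul ((hlin.const_mul (-2)).exp)
  have hmax : IsLocalMax (fun t => h (Function.update x i t)) (x i) := by
    have hc : ContinuousAt (fun t => Function.update x i t) (x i) := by
      exact (continuous_const.update i continuous_id).continuousAt
    have : ∀ᶠ t in nhds (x i), Function.update x i t ∈ C := by
      apply hc.eventually
      simpa [hup] using hnear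
    filter_upwards [this] with t ht
    simpa [hup] using hxmax ht
  have h0 := hmax.hasDerivAt_eq_zero (f := fun t => h (Function.update x i t)) hd
  simp only [hup, Pi.pow_apply] at h0
  have hne := Real.exp_ne_zero (-2 * ∑ j, v j * x j)
  have h1 : Real.exp (-2 * ∑ j, v j * x j) * MvPolynomial.eval x G *
      (MvPolynomial.eval x (MvPolynomial.pderiv i G) - v i * MvPolynomial.eval x G) = 0 := by
    push_cast at h0
    linear_combination h0 / 2
  rcases mul_eq_zero.1 h1 with h2 | h2
  · exact absurd h2 (mul_ne_zero hne hGx)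
  · linarith

lemma warren_strict {σ ι S : Type*} [Fintype σ] [DecidableEq σ] [Fintype ι] [Fintype S]
    (D : ℕ) (p : ι → MvPolynomial σ ℝ) (hD : ∀ i, (p i).totalDegree ≤ D)
    (Z : S → σ → ℝ) (hne : ∀ s i, MvPolynomial.eval (Z s) (p i) ≠ 0)
    (hdist : ∀ s s', s ≠ s' → ∃ i,
      MvPolynomial.eval (Z s) (p i) * MvPolynomial.eval (Z s') (p i) < 0) :
    Fintype.card S ≤ (Fintype.card σ * (Fintype.card ι * D + 2) + 1) ^ Fintype.card σ := by
  classical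
  set R : ℝ := 1 + ∑ s, ∑ j, Z s j ^ 2
  have hR : ∀ s, ∑ j, Z s j ^ 2 < R := by
    intro s
    have := Finset.single_le_sum (f := fun s => ∑ j, Z s j ^ 2)
      (fun _ _ => Finset.sum_nonneg fun _ _ => sq_nonneg _) (Finset.mem_univ s)
    simp only [R]; linarith
  set G := (MvPolynomial.C R - ∑ j, MvPolynomial.X j ^ 2 : MvPolynomial σ ℝ) * ∏ i, p i with hG
  have hGd : G.totalDegree ≤ Fintype.card ι * D + 2 := by
    refine (MvPolynomial.totalDegree_mul _ _).trans ?_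
    rw [add_comm]
    refine add_le_add ?_ ?_
    · refine (MvPolynomial.totalDegree_finsetProd _ _).trans ?_
      refine (Finset.sum_le_card_nsmul _ _ D (fun i _ => hD i)).trans ?_
      simp
    · refine (MvPolynomial.totalDegree_sub _ _).trans (max_le ?_ ?_)
      · simp
      · refine (MvPolynomial.totalDegree_finsetSum _ _).trans (Finset.sup_le fun j _ => ?_)
        refine (MvPolynomial.totalDegree_pow _ _).trans ?_
        simp
  refine count_crit (S := S) _ (by omega) G (fun i => MvPolynomial.pderiv i G) hGd
    (fun i => (totalDegree_pderiv_le' i G).trans hGd) ?_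
  intro v
  have := fun s => exists_crit p R (Z s) (hR s) (hne s) v
  choose x hx1 hx2 hx3 using this
  refine ⟨x, ?_, fun s => ⟨hx1 s, hx3 s⟩⟩
  intro s s' hss
  by_contra hcon
  obtain ⟨i, hi⟩ := hdist s s' hcon
  have h1 := hx2 s i
  have h2 := hx2 s' i
  rw [← hss] at h2
  have h3 := mul_pos h1 h2
  nlinarith [mul_self_nonneg (MvPolynomial.eval (x s) (p i)), sq_nonneg (MvPolynomial.eval (x s) (p i))]

/-- Warren-type bound on the number of sign patterns. -/
lemma warren {σ ι : Type*} [Fintype σ] [Finite ι] (N : ℕ) (hN : Nat.card ι ≤ N)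
    (D : ℕ) (p : ι → MvPolynomial σ ℝ) (hD : ∀ i, (p i).totalDegree ≤ D) :
    Nat.card (Set.range (fun (θ : σ → ℝ) => fun i => (0 ≤ MvPolynomial.eval θ (p i)))) ≤
      (Fintype.card σ * (N * D + 2) + 1) ^ Fintype.card σ := by
  classical
  have := Fintype.ofFinite ι
  set S := Set.range (fun (θ : σ → ℝ) => fun i => (0 ≤ MvPolynomial.eval θ (p i)))
  have := Fintype.ofFinite S
  have hZ : ∀ s : S, ∃ θ : σ → ℝ, (fun i => (0 ≤ MvPolynomial.eval θ (p i))) = s.1 := fun s => s.2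
  choose Z hZ using hZ
  obtain ⟨τ, hτ0, hτ⟩ : ∃ τ : ℝ, 0 < τ ∧ ∀ s i, MvPolynomial.eval (Z s) (p i) < 0 →
      MvPolynomial.eval (Z s) (p i) + τ < 0 := by
    have h1 : ∀ᶠ τ in nhdsWithin (0 : ℝ) (Set.Ioi 0), ∀ s i, MvPolynomial.eval (Z s) (p i) < 0 →
      MvPolynomial.eval (Z s) (p i) + τ < 0 := by
      refine eventually_all.2 fun s => eventually_all.2 fun i => ?_
      by_cases h : MvPolynomial.eval (Z s) (p i) < 0
      · have h2 : ∀ᶠ τ in nhds (0 : ℝ), MvPolynomial.eval (Z s) (p i) + τ < 0 := by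
          have : ContinuousAt (fun τ : ℝ => MvPolynomial.eval (Z s) (p i) + τ) 0 := by fun_prop
          exact this.eventually_lt_const (by simpa using h)
        filter_upwards [h2.filter_mono nhdsWithin_le_nhds] with τ hτ _ using hτ
      · exact Eventually.of_forall fun _ h' => absurd h' h
    obtain ⟨τ, h2, h3⟩ := (h1.and self_mem_nhdsWithin).exists
    exact ⟨τ, h3, h2⟩
  rw [Nat.card_eq_fintype_card]
  have hcard : Fintype.card ι ≤ N := by rwa [← Nat.card_eq_fintype_card]
  refine (warren_strict (S := S) D (fun i => p i + MvPolynomial.C τ) ?_ Z ?_ ?_).trans ?_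
  · intro i
    refine (MvPolynomial.totalDegree_add _ _).trans (max_le (hD i) ?_)
    simp
  · intro s i
    simp only [map_add, MvPolynomial.eval_C]
    rcases lt_or_ge (MvPolynomial.eval (Z s) (p i)) 0 with h | h
    · exact (hτ s i h).ne
    · positivity
  · intro s s' hss
    have : ∃ i, ¬ ((0 ≤ MvPolynomial.eval (Z s) (p i)) ↔ (0 ≤ MvPolynomial.eval (Z s') (p i))) := by
      by_contra hcon
      push Not at hcon
      apply hss
      apply Subtype.ext
      rw [← hZ s, ← hZ s']
      funext i
      exact propext (hcon i)
    obtain ⟨i, hi⟩ := this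
    refine ⟨i, ?_⟩
    simp only [map_add, MvPolynomial.eval_C]
    rcases lt_or_ge (MvPolynomial.eval (Z s) (p i)) 0 with h | h <;>
    rcases lt_or_ge (MvPolynomial.eval (Z s') (p i)) 0 with h' | h'
    · exact absurd ⟨fun h'' => absurd h'' (not_le.2 h), fun h'' => absurd h'' (not_le.2 h')⟩ hi
    · exact mul_neg_of_neg_of_pos (hτ s i h) (by positivity)
    · exact mul_neg_of_pos_of_neg (by positivity) (hτ s' i h')
    · exact absurd ⟨fun _ => h', fun _ => h⟩ hi
  · gcongr

/-- A finite family of functions which is piecewise polynomial of degree `≤ D` with respect to a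
common partition into at most `K` pieces. -/
def PWPoly {σ J : Type} (u : J → (σ → ℝ) → ℝ) (K D : ℕ) : Prop :=
  ∃ (κ : Type) (_ : Finite κ) (c : (σ → ℝ) → κ) (P : κ → J → MvPolynomial σ ℝ),
    Nat.card κ ≤ K ∧ (∀ k j, (P k j).totalDegree ≤ D) ∧
    ∀ θ j, u j θ = MvPolynomial.eval θ (P (c θ) j)

/-- The Warren bound. -/
def warrenB (T N D : ℕ) : ℕ := (T * (N * D + 2) + 1) ^ T

lemma warrenB_mono {T N N' D D' : ℕ} (hN : N ≤ N') (hD : D ≤ D') :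
    warrenB T N D ≤ warrenB T N' D' := by
  unfold warrenB; gcongr

lemma PWPoly.refine {σ J : Type} [Fintype σ] [Finite J] {u : J → (σ → ℝ) → ℝ} {K D : ℕ}
    (h : PWPoly u K D) (N : ℕ) (hN : Nat.card J ≤ N) :
    ∃ (κ : Type) (_ : Finite κ) (c : (σ → ℝ) → κ) (P : κ → J → MvPolynomial σ ℝ)
      (s : κ → J → Prop),
    Nat.card κ ≤ K * warrenB (Fintype.card σ) N D ∧ (∀ k j, (P k j).totalDegree ≤ D) ∧
    (∀ θ j, u j θ = MvPolynomial.eval θ (P (c θ) j)) ∧ ∀ θ j, (0 ≤ u j θ) ↔ s (c θ) j := by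
  classical
  obtain ⟨κ, hκ, c, P, hK, hD, hu⟩ := h
  let pat : κ → (σ → ℝ) → J → Prop := fun k θ j => 0 ≤ MvPolynomial.eval θ (P k j)
  let κ' := Σ k : κ, Set.range (pat k)
  have := Fintype.ofFinite κ
  refine ⟨κ', inferInstance, fun θ => ⟨c θ, ⟨pat (c θ) θ, ⟨θ, rfl⟩⟩⟩, fun k => P k.1,
    fun k => k.2.1, ?_, fun k j => hD _ _, fun θ j => hu θ j, fun θ j => ?_⟩
  · rw [Nat.card_sigma]
    calc ∑ k, Nat.card (Set.range (pat k)) ≤ ∑ _k : κ, warrenB (Fintype.card σ) N D :=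
          Finset.sum_le_sum fun k _ => warren N hN D (P k) (hD k)
      _ = Nat.card κ * warrenB (Fintype.card σ) N D := by
          simp [Nat.card_eq_fintype_card]
      _ ≤ _ := Nat.mul_le_mul_right _ hK
  · rw [hu]

lemma PWPoly.affine {σ J J' α : Type} [Fintype α] {u : J → (σ → ℝ) → ℝ} {K D : ℕ}
    (h : PWPoly u K D) (w : J' → α → σ) (b : J' → σ) (g : J' → α → J) :
    PWPoly (fun j θ => (∑ a, θ (w j a) * u (g j a) θ) + θ (b j)) K (D + 1) := by
  obtain ⟨κ, hκ, c, P, hK, hD, hu⟩ := h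
  refine ⟨κ, hκ, c, fun k j => (∑ a, MvPolynomial.X (w j a) * P k (g j a)) +
    MvPolynomial.X (b j), hK, ?_, ?_⟩
  · intro k j
    refine (MvPolynomial.totalDegree_add _ _).trans (max_le ?_ ?_)
    · refine (MvPolynomial.totalDegree_finsetSum _ _).trans (Finset.sup_le fun a _ => ?_)
      refine (MvPolynomial.totalDegree_mul _ _).trans ?_
      rw [MvPolynomial.totalDegree_X, add_comm]
      exact Nat.add_le_add_right (hD _ _) 1
    · rw [MvPolynomial.totalDegree_X]; omega
  · intro θ j
    simp [hu]

lemma PWPoly.act {σ J : Type} [Fintype σ] [Finite J] {u : J → (σ → ℝ) → ℝ} {K D : ℕ}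
    (h : PWPoly u K D) (N : ℕ) (hN : Nat.card J ≤ N) (ν : ℝ) (hν1 : ν < 1) :
    PWPoly (fun j θ => lrelu ν (u j θ)) (K * warrenB (Fintype.card σ) N D) D := by
  classical
  obtain ⟨κ, hκ, c, P, s, hK, hD, hu, hs⟩ := h.refine N hN
  refine ⟨κ, hκ, c, fun k j => if s k j then P k j else MvPolynomial.C ν * P k j, hK, ?_, ?_⟩
  · intro k j
    beta_reduce
    split_ifs
    · exact hD _ _
    · refine (MvPolynomial.totalDegree_mul _ _).trans ?_
      rw [MvPolynomial.totalDegree_C, zero_add]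
      exact hD _ _
  · intro θ j
    by_cases h0 : 0 ≤ u j θ
    · simp only [(hs θ j).1 h0, if_true, ← hu]
      unfold lrelu
      exact max_eq_left (by nlinarith)
    · have : ¬ s (c θ) j := fun h' => h0 ((hs θ j).2 h')
      simp only [this, if_false, map_mul, MvPolynomial.eval_C, ← hu]
      unfold lrelu
      push Not at h0
      exact max_eq_right (by nlinarith)

lemma PWPoly.foldl {σ Λ : Type} [Fintype σ] {m r : ℕ} (ν : ℝ) (hν1 : ν < 1)
    (w : Λ → Fin r → Fin r → σ) (b : Λ → Fin r → σ) (N : ℕ) (hN : m * r ≤ N) (Dm : ℕ)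
    (ls : List Λ) : ∀ (H : Fin m → (σ → ℝ) → Fin r → ℝ) (K D : ℕ),
    PWPoly (fun (q : Fin m × Fin r) θ => H q.1 θ q.2) K D → D + ls.length ≤ Dm →
    PWPoly (fun (q : Fin m × Fin r) θ => (ls.foldl (fun h l => fun i =>
      lrelu ν ((∑ j, θ (w l i j) * h j) + θ (b l i))) (H q.1 θ)) q.2)
      (K * warrenB (Fintype.card σ) N Dm ^ ls.length) (D + ls.length) := by
  induction ls with
  | nil => intro H K D h _; simpa using h
  | cons l ls ih =>
    intro H K D h hD
    simp only [List.length_cons] at hD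
    have h1 := ((h.affine (J' := Fin m × Fin r) (fun q j => w l q.2 j) (fun q => b l q.2)
      (fun q j => (q.1, j))).act N (by simpa using hN) ν hν1)
    have h2 : PWPoly (fun (q : Fin m × Fin r) θ => (fun i =>
      lrelu ν ((∑ j, θ (w l i j) * H q.1 θ j) + θ (b l i))) q.2)
      (K * warrenB (Fintype.card σ) N Dm) (D + 1) := by
      obtain ⟨κ, hκ, c, P, hK, h3⟩ := h1
      exact ⟨κ, hκ, c, P, hK.trans (Nat.mul_le_mul_left _ (warrenB_mono le_rfl (by omega))), h3⟩
    have h3 := ih (fun k θ => fun i => lrelu ν ((∑ j, θ (w l i j) * H k θ j) + θ (b l i)))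
      _ _ h2 (by omega)
    simp only [List.foldl_cons, List.length_cons]
    have e1 : K * warrenB (Fintype.card σ) N Dm * warrenB (Fintype.card σ) N Dm ^ ls.length =
      K * warrenB (Fintype.card σ) N Dm ^ (ls.length + 1) := by rw [pow_succ]; ring
    have e2 : D + 1 + ls.length = D + (ls.length + 1) := by ring
    rw [← e1, ← e2]
    exact h3

lemma trunc_close {F η : ℝ} (hF : 0 ≤ F) (hη : 0 < η) {J : ℕ} (hJ : 2 * F ≤ J * η) {y y' : ℝ}
    (h : ∀ j : Fin J, (0 ≤ y + (F - (j : ℕ) * η)) ↔ (0 ≤ y' + (F - (j : ℕ) * η))) :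
    trunc F y' ≤ trunc F y + η := by
  by_contra hcon
  push Not at hcon
  set a := trunc F y with ha
  set a' := trunc F y' with ha'
  have haF : -F ≤ a := le_min (le_max_right _ _) (by linarith)
  have ha'F : a' ≤ F := min_le_right _ _
  have hy : y ≤ a := by
    by_contra h1
    push Not at h1
    have : a < a := by
      conv_rhs => rw [ha]
      exact lt_min (lt_of_lt_of_le h1 (le_max_left _ _)) (by linarith)
    exact lt_irrefl _ this
  have hy' : a' ≤ y' := by
    have h1 : a' ≤ max y' (-F) := min_le_left _ _
    rcases le_max_iff.1 h1 with h2 | h2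
    · exact h2
    · linarith
  have hnn : 0 ≤ (a + F) / η := div_nonneg (by linarith) hη.le
  set j := ⌊(a + F) / η⌋₊ + 1 with hj
  have h1 : (a + F) / η < j := by rw [hj]; push_cast; exact Nat.lt_floor_add_one _
  have h2 : (j : ℝ) ≤ (a + F) / η + 1 := by
    rw [hj]; push_cast
    linarith [Nat.floor_le hnn]
  rw [div_lt_iff₀ hη] at h1
  have h3 : (j : ℝ) * η ≤ a + F + η := by
    have := mul_le_mul_of_nonneg_right h2 hη.le
    rwa [add_mul, div_mul_cancel₀ _ hη.ne', one_mul] at this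
  have hjJ : j < J := by
    have : (j : ℝ) * η < J * η := by linarith
    exact_mod_cast lt_of_mul_lt_mul_right this hη.le
  have h4 := h ⟨j, hjJ⟩
  simp only at h4
  have h5 := h4.2 (by linarith)
  linarith

lemma net_cover {ν F η : ℝ} (hν1 : ν < 1) (hF : 0 ≤ F) (hη : 0 < η) {d r L m J : ℕ}
    (hL : 1 ≤ L) (hJ : 2 * F ≤ J * η) (x : Fin m → Fin d → ℝ) :
    ∃ (κ : Type) (_ : Finite κ) (c : (ParamIdx d r L → ℝ) → κ),
      Nat.card κ ≤ warrenB (Fintype.card (ParamIdx d r L)) (m * (r + J)) (L + 1) ^ (L + 1) ∧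
      ∀ θ θ', c θ = c θ' → ∀ k, |trunc F (netOfParams ν d r L θ (x k)) -
        trunc F (netOfParams ν d r L θ' (x k))| ≤ η := by
  classical
  set σ := ParamIdx d r L
  set N := m * (r + J)
  set B := warrenB (Fintype.card σ) N (L + 1)
  have hx : PWPoly (σ := σ) (fun (q : Fin m × Fin d) _ => x q.1 q.2) 1 0 :=
    ⟨Unit, inferInstance, fun _ => (), fun _ q => MvPolynomial.C (x q.1 q.2), by simp,
      fun _ _ => by simp, fun _ _ => by simp⟩
  have h0 := ((hx.affine (J' := Fin m × Fin r) (fun q j => Sum.inl (q.2, j))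
      (fun q => Sum.inr (Sum.inl q.2)) (fun q j => (q.1, j))).act N
        (by simp only [Nat.card_prod, Nat.card_fin, N]; gcongr; omega) ν hν1)
  have h1 := PWPoly.foldl ν hν1 (fun l i j => (Sum.inr (Sum.inr (Sum.inl (l, i, j))) : σ))
    (fun l i => Sum.inr (Sum.inr (Sum.inr (Sum.inl (l, i))))) N
    (by simp only [N]; gcongr; omega) (L + 1) (List.finRange (L - 1))
    (fun k θ i => lrelu ν ((∑ j, θ (Sum.inl (i, j)) * x k j) + θ (Sum.inr (Sum.inl i))))
    _ _ h0 (by simp; omega)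
  have h2 := h1.affine (J' := Fin m)
    (fun _ i => Sum.inr (Sum.inr (Sum.inr (Sum.inr (Sum.inl i)))))
    (fun _ => Sum.inr (Sum.inr (Sum.inr (Sum.inr (Sum.inr ()))))) (fun k i => (k, i))
  have h3 : PWPoly (fun k θ => netOfParams ν d r L θ (x k)) (B ^ L) (L + 1) := by
    obtain ⟨κ, hκ, c, P, hK, hD, hu⟩ := h2
    refine ⟨κ, hκ, c, P, hK.trans ?_, fun k j => (hD k j).trans ?_, hu⟩
    · have : B ^ L = B * B ^ (L - 1) := by rw [← pow_succ']; congr 1; omega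
      rw [this, one_mul, List.length_finRange]
      exact Nat.mul_le_mul_right _ (warrenB_mono le_rfl (by omega))
    · simp; omega
  have h4 : PWPoly (fun (q : Fin m × Fin J) θ => netOfParams ν d r L θ (x q.1) +
      (F - (q.2 : ℕ) * η)) (B ^ L) (L + 1) := by
    obtain ⟨κ, hκ, c, P, hK, hD, hu⟩ := h3
    refine ⟨κ, hκ, c, fun k q => P k q.1 + MvPolynomial.C (F - (q.2 : ℕ) * η), hK,
      fun k q => ?_, fun θ q => ?_⟩
    · refine (MvPolynomial.totalDegree_add _ _).trans (max_le (hD _ _) ?_)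
      rw [MvPolynomial.totalDegree_C]; omega
    · have h5 := hu θ q.1
      beta_reduce at h5 ⊢
      rw [h5, map_add, MvPolynomial.eval_C]
  obtain ⟨κ, hκ, c, P, s, hK, -, -, hs⟩ := h4.refine N
    (by simp only [Nat.card_prod, Nat.card_fin, N]; gcongr; omega)
  refine ⟨κ, hκ, c, ?_, ?_⟩
  · rw [pow_succ]; exact hK
  · intro θ θ' hc k
    have key : ∀ j : Fin J, (0 ≤ netOfParams ν d r L θ (x k) + (F - (j : ℕ) * η)) ↔
        (0 ≤ netOfParams ν d r L θ' (x k) + (F - (j : ℕ) * η)) := by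
      intro j
      exact (hs θ (k, j)).trans ((by rw [hc] : s (c θ) (k, j) ↔ s (c θ') (k, j)).trans
        (hs θ' (k, j)).symm)
    rw [abs_le]
    constructor
    · linarith [trunc_close hF hη hJ key]
    · linarith [trunc_close hF hη hJ (fun j => (key j).symm)]

lemma sep_prob {X : Type*} [MeasurableSpace X] (P : Measure X) [IsProbabilityMeasure P]
    (g h : X → ℝ) (hg : Measurable g) (hh : Measurable h) {F η : ℝ} (hF : 0 < F)
    (hgF : ∀ x, |g x| ≤ F) (hhF : ∀ x, |h x| ≤ F)
    (hsep : η ^ 2 < ∫ x, (g x - h x) ^ 2 ∂P) :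
    P.real {x | |g x - h x| ≤ η / 2} ≤ 1 - 3 * η ^ 2 / (16 * F ^ 2) := by
  set A := {x | |g x - h x| ≤ η / 2} with hA
  have hAm : MeasurableSet A := measurableSet_le (by fun_prop) measurable_const
  have hbd : ∀ x, (g x - h x) ^ 2 ≤ η ^ 2 / 4 + Aᶜ.indicator (fun _ => 4 * F ^ 2) x := by
    intro x
    by_cases hx : x ∈ A
    · have h1 : |g x - h x| ≤ η / 2 := hx
      have h2 : Aᶜ.indicator (fun _ => 4 * F ^ 2) x = 0 := by simp [hx]
      rw [h2, ← sq_abs]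
      nlinarith [abs_nonneg (g x - h x)]
    · have h2 : Aᶜ.indicator (fun _ => 4 * F ^ 2) x = 4 * F ^ 2 := by simp [hx]
      rw [h2]
      have h3 : |g x - h x| ≤ 2 * F := by
        have := abs_sub (g x) (h x)
        linarith [hgF x, hhF x]
      rw [← sq_abs]
      nlinarith [abs_nonneg (g x - h x), sq_nonneg η]
  have hintg2 : Integrable (fun x => η ^ 2 / 4 + Aᶜ.indicator (fun _ => 4 * F ^ 2) x) P :=
    (integrable_const _).add ((integrable_const _).indicator hAm.compl)
  have h1 : ∫ x, (g x - h x) ^ 2 ∂P ≤ ∫ x, (η ^ 2 / 4 + Aᶜ.indicator (fun _ => 4 * F ^ 2) x) ∂P := by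
    refine integral_mono_of_nonneg (Eventually.of_forall fun x => sq_nonneg _) hintg2
      (Eventually.of_forall hbd)
  rw [integral_add (integrable_const _) ((integrable_const _).indicator hAm.compl),
    integral_indicator hAm.compl] at h1
  simp only [integral_const, probReal_univ, smul_eq_mul, one_mul, measureReal_restrict_apply_univ]
    at h1
  rw [probReal_compl_eq_one_sub hAm] at h1
  have h2 : 3 * η ^ 2 / (16 * F ^ 2) ≤ 1 - P.real A := by
    rw [div_le_iff₀ (by positivity)]
    nlinarith
  linarith

lemma packing_net {Θ X : Type*} [MeasurableSpace X] (P : Measure X) [IsProbabilityMeasure P]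
    (g : Θ → X → ℝ) (hg : ∀ θ, Measurable (g θ)) {F η : ℝ} (hF : 0 < F)
    (hgF : ∀ θ x, |g θ x| ≤ F) (m Nc : ℕ)
    (hcov : ∀ x : Fin m → X, ∃ (κ : Type) (_ : Finite κ) (c : Θ → κ), Nat.card κ ≤ Nc ∧
      ∀ θ θ', c θ = c θ' → ∀ k, |g θ (x k) - g θ' (x k)| ≤ η / 2)
    (hm : 2 * Real.log (Nc + 1) < 3 * η ^ 2 / (16 * F ^ 2) * m) :
    ∃ S : Finset Θ, S.card ≤ Nc ∧ ∀ θ, ∃ s ∈ S, ∫ x, (g θ x - g s x) ^ 2 ∂P ≤ η ^ 2 := by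
  classical
  set q := 3 * η ^ 2 / (16 * F ^ 2) with hq
  by_contra hcon
  push Not at hcon
  have hpack : ∀ k ≤ Nc + 1, ∃ S : Finset Θ, S.card = k ∧
      ∀ s ∈ S, ∀ t ∈ S, s ≠ t → η ^ 2 < ∫ x, (g s x - g t x) ^ 2 ∂P := by
    intro k
    induction k with
    | zero => intro _; exact ⟨∅, by simp, by simp⟩
    | succ k ih =>
      intro hk
      obtain ⟨S, hS, hSp⟩ := ih (by omega)
      obtain ⟨θ, hθ⟩ := hcon S (by omega)
      have hnot : θ ∉ S := by
        intro h
        have := hθ θ h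
        simp at this
        exact absurd this (not_lt.2 (sq_nonneg η))
      refine ⟨insert θ S, by rw [Finset.card_insert_of_notMem hnot, hS], ?_⟩
      intro s hs t ht hst
      rcases Finset.mem_insert.1 hs with hs1 | hs1 <;>
        rcases Finset.mem_insert.1 ht with ht1 | ht1
      · exact absurd (hs1.trans ht1.symm) hst
      · rw [hs1]; exact hθ t ht1
      · have := hθ s hs1
        rw [ht1]
        have e : ∀ x, (g s x - g θ x) ^ 2 = (g θ x - g s x) ^ 2 := fun x => by ring
        simpa only [e] using this
      · exact hSp s hs1 t ht1 hst
  obtain ⟨S, hS, hSp⟩ := hpack (Nc + 1) le_rfl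
  let bad : Θ × Θ → Set (Fin m → X) := fun p => {x | ∀ i, |g p.1 (x i) - g p.2 (x i)| ≤ η / 2}
  let Q := Measure.pi (fun _ : Fin m => P)
  have hbad : ∀ p ∈ S.offDiag, Q.real (bad p) ≤ Real.exp (-(q * m)) := by
    intro p hp
    obtain ⟨h1, h2, h3⟩ := Finset.mem_offDiag.1 hp
    have h4 := sep_prob P (g p.1) (g p.2) (hg _) (hg _) hF (hgF _) (hgF _) (hSp _ h1 _ h2 h3)
    have h5 : bad p = Set.pi Set.univ (fun _ => {x | |g p.1 x - g p.2 x| ≤ η / 2}) := by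
      ext x; simp [bad]
    rw [h5, measureReal_def, Measure.pi_pi, ENNReal.toReal_prod, Finset.prod_const,
      Finset.card_univ, Fintype.card_fin]
    calc _ ≤ (Real.exp (-q)) ^ m := by
          refine pow_le_pow_left₀ ENNReal.toReal_nonneg ?_ _
          refine h4.trans ?_
          have := Real.add_one_le_exp (-q)
          linarith
      _ = _ := by rw [← Real.exp_nat_mul]; congr 1; ring
  have hsum : Q.real (⋃ p ∈ S.offDiag, bad p) < 1 := by
    refine (measureReal_biUnion_finset_le _ _).trans_lt ?_
    refine (Finset.sum_le_card_nsmul _ _ _ hbad).trans_lt ?_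
    have hc : (S.offDiag.card : ℝ) ≤ ((Nc : ℝ) + 1) ^ 2 := by
      rw [Finset.offDiag_card, hS]
      have : (Nc + 1) * (Nc + 1) - (Nc + 1) ≤ (Nc + 1) ^ 2 := by
        rw [pow_two]; exact Nat.sub_le _ _
      exact_mod_cast this
    rw [nsmul_eq_mul]
    calc _ ≤ ((Nc : ℝ) + 1) ^ 2 * Real.exp (-(q * m)) := by gcongr
      _ = Real.exp (2 * Real.log (Nc + 1) - q * m) := by
        rw [sub_eq_add_neg, Real.exp_add]
        congr 1
        rw [two_mul, Real.exp_add, Real.exp_log (by positivity), pow_two]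
      _ < 1 := by rw [Real.exp_lt_one_iff]; linarith
  obtain ⟨x, hx⟩ : ∃ x, x ∉ ⋃ p ∈ S.offDiag, bad p := by
    by_contra h
    push Not at h
    have : (⋃ p ∈ S.offDiag, bad p) = Set.univ := Set.eq_univ_of_forall h
    rw [this, probReal_univ] at hsum
    exact lt_irrefl _ hsum
  obtain ⟨κ, hκ, c, hc, hcc⟩ := hcov x
  have := Fintype.ofFinite κ
  have hinj : Set.InjOn c S := by
    intro s hs t ht hst
    by_contra hne
    apply hx
    simp only [Set.mem_iUnion]
    exact ⟨(s, t), Finset.mem_offDiag.2 ⟨hs, ht, hne⟩, fun i => hcc s t hst i⟩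
  have h1 := Finset.card_le_card_of_injOn (s := S) (t := Finset.univ) c (fun _ _ => Finset.mem_coe.2 (Finset.mem_univ _)) hinj
  rw [Finset.card_univ, ← Nat.card_eq_fintype_card, hS] at h1
  omega

/-! ### Gaussian integrals -/

lemma gpdf_eq_pdf (m y : ℝ) {s : ℝ} (hs : 0 < s) :
    gpdf m s y = gaussianPDFReal m s.toNNReal y := by
  simp [gpdf, gaussianPDFReal, Real.coe_toNNReal _ hs.le]

lemma gpdf_pos (m y : ℝ) {s : ℝ} (hs : 0 < s) : 0 < gpdf m s y := by
  unfold gpdf; positivity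

lemma gpdf_nonneg (m s y : ℝ) : 0 ≤ gpdf m s y := by
  unfold gpdf; positivity

lemma gpdf_nonpos (m y : ℝ) {s : ℝ} (hs : s ≤ 0) : gpdf m s y = 0 := by
  unfold gpdf
  rw [Real.sqrt_eq_zero_of_nonpos]
  · simp
  · have := Real.pi_pos
    nlinarith

lemma lintegral_gaussian (m : ℝ) {s : ℝ} (hs : 0 < s) (w : ℝ → ℝ≥0∞) :
    ∫⁻ y, w y ∂(gaussianReal m s.toNNReal) = ∫⁻ y, ENNReal.ofReal (gpdf m s y) * w y := by
  have h0 : s.toNNReal ≠ 0 := by simpa using hs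
  rw [gaussianReal_of_var_ne_zero _ h0,
    lintegral_withDensity_eq_lintegral_mul_non_measurable _ (measurable_gaussianPDF _ _)
      (Eventually.of_forall fun _ => gaussianPDF_lt_top)]
  refine lintegral_congr fun y => ?_
  simp [gaussianPDF, gpdf_eq_pdf m y hs]

lemma lintegral_gaussian_ratio (m m' : ℝ) {s s' : ℝ} (hs : 0 < s) (hs' : 0 < s') (w : ℝ → ℝ≥0∞) :
    ∫⁻ y, (ENNReal.ofReal (gpdf m' s' y) / ENNReal.ofReal (gpdf m s y)) * w y
      ∂(gaussianReal m s.toNNReal) = ∫⁻ y, w y ∂(gaussianReal m' s'.toNNReal) := by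
  rw [lintegral_gaussian m hs, lintegral_gaussian m' hs']
  refine lintegral_congr fun y => ?_
  rw [← mul_assoc, ENNReal.mul_div_cancel]
  · simpa using gpdf_pos m y hs
  · simp

lemma gauss_quad (m a b c : ℝ) {s : ℝ} (hs : 0 < s) (h : 0 < 1 - 2 * a * s) :
    ∫⁻ y, ENNReal.ofReal (Real.exp (a * (y - m) ^ 2 + b * (y - m) + c))
      ∂(gaussianReal m s.toNNReal)
    = ENNReal.ofReal ((Real.sqrt (1 - 2 * a * s))⁻¹ *
        Real.exp (b ^ 2 * s / (2 * (1 - 2 * a * s)) + c)) := by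
  rw [lintegral_gaussian m hs]
  set q := 1 - 2 * a * s with hq
  have hs' : 0 < s / q := by positivity
  have key : ∀ y, gpdf m s y * Real.exp (a * (y - m) ^ 2 + b * (y - m) + c) =
      ((Real.sqrt q)⁻¹ * Real.exp (b ^ 2 * s / (2 * q) + c)) * gpdf (m + b * s / q) (s / q) y := by
    intro y
    unfold gpdf
    have e1 : Real.sqrt (2 * Real.pi * (s / q)) = Real.sqrt (2 * Real.pi * s) / Real.sqrt q := by
      rw [← Real.sqrt_div (by positivity)]; congr 1; ring
    have e2 : -((y - m) ^ 2) / (2 * s) + (a * (y - m) ^ 2 + b * (y - m) + c) =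
        (b ^ 2 * s / (2 * q) + c) + -((y - (m + b * s / q)) ^ 2) / (2 * (s / q)) := by
      have ha : a = (1 - q) / (2 * s) := by rw [hq]; field_simp; ring
      rw [ha]
      field_simp
      ring
    rw [e1]
    have hsq : 0 < Real.sqrt q := Real.sqrt_pos.2 h
    have : Real.exp (-((y - m) ^ 2) / (2 * s)) * Real.exp (a * (y - m) ^ 2 + b * (y - m) + c) =
      Real.exp (b ^ 2 * s / (2 * q) + c) * Real.exp (-((y - (m + b * s / q)) ^ 2) / (2 * (s / q))) := by
      rw [← Real.exp_add, ← Real.exp_add, e2]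
    rw [inv_div]
    calc _ = (Real.sqrt (2 * Real.pi * s))⁻¹ * (Real.exp (-((y - m) ^ 2) / (2 * s)) *
              Real.exp (a * (y - m) ^ 2 + b * (y - m) + c)) := by ring
      _ = _ := by rw [this]; field_simp
  calc _ = ∫⁻ y, ENNReal.ofReal ((Real.sqrt q)⁻¹ * Real.exp (b ^ 2 * s / (2 * q) + c)) *
        (ENNReal.ofReal (gpdf (m + b * s / q) (s / q) y) * 1) := by
        refine lintegral_congr fun y => ?_
        rw [← ENNReal.ofReal_mul (gpdf_nonneg _ _ _), key, mul_one, ENNReal.ofReal_mul (by positivity)]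
    _ = _ := by
        rw [lintegral_const_mul' _ _ ENNReal.ofReal_ne_top, ← lintegral_gaussian _ hs']
        simp

lemma gauss_quad_le (m a b c E : ℝ) {s : ℝ} (hs : 0 < s) (h : 0 < 1 - 2 * a * s)
    (hE : (Real.sqrt (1 - 2 * a * s))⁻¹ *
        Real.exp (b ^ 2 * s / (2 * (1 - 2 * a * s)) + c) ≤ Real.exp E) (w : ℝ → ℝ)
    (hw : ∀ y, w y = a * (y - m) ^ 2 + b * (y - m) + c) :
    ∫⁻ y, ENNReal.ofReal (Real.exp (w y)) ∂(gaussianReal m s.toNNReal)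
      ≤ ENNReal.ofReal (Real.exp E) := by
  simp only [hw]
  rw [gauss_quad m a b c hs h]
  exact ENNReal.ofReal_le_ofReal hE

lemma inv_sqrt_eq {x : ℝ} (hx : 0 < x) : (Real.sqrt x)⁻¹ = Real.exp (-(Real.log x) / 2) := by
  rw [Real.sqrt_eq_rpow, ← Real.rpow_neg hx.le, Real.rpow_def_of_pos hx]
  congr 1; ring

lemma inv_sqrt_sub {x : ℝ} (h0 : 0 ≤ x) (h1 : x ≤ 1 / 2) :
    (Real.sqrt (1 - x))⁻¹ ≤ Real.exp (x / 2 + x ^ 2) := by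
  have hp : 0 < 1 - x := by linarith
  rw [inv_sqrt_eq hp, Real.exp_le_exp]
  have := Real.one_sub_inv_le_log_of_pos hp
  have h2 : (1 - x)⁻¹ ≤ 1 + x + 2 * x ^ 2 := by
    rw [inv_le_iff_one_le_mul₀ hp]
    nlinarith [mul_nonneg (sq_nonneg x) (by linarith : (0:ℝ) ≤ 1 - 2 * x)]
  linarith

lemma inv_sqrt_add {x : ℝ} (h0 : 0 ≤ x) :
    (Real.sqrt (1 + x))⁻¹ ≤ Real.exp (-x / 2 + x ^ 2 / 2) := by
  have hp : 0 < 1 + x := by linarith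
  rw [inv_sqrt_eq hp, Real.exp_le_exp]
  have := Real.one_sub_inv_le_log_of_pos hp
  have h2 : (1 + x)⁻¹ ≤ 1 - x + x ^ 2 := by
    rw [inv_le_iff_one_le_mul₀ hp]
    nlinarith [mul_nonneg (sq_nonneg x) h0]
  linarith

/-! ### The data law -/

lemma lintegral_reg_le (d : ℕ) (PX : Measure (Fin d → ℝ)) (f₀ : (Fin d → ℝ) → ℝ) (v : ℝ≥0)
    (h : (Fin d → ℝ) × ℝ → ℝ≥0∞) :
    ∫⁻ z, h z ∂(gaussRegLaw d PX f₀ v) ≤ ∫⁻ x, ∫⁻ y, h (x, y) ∂(gaussianReal (f₀ x) v) ∂PX := by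
  unfold gaussRegLaw
  refine (Measure.lintegral_bind_le _ _ _).trans ?_
  exact lintegral_mono fun x => lintegral_map_le _ _

lemma lintegral_pi_prod {X : Type*} [MeasurableSpace X] (μ : Measure X) [IsProbabilityMeasure μ]
    (n : ℕ) (h : X → ℝ≥0∞) (hh : Measurable h) :
    ∫⁻ D, ∏ i, h (D i) ∂(Measure.pi fun _ : Fin n => μ) = (∫⁻ x, h x ∂μ) ^ n := by
  have hi : iIndepFun (fun (i : Fin n) (D : Fin n → X) => h (D i)) (Measure.pi fun _ : Fin n => μ) :=
    iIndepFun_pi (X := fun _ => h) (fun _ => hh.aemeasurable)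
  rw [lintegral_prod_eq_prod_lintegral_of_indepFun Finset.univ _ hi
    (fun i => hh.comp (measurable_pi_apply i))]
  have : ∀ i : Fin n, ∫⁻ D, h (D i) ∂(Measure.pi fun _ : Fin n => μ) = ∫⁻ x, h x ∂μ := fun i =>
    (measurePreserving_eval (fun _ : Fin n => μ) i).lintegral_comp hh
  simp [this]

/-- One-observation likelihood ratio. -/
def lrat {X : Type*} (f₀ : X → ℝ) (v : ℝ) (g : X → ℝ) (s : ℝ) (z : X × ℝ) : ℝ≥0∞ :=
  ENNReal.ofReal (gpdf (g z.1) s z.2) / ENNReal.ofReal (gpdf (f₀ z.1) v z.2)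

lemma measurable_gpdf : Measurable fun q : ℝ × ℝ × ℝ => gpdf q.1 q.2.1 q.2.2 := by
  unfold gpdf; fun_prop

lemma measurable_lrat {X : Type*} [MeasurableSpace X] {f₀ g : X → ℝ} (hf : Measurable f₀)
    (hg : Measurable g) (v s : ℝ) : Measurable (lrat f₀ v g s) := by
  unfold lrat
  refine Measurable.div (ENNReal.measurable_ofReal.comp ?_) (ENNReal.measurable_ofReal.comp ?_)
  · exact measurable_gpdf.comp
      (f := fun z : X × ℝ => (g z.1, s, z.2)) (by fun_prop)
  · exact measurable_gpdf.comp
      (f := fun z : X × ℝ => (f₀ z.1, v, z.2)) (by fun_prop)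

/-- Chernoff, null hypothesis. -/
lemma chernoff_null {X : Type*} [MeasurableSpace X] (μ : Measure X) [IsProbabilityMeasure μ]
    (n : ℕ) (t : X → ℝ) (ht : Measurable t) (lam : ℝ) (hl : 0 ≤ lam) (E : ℝ)
    (hE : ∫⁻ z, ENNReal.ofReal (Real.exp (lam * t z)) ∂μ ≤ ENNReal.ofReal (Real.exp (-E))) :
    Measure.pi (fun _ : Fin n => μ) {D | 0 < ∑ i, t (D i)} ≤
      ENNReal.ofReal (Real.exp (-(E * n))) := by
  have hmeas : Measurable fun z => ENNReal.ofReal (Real.exp (lam * t z)) := by fun_prop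
  have hS : MeasurableSet {D : Fin n → X | 0 < ∑ i, t (D i)} := by
    refine measurableSet_lt measurable_const ?_
    fun_prop
  calc _ = ∫⁻ D, Set.indicator {D | 0 < ∑ i, t (D i)} 1 D ∂(Measure.pi (fun _ : Fin n => μ)) := by
        rw [lintegral_indicator_one hS]
    _ ≤ ∫⁻ D, ∏ i, ENNReal.ofReal (Real.exp (lam * t (D i))) ∂(Measure.pi (fun _ : Fin n => μ)) := by
        refine lintegral_mono fun D => ?_
        by_cases hD : 0 < ∑ i, t (D i)
        · rw [Set.indicator_of_mem (by exact hD), ← ENNReal.ofReal_prod_of_nonneg (fun _ _ => by positivity),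
            ← Real.exp_sum, ← Finset.mul_sum]
          simp only [Pi.one_apply, ENNReal.one_le_ofReal, Real.one_le_exp_iff]
          positivity
        · rw [Set.indicator_of_notMem (by exact hD)]; simp
    _ = _ := lintegral_pi_prod μ n _ hmeas
    _ ≤ ENNReal.ofReal (Real.exp (-E)) ^ n := by gcongr
    _ = _ := by
        rw [← ENNReal.ofReal_pow (by positivity), ← Real.exp_nat_mul]; congr 2; ring

/-- Chernoff, alternative. -/
lemma chernoff_alt {X : Type*} [MeasurableSpace X] (μ : Measure X) [IsProbabilityMeasure μ]
    (n : ℕ) (t : X → ℝ) (ht : Measurable t) (r : X → ℝ≥0∞) (hr : Measurable r)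
    (lam : ℝ) (hl : 0 ≤ lam) (E : ℝ)
    (hE : ∫⁻ z, r z * ENNReal.ofReal (Real.exp (-(lam * t z))) ∂μ ≤ ENNReal.ofReal (Real.exp (-E)))
    (Φ : Set (Fin n → X)) (hΦ : {D | 0 < ∑ i, t (D i)} ⊆ Φ) :
    ∫⁻ D in Φᶜ, ∏ i, r (D i) ∂(Measure.pi (fun _ : Fin n => μ)) ≤
      ENNReal.ofReal (Real.exp (-(E * n))) := by
  have hmeas : Measurable fun z => r z * ENNReal.ofReal (Real.exp (-(lam * t z))) := by fun_prop
  have hmeasP : Measurable fun D : Fin n → X =>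
      ∏ i, r (D i) * ENNReal.ofReal (Real.exp (-(lam * t (D i)))) :=
    Finset.measurable_fun_prod _ fun i _ => hmeas.comp (measurable_pi_apply i)
  calc _ ≤ ∫⁻ D in Φᶜ, ∏ i, r (D i) * ENNReal.ofReal (Real.exp (-(lam * t (D i))))
            ∂(Measure.pi (fun _ : Fin n => μ)) := by
        refine setLIntegral_mono hmeasP fun D hD => ?_
        have hD' : ∑ i, t (D i) ≤ 0 := by
          by_contra h
          exact hD (hΦ (not_le.1 h))
        rw [Finset.prod_mul_distrib, ← ENNReal.ofReal_prod_of_nonneg (fun _ _ => by positivity),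
            ← Real.exp_sum, Finset.sum_neg_distrib, ← Finset.mul_sum]
        refine le_mul_of_one_le_right (by positivity) ?_
        simp only [ENNReal.one_le_ofReal, Real.one_le_exp_iff]
        nlinarith
    _ ≤ ∫⁻ D, ∏ i, r (D i) * ENNReal.ofReal (Real.exp (-(lam * t (D i))))
            ∂(Measure.pi (fun _ : Fin n => μ)) := setLIntegral_le_lintegral _ _
    _ = _ := lintegral_pi_prod μ n _ hmeas
    _ ≤ ENNReal.ofReal (Real.exp (-E)) ^ n := by gcongr
    _ = _ := by
        rw [← ENNReal.ofReal_pow (by positivity), ← Real.exp_nat_mul]; congr 2; ring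

/-! ### One-observation bounds for the tests -/

section tests
variable {d : ℕ} (PX : Measure (Fin d → ℝ)) (f₀ : (Fin d → ℝ) → ℝ) {v : ℝ}

lemma null_bound (w : (Fin d → ℝ) × ℝ → ℝ) (E : (Fin d → ℝ) → ℝ)
    (h : ∀ x, ∫⁻ y, ENNReal.ofReal (Real.exp (w (x, y))) ∂(gaussianReal (f₀ x) v.toNNReal)
      ≤ ENNReal.ofReal (Real.exp (E x))) :
    ∫⁻ z, ENNReal.ofReal (Real.exp (w z)) ∂(gaussRegLaw d PX f₀ v.toNNReal)
      ≤ ∫⁻ x, ENNReal.ofReal (Real.exp (E x)) ∂PX :=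
  (lintegral_reg_le _ _ _ _ _).trans (lintegral_mono h)

lemma alt_bound (hv : 0 < v) (g : (Fin d → ℝ) → ℝ) {s : ℝ} (hs : 0 < s)
    (w : (Fin d → ℝ) × ℝ → ℝ) (E : (Fin d → ℝ) → ℝ)
    (h : ∀ x, ∫⁻ y, ENNReal.ofReal (Real.exp (w (x, y))) ∂(gaussianReal (g x) s.toNNReal)
      ≤ ENNReal.ofReal (Real.exp (E x))) :
    ∫⁻ z, lrat f₀ v g s z * ENNReal.ofReal (Real.exp (w z)) ∂(gaussRegLaw d PX f₀ v.toNNReal)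
      ≤ ∫⁻ x, ENNReal.ofReal (Real.exp (E x)) ∂PX := by
  refine (lintegral_reg_le _ _ _ _ _).trans (lintegral_mono fun x => ?_)
  simp only [lrat]
  rw [lintegral_gaussian_ratio _ _ hv hs]
  exact h x

lemma lint_exp_le [IsProbabilityMeasure PX] (E h : (Fin d → ℝ) → ℝ) (e : ℝ)
    (hE : ∀ x, Real.exp (E x) ≤ h x) (hi : Integrable h PX) (hle : ∫ x, h x ∂PX ≤ Real.exp e) :
    ∫⁻ x, ENNReal.ofReal (Real.exp (E x)) ∂PX ≤ ENNReal.ofReal (Real.exp e) := by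
  calc _ ≤ ∫⁻ x, ENNReal.ofReal (h x) ∂PX :=
        lintegral_mono fun x => ENNReal.ofReal_le_ofReal (hE x)
    _ = ENNReal.ofReal (∫ x, h x ∂PX) := by
        rw [ofReal_integral_eq_lintegral_ofReal hi]
        exact Eventually.of_forall fun x => (Real.exp_pos _).le.trans (hE x)
    _ ≤ _ := ENNReal.ofReal_le_ofReal hle

lemma Vp_null (hv : 0 < v) [IsProbabilityMeasure PX] {e : ℝ} (h0 : 0 ≤ e) (h1 : e ≤ 1) :
    ∫⁻ z, ENNReal.ofReal (Real.exp (e / 16 * ((z.2 - f₀ z.1) ^ 2 / v - (1 + e / 2))))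
      ∂(gaussRegLaw d PX f₀ v.toNNReal) ≤ ENNReal.ofReal (Real.exp (-(e ^ 2 / 64))) := by
  refine (null_bound PX f₀ (fun z => e / 16 * ((z.2 - f₀ z.1) ^ 2 / v - (1 + e / 2)))
    (fun _ => -(e ^ 2 / 64)) fun x => ?_).trans (by simp)
  have e1 : 1 - 2 * (e / 16 / v) * v = 1 - e / 8 := by field_simp; ring
  refine gauss_quad_le (f₀ x) (e / 16 / v) 0 (-(e / 16 * (1 + e / 2))) _ hv ?_ ?_ _ ?_
  · rw [e1]; linarith
  · rw [e1]
    have := inv_sqrt_sub (x := e / 8) (by linarith) (by linarith)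
    refine (mul_le_mul_of_nonneg_right this (by positivity)).trans ?_
    rw [← Real.exp_add, Real.exp_le_exp]
    simp only [ne_eq, OfNat.ofNat_ne_zero, not_false_eq_true, zero_pow, zero_mul, zero_div, zero_add]
    nlinarith
  · intro y; simp only; ring

lemma Vp_alt (hv : 0 < v) [IsProbabilityMeasure PX] {e : ℝ} (h0 : 0 ≤ e) (h1 : e ≤ 1)
    (g : (Fin d → ℝ) → ℝ) {s : ℝ} (hs : v * (1 + e) ≤ s) :
    ∫⁻ z, lrat f₀ v g s z *
      ENNReal.ofReal (Real.exp (-(e / 32 * ((z.2 - f₀ z.1) ^ 2 / v - (1 + e / 2)))))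
      ∂(gaussRegLaw d PX f₀ v.toNNReal) ≤ ENNReal.ofReal (Real.exp (-(e ^ 2 / 128))) := by
  have hs0 : 0 < s := lt_of_lt_of_le (by positivity) hs
  refine (alt_bound PX f₀ hv g hs0 (fun z => -(e / 32 * ((z.2 - f₀ z.1) ^ 2 / v - (1 + e / 2))))
    (fun _ => -(e ^ 2 / 128)) fun x => ?_).trans (by simp)
  set k := g x - f₀ x
  set u := s / v with hu
  have hu1 : 1 + e ≤ u := by rw [hu, le_div_iff₀ hv]; linarith
  have e1 : 1 - 2 * (-(e / 32) / v) * s = 1 + e / 16 * u := by rw [hu]; field_simp; ring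
  have hsu : s = u * v := by rw [hu]; field_simp
  refine gauss_quad_le (g x) (-(e / 32) / v) (-(e / 16) * k / v)
    (-(e / 32) * k ^ 2 / v + e / 32 * (1 + e / 2)) _ hs0 ?_ ?_ _ ?_
  · rw [e1]; nlinarith
  · rw [e1]
    have hq : 0 < 1 + e / 16 * u := by nlinarith
    have hx : 0 ≤ e / 16 * (1 + e) := by positivity
    have h2 : (Real.sqrt (1 + e / 16 * u))⁻¹ ≤ (Real.sqrt (1 + e / 16 * (1 + e)))⁻¹ := by
      gcongr
    have := h2.trans (inv_sqrt_add (x := e / 16 * (1 + e)) hx)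
    refine (mul_le_mul_of_nonneg_right this (by positivity)).trans ?_
    rw [← Real.exp_add, Real.exp_le_exp]
    have h3 : (-(e / 16) * k / v) ^ 2 * s / (2 * (1 + e / 16 * u)) + -(e / 32) * k ^ 2 / v ≤ 0 := by
      have : (-(e / 16) * k / v) ^ 2 * s / (2 * (1 + e / 16 * u)) + -(e / 32) * k ^ 2 / v
          = -(e / 32 * k ^ 2 / (v * (1 + e / 16 * u))) := by
        have hne : 1 + e / 16 * u ≠ 0 := hq.ne'
        generalize hz : 1 + e / 16 * u = z at hne
        have hu2 : e * u = 16 * (z - 1) := by rw [← hz]; ring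
        rw [hsu]; field_simp
        linear_combination (32 * e * k ^ 2) * hu2
      rw [this]
      have : 0 ≤ e / 32 * k ^ 2 / (v * (1 + e / 16 * u)) := by positivity
      linarith
    have h4 : (1 + e) ^ 2 ≤ 4 := by nlinarith
    nlinarith [mul_le_mul_of_nonneg_left h4 (sq_nonneg e)]
  · intro y; simp only [k]; ring

lemma Vm_null (hv : 0 < v) [IsProbabilityMeasure PX] {e : ℝ} (h0 : 0 ≤ e) (g : (Fin d → ℝ) → ℝ) :
    ∫⁻ z, ENNReal.ofReal (Real.exp (e / 8 * ((1 - e / 2) - (z.2 - g z.1) ^ 2 / v)))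
      ∂(gaussRegLaw d PX f₀ v.toNNReal) ≤ ENNReal.ofReal (Real.exp (-(e ^ 2 / 32))) := by
  refine (null_bound PX f₀ (fun z => e / 8 * ((1 - e / 2) - (z.2 - g z.1) ^ 2 / v))
    (fun _ => -(e ^ 2 / 32)) fun x => ?_).trans (by simp)
  set k := g x - f₀ x
  have e1 : 1 - 2 * (-(e / 8) / v) * v = 1 + e / 4 := by field_simp; ring
  refine gauss_quad_le (f₀ x) (-(e / 8) / v) (e / 4 * k / v)
    (-(e / 8) * k ^ 2 / v + e / 8 * (1 - e / 2)) _ hv ?_ ?_ _ ?_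
  · rw [e1]; linarith
  · rw [e1]
    have := inv_sqrt_add (x := e / 4) (by linarith)
    refine (mul_le_mul_of_nonneg_right this (by positivity)).trans ?_
    rw [← Real.exp_add, Real.exp_le_exp]
    have h3 : (e / 4 * k / v) ^ 2 * v / (2 * (1 + e / 4)) + -(e / 8) * k ^ 2 / v ≤ 0 := by
      have : (e / 4 * k / v) ^ 2 * v / (2 * (1 + e / 4)) + -(e / 8) * k ^ 2 / v
          = -(e / 8 * k ^ 2 / (v * (1 + e / 4))) := by
        field_simp; ring
      rw [this]
      have : 0 ≤ e / 8 * k ^ 2 / (v * (1 + e / 4)) := by positivity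
      linarith
    nlinarith
  · intro y; simp only [k]; ring

lemma Vm_alt (hv : 0 < v) [IsProbabilityMeasure PX] {e F : ℝ} (h0 : 0 ≤ e) (h1 : e ≤ 1) (hF : e * F ^ 2 ≤ 4 * v)
    (f g : (Fin d → ℝ) → ℝ) (hf : Measurable f) (hg : Measurable g)
    (hfF : ∀ x, |f x| ≤ F) (hgF : ∀ x, |g x| ≤ F)
    (hfg : ∫ x, (f x - g x) ^ 2 ∂PX ≤ v * e / 32)
    {s : ℝ} (hs0 : 0 < s) (hs : s ≤ v * (1 - e)) :
    ∫⁻ z, lrat f₀ v f s z *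
      ENNReal.ofReal (Real.exp (-(e / 32 * ((1 - e / 2) - (z.2 - g z.1) ^ 2 / v))))
      ∂(gaussRegLaw d PX f₀ v.toNNReal) ≤ ENNReal.ofReal (Real.exp (-(e ^ 2 / 128))) := by
  have hk4 : ∀ x, (f x - g x) ^ 2 ≤ 4 * F ^ 2 := by
    intro x
    have h1 := abs_le.1 (hfF x)
    have h2 := abs_le.1 (hgF x)
    nlinarith
  have hintg : Integrable (fun x => (f x - g x) ^ 2) PX := by
    refine Integrable.of_bound (by fun_prop) (4 * F ^ 2) (Eventually.of_forall fun x => ?_)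
    rw [Real.norm_eq_abs, abs_of_nonneg (sq_nonneg _)]
    exact hk4 x
  refine (alt_bound PX f₀ hv f hs0 (fun z => -(e / 32 * ((1 - e / 2) - (z.2 - g z.1) ^ 2 / v)))
    (fun x => -(3 * e ^ 2 / 256) + e / 16 * (f x - g x) ^ 2 / v) fun x => ?_).trans ?_
  · set k := f x - g x
    set u := s / v with hu
    have hu0 : 0 < u := by positivity
    have hu1 : u ≤ 1 - e := by rw [hu, div_le_iff₀ hv]; linarith
    have e1 : 1 - 2 * ((e / 32) / v) * s = 1 - e / 16 * u := by rw [hu]; field_simp; ring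
    have hsu : s = u * v := by rw [hu]; field_simp
    have hxu : e / 16 * u ≤ e / 16 := by nlinarith
    have hq : 1 / 2 ≤ 1 - e / 16 * u := by nlinarith
    have hq0 : 0 < 1 - e / 16 * u := by linarith
    refine gauss_quad_le (f x) ((e / 32) / v) ((e / 16) * k / v)
      ((e / 32) * k ^ 2 / v - e / 32 * (1 - e / 2)) _ hs0 ?_ ?_ _ ?_
    · rw [e1]; exact hq0
    · rw [e1]
      have := inv_sqrt_sub (x := e / 16 * u) (by positivity) (by linarith)
      refine (mul_le_mul_of_nonneg_right this (by positivity)).trans ?_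
      rw [← Real.exp_add, Real.exp_le_exp]
      have h3 : ((e / 16) * k / v) ^ 2 * s / (2 * (1 - e / 16 * u)) + (e / 32) * k ^ 2 / v
          ≤ e / 16 * k ^ 2 / v := by
        have : ((e / 16) * k / v) ^ 2 * s / (2 * (1 - e / 16 * u)) + (e / 32) * k ^ 2 / v
            = (e / 32) * k ^ 2 / v / (1 - e / 16 * u) := by
          have hne : 1 - e / 16 * u ≠ 0 := hq0.ne'
          rw [hsu, eq_div_iff hne, add_mul, div_mul_eq_mul_div, mul_div_mul_right _ _ hne]
          field_simp; ring
        rw [this, div_le_iff₀ hq0]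
        have : 0 ≤ e / 16 * k ^ 2 / v := by positivity
        have e5 : e / 32 * k ^ 2 / v = e / 16 * k ^ 2 / v * (1 / 2) := by ring
        rw [e5]
        exact mul_le_mul_of_nonneg_left hq this
      have h4 : (e / 16 * u) ^ 2 ≤ (e / 16) ^ 2 := pow_le_pow_left₀ (by positivity) hxu 2
      have h5 : e / 16 * u ≤ e / 16 * (1 - e) := by gcongr
      nlinarith
    · intro y; simp only [k]; ring
  · refine lint_exp_le PX _ (fun x => Real.exp (-(3 * e ^ 2 / 256)) *
      (1 + e / 8 / v * (f x - g x) ^ 2)) _ (fun x => ?_) ?_ ?_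
    · rw [Real.exp_add]
      refine mul_le_mul_of_nonneg_left ?_ (by positivity)
      have hz0 : 0 ≤ e / 16 * (f x - g x) ^ 2 / v := by positivity
      have hz1 : e / 16 * (f x - g x) ^ 2 / v ≤ 1 := by
        rw [div_le_one hv]
        nlinarith [hk4 x]
      have := Real.abs_exp_sub_one_sub_id_le (x := e / 16 * (f x - g x) ^ 2 / v)
        (by rw [abs_of_nonneg hz0]; exact hz1)
      have h6 := (abs_le.1 this).2
      have e6 : e / 8 / v * (f x - g x) ^ 2 = 2 * (e / 16 * (f x - g x) ^ 2 / v) := by ring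
      rw [e6]
      nlinarith
    · exact ((integrable_const 1).add (hintg.const_mul _)).const_mul _
    · rw [integral_const_mul, integral_add (integrable_const 1) (hintg.const_mul _),
        integral_const_mul]
      simp only [integral_const, probReal_univ, smul_eq_mul, mul_one]
      have h7 : e / 8 / v * ∫ x, (f x - g x) ^ 2 ∂PX ≤ e ^ 2 / 256 := by
        calc _ ≤ e / 8 / v * (v * e / 32) := by gcongr
          _ = _ := by field_simp; ring
      have h8 := Real.add_one_le_exp (e ^ 2 / 256)
      calc _ ≤ Real.exp (-(3 * e ^ 2 / 256)) * Real.exp (e ^ 2 / 256) := by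
            refine mul_le_mul_of_nonneg_left ?_ (by positivity); linarith
        _ = _ := by rw [← Real.exp_add]; congr 1; ring

lemma M_null (hv : 0 < v) [IsProbabilityMeasure PX] {F κ : ℝ}
    (g : (Fin d → ℝ) → ℝ) (hf : Measurable f₀) (hg : Measurable g)
    (hfF : ∀ x, |f₀ x| ≤ F) (hgF : ∀ x, |g x| ≤ F)
    (hκ : κ ≤ ∫ x, (g x - f₀ x) ^ 2 ∂PX) :
    ∫⁻ z, ENNReal.ofReal (Real.exp (1 / 4 * ((2 * (z.2 - f₀ z.1) * (g z.1 - f₀ z.1)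
        - (g z.1 - f₀ z.1) ^ 2) / v)))
      ∂(gaussRegLaw d PX f₀ v.toNNReal) ≤
        ENNReal.ofReal (Real.exp (-(κ / (8 * (v + F ^ 2 / 2))))) := by
  have hk4 : ∀ x, (g x - f₀ x) ^ 2 ≤ 4 * F ^ 2 := by
    intro x
    have h1 := abs_le.1 (hfF x)
    have h2 := abs_le.1 (hgF x)
    nlinarith
  have hintg : Integrable (fun x => (g x - f₀ x) ^ 2) PX := by
    refine Integrable.of_bound (by fun_prop) (4 * F ^ 2) (Eventually.of_forall fun x => ?_)
    rw [Real.norm_eq_abs, abs_of_nonneg (sq_nonneg _)]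
    exact hk4 x
  refine (null_bound PX f₀ (fun z => 1 / 4 * ((2 * (z.2 - f₀ z.1) * (g z.1 - f₀ z.1)
        - (g z.1 - f₀ z.1) ^ 2) / v))
    (fun x => -((g x - f₀ x) ^ 2 / (8 * v))) fun x => ?_).trans ?_
  · set k := g x - f₀ x
    refine gauss_quad_le (f₀ x) 0 (1 / 2 * k / v) (-(1 / 4 * k ^ 2 / v)) _ hv (by simp) ?_ _ ?_
    · simp only [mul_zero, zero_mul, sub_zero, Real.sqrt_one, inv_one, one_mul, mul_one]
      rw [Real.exp_le_exp]
      apply le_of_eq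
      field_simp; ring
    · intro y; simp only [k]; ring
  · refine lint_exp_le PX _ (fun x => 1 - (8 * (v + F ^ 2 / 2))⁻¹ * (g x - f₀ x) ^ 2) _
      (fun x => ?_) ?_ ?_
    · set k2 := (g x - f₀ x) ^ 2 with hk2
      have hk0 : 0 ≤ k2 := sq_nonneg _
      have h1 := Real.add_one_le_exp (k2 / (8 * v))
      have hpos : 0 < 1 + k2 / (8 * v) := by positivity
      rw [Real.exp_neg]
      have h2 : (Real.exp (k2 / (8 * v)))⁻¹ ≤ (1 + k2 / (8 * v))⁻¹ := by
        apply inv_anti₀ hpos; linarith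
      refine h2.trans ?_
      have h3 : (1 + k2 / (8 * v))⁻¹ = 1 - k2 / (8 * v + k2) := by
        field_simp; ring
      rw [h3]
      have h4 : (8 * (v + F ^ 2 / 2))⁻¹ * k2 ≤ k2 / (8 * v + k2) := by
        rw [inv_mul_eq_div]
        apply div_le_div_of_nonneg_left hk0 (by positivity)
        have := hk4 x
        linarith
      linarith
    · exact (integrable_const 1).sub (hintg.const_mul _)
    · rw [integral_sub (integrable_const 1) (hintg.const_mul _), integral_const_mul]
      simp only [integral_const, probReal_univ, smul_eq_mul, mul_one]
      refine le_trans ?_ (Real.add_one_le_exp _)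
      have : κ / (8 * (v + F ^ 2 / 2)) ≤ (8 * (v + F ^ 2 / 2))⁻¹ * ∫ x, (g x - f₀ x) ^ 2 ∂PX := by
        rw [inv_mul_eq_div]
        gcongr
      linarith

lemma M_alt (hv : 0 < v) [IsProbabilityMeasure PX] {F κ : ℝ}
    (f g : (Fin d → ℝ) → ℝ) (hf₀ : Measurable f₀) (hf : Measurable f) (hg : Measurable g)
    (hf₀F : ∀ x, |f₀ x| ≤ F) (hfF : ∀ x, |f x| ≤ F) (hgF : ∀ x, |g x| ≤ F)
    (hκ : κ ≤ ∫ x, (g x - f₀ x) ^ 2 ∂PX)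
    (hfg : ∫ x, (f x - g x) ^ 2 ∂PX ≤ κ * v / (32 * (v + F ^ 2 / 8) * Real.exp (2 * F ^ 2 / v)))
    {s : ℝ} (hs0 : 0 < s) (hs : s ≤ 2 * v) :
    ∫⁻ z, lrat f₀ v f s z *
      ENNReal.ofReal (Real.exp (-(1 / 8 * ((2 * (z.2 - f₀ z.1) * (g z.1 - f₀ z.1)
        - (g z.1 - f₀ z.1) ^ 2) / v))))
      ∂(gaussRegLaw d PX f₀ v.toNNReal) ≤
        ENNReal.ofReal (Real.exp (-(κ / (64 * (v + F ^ 2 / 8))))) := by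
  have hk4 : ∀ f g : (Fin d → ℝ) → ℝ, (∀ x, |f x| ≤ F) → (∀ x, |g x| ≤ F) →
      ∀ x, (f x - g x) ^ 2 ≤ 4 * F ^ 2 := by
    intro f g hfF hgF x
    have h1 := abs_le.1 (hfF x)
    have h2 := abs_le.1 (hgF x)
    nlinarith
  have hintg : ∀ f g : (Fin d → ℝ) → ℝ, Measurable f → Measurable g →
      (∀ x, |f x| ≤ F) → (∀ x, |g x| ≤ F) → Integrable (fun x => (f x - g x) ^ 2) PX := by
    intro f g hf hg hfF hgF
    refine Integrable.of_bound (by fun_prop) (4 * F ^ 2) (Eventually.of_forall fun x => ?_)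
    rw [Real.norm_eq_abs, abs_of_nonneg (sq_nonneg _)]
    exact hk4 f g hfF hgF x
  have hi1 := hintg g f₀ hg hf₀ hgF hf₀F
  have hi2 := hintg f g hf hg hfF hgF
  refine (alt_bound PX f₀ hv f hs0 (fun z => -(1 / 8 * ((2 * (z.2 - f₀ z.1) * (g z.1 - f₀ z.1)
        - (g z.1 - f₀ z.1) ^ 2) / v)))
    (fun x => -((g x - f₀ x) ^ 2 / (32 * v)) + (f x - g x) ^ 2 / (2 * v)) fun x => ?_).trans ?_
  · set k := g x - f₀ x with hk
    set w := f x - g x with hw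
    refine gauss_quad_le (f x) 0 (-(1 / 4 * k / v)) (-(1 / 8 * (2 * w * k + k ^ 2) / v)) _
      hs0 (by simp) ?_ _ ?_
    · simp only [mul_zero, zero_mul, sub_zero, Real.sqrt_one, inv_one, one_mul, mul_one]
      rw [Real.exp_le_exp]
      have h1 : (-(1 / 4 * k / v)) ^ 2 * s / 2 ≤ k ^ 2 / (16 * v) := by
        calc _ ≤ (-(1 / 4 * k / v)) ^ 2 * (2 * v) / 2 := by gcongr
          _ = _ := by field_simp; ring
      have h2 : -(1 / 8 * (2 * w * k + k ^ 2) / v) + k ^ 2 / (16 * v)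
          ≤ -(k ^ 2 / (32 * v)) + w ^ 2 / (2 * v) := by
        have : -(k ^ 2 / (32 * v)) + w ^ 2 / (2 * v) -
          (-(1 / 8 * (2 * w * k + k ^ 2) / v) + k ^ 2 / (16 * v)) = (k + 4 * w) ^ 2 / (32 * v) := by
          field_simp; ring
        have h3 : 0 ≤ (k + 4 * w) ^ 2 / (32 * v) := by positivity
        linarith
      linarith
    · intro y; simp only [hk, hw]; ring
  · refine lint_exp_le PX _ (fun x => (1 - (32 * (v + F ^ 2 / 8))⁻¹ * (g x - f₀ x) ^ 2) +
        Real.exp (2 * F ^ 2 / v) / (2 * v) * (f x - g x) ^ 2) _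
      (fun x => ?_) ?_ ?_
    · have hk5 := hk4 g f₀ hgF hf₀F x
      have hw5 := hk4 f g hfF hgF x
      set k2 := (g x - f₀ x) ^ 2 with hk2
      set w2 := (f x - g x) ^ 2 with hw2
      have hk0 : 0 ≤ k2 := sq_nonneg _
      have hw0 : 0 ≤ w2 := sq_nonneg _
      have h1 := Real.add_one_le_exp (k2 / (32 * v))
      have hpos : 0 < 1 + k2 / (32 * v) := by positivity
      have hA : Real.exp (-(k2 / (32 * v))) ≤ 1 - (32 * (v + F ^ 2 / 8))⁻¹ * k2 := by
        rw [Real.exp_neg]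
        have h2 : (Real.exp (k2 / (32 * v)))⁻¹ ≤ (1 + k2 / (32 * v))⁻¹ := by
          apply inv_anti₀ hpos; linarith
        refine h2.trans ?_
        have h3 : (1 + k2 / (32 * v))⁻¹ = 1 - k2 / (32 * v + k2) := by
          field_simp; ring
        rw [h3]
        have h4 : (32 * (v + F ^ 2 / 8))⁻¹ * k2 ≤ k2 / (32 * v + k2) := by
          rw [inv_mul_eq_div]
          apply div_le_div_of_nonneg_left hk0 (by positivity)
          linarith
        linarith
      have hA1 : Real.exp (-(k2 / (32 * v))) ≤ 1 := by
        rw [Real.exp_le_one_iff]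
        have : 0 ≤ k2 / (32 * v) := by positivity
        linarith
      set q := w2 / (2 * v) with hq
      have hq0 : 0 ≤ q := by positivity
      have hqZ : q ≤ 2 * F ^ 2 / v := by
        rw [hq, div_le_div_iff₀ (by positivity) hv]
        nlinarith
      have hB : Real.exp q - 1 ≤ q * Real.exp (2 * F ^ 2 / v) := by
        have h5 := Real.add_one_le_exp (-q)
        have h6 : Real.exp q * Real.exp (-q) = 1 := by rw [← Real.exp_add]; simp
        have h7 := Real.exp_le_exp.2 hqZ
        have h8 := Real.exp_pos q
        nlinarith
      have e9 : Real.exp (2 * F ^ 2 / v) / (2 * v) * w2 = q * Real.exp (2 * F ^ 2 / v) := by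
        rw [hq]; ring
      rw [e9, Real.exp_add]
      have h10 : 0 ≤ Real.exp q - 1 := by
        have := Real.add_one_le_exp q; linarith
      nlinarith
    · exact ((integrable_const 1).sub (hi1.const_mul _)).add (hi2.const_mul _)
    · have hi3 : Integrable (fun x => 1 - (32 * (v + F ^ 2 / 8))⁻¹ * (g x - f₀ x) ^ 2) PX :=
        (integrable_const 1).sub (hi1.const_mul _)
      rw [integral_add hi3 (hi2.const_mul _),
        integral_sub (integrable_const 1) (hi1.const_mul _), integral_const_mul, integral_const_mul]
      simp only [integral_const, probReal_univ, smul_eq_mul, mul_one]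
      refine le_trans ?_ (Real.add_one_le_exp _)
      have h1 : κ / (32 * (v + F ^ 2 / 8)) ≤
          (32 * (v + F ^ 2 / 8))⁻¹ * ∫ x, (g x - f₀ x) ^ 2 ∂PX := by
        rw [inv_mul_eq_div]
        gcongr
      have h2 : Real.exp (2 * F ^ 2 / v) / (2 * v) * ∫ x, (f x - g x) ^ 2 ∂PX ≤
          κ / (64 * (v + F ^ 2 / 8)) := by
        calc _ ≤ Real.exp (2 * F ^ 2 / v) / (2 * v) *
              (κ * v / (32 * (v + F ^ 2 / 8) * Real.exp (2 * F ^ 2 / v))) := by gcongr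
          _ = _ := by field_simp; ring
      have h3 : κ / (32 * (v + F ^ 2 / 8)) = 2 * (κ / (64 * (v + F ^ 2 / 8))) := by
        field_simp; ring
      linarith

/-- The `χ²`-type bound. -/
lemma chi_bound (hv : 0 < v) [IsProbabilityMeasure PX] {f : (Fin d → ℝ) → ℝ} {s b : ℝ} (hs : v ≤ s)
    (hb : ∀ᵐ x ∂PX, (f x - f₀ x) ^ 2 ≤ b) :
    ∫⁻ z, (lrat f₀ v f s z)⁻¹ ∂(gaussRegLaw d PX f₀ v.toNNReal) ≤
      ENNReal.ofReal (Real.exp ((s / v - 1) ^ 2 / 2 + b / v)) := by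
  have hs0 : 0 < s := hv.trans_le hs
  refine (lintegral_reg_le _ _ _ _ _).trans ?_
  calc _ ≤ ∫⁻ x, ENNReal.ofReal (Real.exp ((s / v - 1) ^ 2 / 2 + b / v)) ∂PX := ?_
    _ = _ := by simp
  refine lintegral_mono_ae ?_
  filter_upwards [hb] with x hx
  set k := f x - f₀ x with hk
  set u := s / v with hu
  have hu1 : 1 ≤ u := by rw [hu, le_div_iff₀ hv]; linarith
  have hsu : s = u * v := by rw [hu]; field_simp
  have key : ∀ y, (lrat f₀ v f s (x, y))⁻¹ = ENNReal.ofReal (Real.exp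
      ((1 / (2 * s) - 1 / (2 * v)) * (y - f₀ x) ^ 2 + (-(k / s)) * (y - f₀ x) +
        (k ^ 2 / (2 * s) + Real.log u / 2))) := by
    intro y
    simp only [lrat]
    rw [ENNReal.inv_div (by simp) (by right; simpa using gpdf_pos _ _ hs0),
      ← ENNReal.ofReal_div_of_pos (gpdf_pos _ _ hs0)]
    congr 1
    unfold gpdf
    have hsq : Real.exp (Real.log u / 2) = Real.sqrt u := by
      rw [Real.sqrt_eq_rpow, Real.rpow_def_of_pos (by linarith)]; congr 1; ring
    have e1 : Real.sqrt (2 * Real.pi * s) = Real.sqrt u * Real.sqrt (2 * Real.pi * v) := by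
      rw [← Real.sqrt_mul (by linarith)]; congr 1; rw [hsu]; ring
    have e2 : (1 / (2 * s) - 1 / (2 * v)) * (y - f₀ x) ^ 2 + (-(k / s)) * (y - f₀ x) +
        (k ^ 2 / (2 * s) + Real.log u / 2) =
        Real.log u / 2 + (-((y - f₀ x) ^ 2) / (2 * v) - -((y - f x) ^ 2) / (2 * s)) := by
      rw [hk]; field_simp; ring
    rw [e2, Real.exp_add, Real.exp_sub, hsq, e1]
    have : 0 < Real.sqrt (2 * Real.pi * v) := by positivity
    have : 0 < Real.sqrt u := Real.sqrt_pos.2 (by linarith)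
    field_simp
  simp only [key]
  have e1 : 1 - 2 * (1 / (2 * s) - 1 / (2 * v)) * v = (2 * u - 1) / u := by
    rw [hsu]; field_simp; ring
  have hq : 0 < (2 * u - 1) / u := div_pos (by linarith) (by linarith)
  refine gauss_quad_le (f₀ x) (1 / (2 * s) - 1 / (2 * v)) (-(k / s))
    (k ^ 2 / (2 * s) + Real.log u / 2) _ hv (by rw [e1]; exact hq) ?_ _ (fun y => rfl)
  rw [e1, inv_sqrt_eq hq, ← Real.exp_add, Real.exp_le_exp,
    Real.log_div (by linarith) (by linarith)]
  have h2u : 0 < 2 * u - 1 := by linarith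
  have h3 : 2 * Real.log u - Real.log (2 * u - 1) ≤ (u - 1) ^ 2 := by
    have e3 : 2 * Real.log u - Real.log (2 * u - 1) = Real.log (u ^ 2 / (2 * u - 1)) := by
      rw [Real.log_div (by positivity) h2u.ne', Real.log_pow]; norm_num
    rw [e3]
    refine (Real.log_le_sub_one_of_pos (by positivity)).trans ?_
    rw [sub_le_iff_le_add, div_le_iff₀ h2u]
    nlinarith [mul_nonneg (sq_nonneg (u - 1)) (by linarith : 0 ≤ 2 * u - 2)]
  have h4 : (-(k / s)) ^ 2 * v / (2 * ((2 * u - 1) / u)) ≤ k ^ 2 / (2 * v) := by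
    have : (-(k / s)) ^ 2 * v / (2 * ((2 * u - 1) / u)) = k ^ 2 / (2 * v) / (u * (2 * u - 1)) := by
      rw [hsu]; field_simp
    rw [this]
    exact div_le_self (by positivity) (by nlinarith)
  have h5 : k ^ 2 / (2 * s) ≤ k ^ 2 / (2 * v) := by gcongr
  have h6 : k ^ 2 / (2 * v) ≤ b / v / 2 := by
    rw [div_div, mul_comm v 2]; gcongr
  linarith

end tests

set_option maxHeartbeats 1000000 in
/-- Existence of exponentially powerful tests. -/
lemma test_exists {d : ℕ} (PX : Measure (Fin d → ℝ)) [IsProbabilityMeasure PX]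
    (f₀ : (Fin d → ℝ) → ℝ) (hf₀ : Measurable f₀) {v F : ℝ} (hv : 0 < v) (hF : 0 < F)
    (hf₀F : ∀ x, |f₀ x| ≤ F) [IsProbabilityMeasure (gaussRegLaw d PX f₀ v.toNNReal)] :
    ∃ c : ℝ, 0 < c ∧ ∃ c' : ℝ, 0 < c' ∧ ∃ e₀ : ℝ, 0 < e₀ ∧ ∀ ε : ℝ, 0 < ε → ε ≤ e₀ →
      ∀ {Θ : Type} (g : Θ → (Fin d → ℝ) → ℝ), (∀ θ, Measurable (g θ)) → (∀ θ x, |g θ x| ≤ F) →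
      ∀ S : Finset Θ, (∀ θ, ∃ s ∈ S, ∫ x, (g θ x - g s x) ^ 2 ∂PX ≤ (c' * ε) ^ 2) →
      ∀ n : ℕ, 1 ≤ n → ∃ Φ : Set (Fin n → (Fin d → ℝ) × ℝ), MeasurableSet Φ ∧
        Measure.pi (fun _ : Fin n => gaussRegLaw d PX f₀ v.toNNReal) Φ ≤
          ENNReal.ofReal ((2 * S.card + 1) * Real.exp (-(c * ε ^ 2 * n))) ∧
        ∀ θ s, ε < l2dist d PX (g θ) f₀ + |s - v| →
          ∫⁻ D in Φᶜ, ∏ i, lrat f₀ v (g θ) s (D i)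
            ∂(Measure.pi (fun _ : Fin n => gaussRegLaw d PX f₀ v.toNNReal)) ≤
          ENNReal.ofReal (Real.exp (-(c * ε ^ 2 * n))) := by
  classical
  set A := v + F ^ 2 / 2 with hA
  set B := v + F ^ 2 / 8 with hB
  have hApos : 0 < A := by positivity
  have hBpos : 0 < B := by positivity
  set q := v / (512 * B * Real.exp (2 * F ^ 2 / v)) with hq
  have hqpos : 0 < q := by positivity
  set c := min (1 / (512 * v ^ 2)) (min (1 / (128 * A)) (1 / (1024 * B))) with hc
  have hcpos : 0 < c := by positivity
  have hc1 : c ≤ 1 / (512 * v ^ 2) := min_le_left _ _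
  have hc2 : c ≤ 1 / (128 * A) := (min_le_right _ _).trans (min_le_left _ _)
  have hc3 : c ≤ 1 / (1024 * B) := (min_le_right _ _).trans (min_le_right _ _)
  have hmin : 0 < min (1 / 8) q := by positivity
  have hm1 : min (1 / 8) q ≤ 1 / 8 := min_le_left _ _
  have hm2 : min (1 / 8) q ≤ q := min_le_right _ _
  generalize hcp : min (1 / 8) q = c' at *
  refine ⟨c, hcpos, c', hmin, min 1 (min (2 * v) (8 * v ^ 2 / F ^ 2)), by positivity, ?_⟩
  intro ε hε hεe Θ g hgm hgF S hS n hn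
  have hε1 : ε ≤ 1 := hεe.trans (min_le_left _ _)
  have hε2 : ε ≤ 2 * v := hεe.trans ((min_le_right _ _).trans (min_le_left _ _))
  have hε3 : ε ≤ 8 * v ^ 2 / F ^ 2 := hεe.trans ((min_le_right _ _).trans (min_le_right _ _))
  set e := ε / (2 * v) with he
  have he0 : 0 < e := by positivity
  have he1 : e ≤ 1 := by rw [he, div_le_one (by positivity)]; exact hε2
  have heF : e * F ^ 2 ≤ 4 * v := by
    rw [le_div_iff₀ (by positivity)] at hε3
    rw [he, div_mul_eq_mul_div, div_le_iff₀ (by positivity)]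
    linarith
  have hcc : c' ^ 2 ≤ c' := by nlinarith
  have hη1 : (c' * ε) ^ 2 ≤ v * e / 32 := by
    have : v * e / 32 = ε / 64 := by rw [he]; field_simp; ring
    rw [this]
    have h1 : c' ^ 2 ≤ 1 / 64 := by nlinarith
    have h2 : ε ^ 2 ≤ ε := by nlinarith
    rw [mul_pow]
    nlinarith [mul_le_mul h1 h2 (sq_nonneg ε) (by norm_num)]
  have hη2 : (c' * ε) ^ 2 ≤ ε ^ 2 / 16 := by
    rw [mul_pow]
    have h1 : c' ^ 2 ≤ 1 / 64 := by nlinarith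
    nlinarith [mul_le_mul_of_nonneg_right h1 (sq_nonneg ε)]
  have hη3 : (c' * ε) ^ 2 ≤ (ε ^ 2 / 16) * v / (32 * B * Real.exp (2 * F ^ 2 / v)) := by
    have : (ε ^ 2 / 16) * v / (32 * B * Real.exp (2 * F ^ 2 / v)) = q * ε ^ 2 := by
      rw [hq]; field_simp; ring
    rw [this, mul_pow]
    exact mul_le_mul_of_nonneg_right (hcc.trans hm2) (sq_nonneg ε)
  set μ := gaussRegLaw d PX f₀ v.toNNReal with hμ
  let tp : (Fin d → ℝ) × ℝ → ℝ := fun z => (z.2 - f₀ z.1) ^ 2 / v - (1 + e / 2)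
  let tm : Θ → (Fin d → ℝ) × ℝ → ℝ := fun j z => (1 - e / 2) - (z.2 - g j z.1) ^ 2 / v
  let tM : Θ → (Fin d → ℝ) × ℝ → ℝ := fun j z => (2 * (z.2 - f₀ z.1) * (g j z.1 - f₀ z.1)
        - (g j z.1 - f₀ z.1) ^ 2) / v
  have htp : Measurable tp := by simp only [tp]; fun_prop
  have htm : ∀ j, Measurable (tm j) := fun j => by
    have := hgm j
    simp only [tm]; fun_prop
  have htM : ∀ j, Measurable (tM j) := fun j => by
    have := hgm j
    simp only [tM]; fun_prop
  let R : ((Fin d → ℝ) × ℝ → ℝ) → Set (Fin n → (Fin d → ℝ) × ℝ) := fun t => {D | 0 < ∑ i, t (D i)}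
  have hRm : ∀ t, Measurable t → MeasurableSet (R t) := fun t ht => by
    refine measurableSet_lt measurable_const ?_
    fun_prop
  let S' := S.filter fun j => ε ^ 2 / 16 ≤ ∫ x, (g j x - f₀ x) ^ 2 ∂PX
  let Φ : Set (Fin n → (Fin d → ℝ) × ℝ) := R tp ∪ ((⋃ j ∈ S, R (tm j)) ∪ ⋃ j ∈ S', R (tM j))
  have hexp : ∀ E : ℝ, c * ε ^ 2 ≤ E → ENNReal.ofReal (Real.exp (-(E * n))) ≤
      ENNReal.ofReal (Real.exp (-(c * ε ^ 2 * n))) := by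
    intro E hE
    apply ENNReal.ofReal_le_ofReal
    rw [Real.exp_le_exp]
    have := mul_le_mul_of_nonneg_right hE (Nat.cast_nonneg (α := ℝ) n)
    linarith
  have hE1 : c * ε ^ 2 ≤ e ^ 2 / 128 := by
    have : e ^ 2 / 128 = 1 / (512 * v ^ 2) * ε ^ 2 := by rw [he]; field_simp; ring
    rw [this]; gcongr
  have hesq : 0 ≤ e ^ 2 := sq_nonneg e
  have hE1' : c * ε ^ 2 ≤ e ^ 2 / 64 := by linarith only [hE1, hesq]
  have hE1'' : c * ε ^ 2 ≤ e ^ 2 / 32 := by linarith only [hE1, hesq]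
  have hE2 : c * ε ^ 2 ≤ ε ^ 2 / 16 / (8 * A) := by
    have : ε ^ 2 / 16 / (8 * A) = 1 / (128 * A) * ε ^ 2 := by field_simp; ring
    rw [this]; gcongr
  have hE3 : c * ε ^ 2 ≤ ε ^ 2 / 16 / (64 * B) := by
    have : ε ^ 2 / 16 / (64 * B) = 1 / (1024 * B) * ε ^ 2 := by field_simp; ring
    rw [this]; gcongr
  refine ⟨Φ, ?_, ?_, ?_⟩
  · refine (hRm _ htp).union (MeasurableSet.union ?_ ?_)
    · exact Finset.measurableSet_biUnion _ fun j _ => hRm _ (htm j)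
    · exact Finset.measurableSet_biUnion _ fun j _ => hRm _ (htM j)
  · set x := ENNReal.ofReal (Real.exp (-(c * ε ^ 2 * n))) with hx
    have h1 : Measure.pi (fun _ : Fin n => μ) (R tp) ≤ x :=
      (chernoff_null μ n tp htp (e / 16) (by positivity) _ (Vp_null PX f₀ hv he0.le he1)).trans
        (hexp _ hE1')
    have h2 : ∀ j ∈ S, Measure.pi (fun _ : Fin n => μ) (R (tm j)) ≤ x := fun j _ =>
      (chernoff_null μ n (tm j) (htm j) (e / 8) (by positivity) _
        (Vm_null PX f₀ hv he0.le (g j))).trans (hexp _ hE1'')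
    have h3 : ∀ j ∈ S', Measure.pi (fun _ : Fin n => μ) (R (tM j)) ≤ x := fun j hj =>
      (chernoff_null μ n (tM j) (htM j) (1 / 4) (by positivity) _
        (M_null PX f₀ hv (g j) hf₀ (hgm j) hf₀F (hgF j) (Finset.mem_filter.1 hj).2)).trans
        (hexp _ hE2)
    have h2' : Measure.pi (fun _ : Fin n => μ) (⋃ j ∈ S, R (tm j)) ≤ S.card * x := by
      refine (measure_biUnion_finset_le _ _).trans ((Finset.sum_le_card_nsmul _ _ _ h2).trans ?_)
      simp
    have h3' : Measure.pi (fun _ : Fin n => μ) (⋃ j ∈ S', R (tM j)) ≤ S.card * x := by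
      refine (measure_biUnion_finset_le _ _).trans ((Finset.sum_le_card_nsmul _ _ _ h3).trans ?_)
      rw [nsmul_eq_mul]
      gcongr
      exact Finset.filter_subset _ _
    calc _ ≤ x + (S.card * x + S.card * x) :=
          (measure_union_le _ _).trans (add_le_add h1 ((measure_union_le _ _).trans (add_le_add h2' h3')))
      _ = ((2 * S.card + 1 : ℕ) : ℝ≥0∞) * x := by push_cast; ring
      _ = _ := by
          rw [hx, ENNReal.ofReal_mul (by positivity)]
          congr 1
          rw [← ENNReal.ofReal_natCast]; push_cast; rfl
  · intro θ s hθ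
    rcases le_or_gt s 0 with hs0 | hs0
    · have : ∀ D : Fin n → (Fin d → ℝ) × ℝ, ∏ i, lrat f₀ v (g θ) s (D i) = 0 := by
        intro D
        refine Finset.prod_eq_zero (Finset.mem_univ (⟨0, hn⟩ : Fin n)) ?_
        simp [lrat, gpdf_nonpos _ _ hs0]
      simp [this]
    have hrm := measurable_lrat hf₀ (hgm θ) v s
    rcases le_or_gt (v * (1 + e)) s with h1 | h1
    · exact (chernoff_alt μ n tp htp _ hrm (e / 32) (by positivity) _
        (Vp_alt PX f₀ hv he0.le he1 (g θ) h1) Φ (Set.subset_union_left)).trans (hexp _ hE1)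
    obtain ⟨j, hj, hjθ⟩ := hS θ
    rcases le_or_gt s (v * (1 - e)) with h2 | h2
    · refine (chernoff_alt μ n (tm j) (htm j) _ hrm (e / 32) (by positivity) _
        (Vm_alt PX f₀ hv he0.le he1 heF (g θ) (g j) (hgm θ) (hgm j) (hgF θ) (hgF j)
          (hjθ.trans hη1) hs0 h2) Φ ?_).trans (hexp _ hE1)
      refine (Set.subset_biUnion_of_mem (u := fun j => R (tm j)) hj).trans ?_
      exact Set.subset_union_left.trans Set.subset_union_right
    · have hev : e * v = ε / 2 := by rw [he]; field_simp
      have hsv : |s - v| ≤ ε / 2 := by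
        rw [abs_le]; constructor <;> nlinarith only [hev, h1, h2]
      have hl : ε / 2 < l2dist d PX (g θ) f₀ := by linarith
      unfold l2dist at hl
      have hl2 := (Real.lt_sqrt (by positivity)).1 hl
      have hintg : ∀ f g : (Fin d → ℝ) → ℝ, Measurable f → Measurable g →
          (∀ x, |f x| ≤ F) → (∀ x, |g x| ≤ F) → Integrable (fun x => (f x - g x) ^ 2) PX := by
        intro f g hf hg hfF hgF
        refine Integrable.of_bound (by fun_prop) (4 * F ^ 2) (Eventually.of_forall fun x => ?_)
        rw [Real.norm_eq_abs, abs_of_nonneg (sq_nonneg _)]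
        have h1 := abs_le.1 (hfF x)
        have h2 := abs_le.1 (hgF x)
        nlinarith
      have hi1 := hintg (g θ) (g j) (hgm θ) (hgm j) (hgF θ) (hgF j)
      have hi2 := hintg (g j) f₀ (hgm j) hf₀ (hgF j) hf₀F
      have hi3 := hintg (g θ) f₀ (hgm θ) hf₀ (hgF θ) hf₀F
      have hκ : ε ^ 2 / 16 ≤ ∫ x, (g j x - f₀ x) ^ 2 ∂PX := by
        have h4 : ∫ x, (g θ x - f₀ x) ^ 2 ∂PX ≤
            ∫ x, (2 * (g θ x - g j x) ^ 2 + 2 * (g j x - f₀ x) ^ 2) ∂PX := by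
          refine integral_mono hi3 ((hi1.const_mul _).add (hi2.const_mul _)) fun x => ?_
          simp only
          nlinarith [sq_nonneg ((g θ x - g j x) - (g j x - f₀ x))]
        rw [integral_add (hi1.const_mul _) (hi2.const_mul _), integral_const_mul,
          integral_const_mul] at h4
        linarith
      have hjS : j ∈ S' := Finset.mem_filter.2 ⟨hj, hκ⟩
      refine (chernoff_alt μ n (tM j) (htM j) _ hrm (1 / 8) (by positivity) _
        (M_alt PX f₀ hv (g θ) (g j) hf₀ (hgm θ) (hgm j) hf₀F (hgF θ) (hgF j) hκ
          (hjθ.trans hη3) hs0 (by nlinarith only [he1, hv, h1])) Φ ?_).trans (hexp _ hE3)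
      refine (Set.subset_biUnion_of_mem (u := fun j => R (tM j)) hjS).trans ?_
      exact Set.subset_union_right.trans Set.subset_union_right

/-- Abstract posterior bound from tests and a lower bound on the evidence. -/
lemma post_bound {Ω α : Type*} [MeasurableSpace Ω] [MeasurableSpace α] (Q : Measure Ω)
    [IsProbabilityMeasure Q] (Pr : Measure α) [IsProbabilityMeasure Pr]
    (R : Ω → α → ℝ≥0∞) (hR : Measurable (Function.uncurry R))
    (A B : Set α) (hB : Pr B ≠ 0) (Φ : Set Ω) (hΦ : MeasurableSet Φ) (τ Λ : ℝ≥0∞)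
    (hA : ∀ p ∈ A, ∫⁻ ω in Φᶜ, R ω p ∂Q ≤ τ)
    (hBΛ : ∀ p ∈ B, ∫⁻ ω, (R ω p)⁻¹ ∂Q ≤ Λ) (hΛ0 : Λ ≠ 0) (hΛ : Λ ≠ ∞)
    (t δ : ℝ≥0∞) (ht0 : t ≠ 0) (ht : t ≠ ∞) (hδ0 : δ ≠ 0) (hδ : δ ≠ ∞) :
    Q {ω | δ * ∫⁻ p, R ω p ∂Pr ≤ ∫⁻ p in A, R ω p ∂Pr} ≤
      Q Φ + t⁻¹ + τ * (t * Λ) / (δ * Pr B) := by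
  have hBtop : Pr B ≠ ∞ := measure_ne_top _ _
  set U := t * Λ with hU
  have hU0 : U ≠ 0 := mul_ne_zero ht0 hΛ0
  have hUt : U ≠ ∞ := ENNReal.mul_ne_top ht hΛ
  have hR' : Measurable (Function.uncurry fun ω p => (R ω p)⁻¹) := hR.inv
  let I : Ω → ℝ≥0∞ := fun ω => ∫⁻ p in B, (R ω p)⁻¹ ∂Pr
  let N : Ω → ℝ≥0∞ := fun ω => ∫⁻ p in A, R ω p ∂Pr
  have hIm : Measurable I := hR'.lintegral_prod_right'
  have hNm : Measurable N := hR.lintegral_prod_right'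
  -- evidence
  have hI : Q {ω | Pr B * U ≤ I ω} ≤ t⁻¹ := by
    have h1 : ∫⁻ ω, I ω ∂Q ≤ Λ * Pr B := by
      rw [lintegral_lintegral_swap hR'.aemeasurable]
      calc _ ≤ ∫⁻ p in B, Λ ∂Pr := setLIntegral_mono measurable_const fun p hp => hBΛ p hp
        _ = _ := by simp
    refine (meas_ge_le_lintegral_div hIm.aemeasurable (mul_ne_zero hB hU0)
      (ENNReal.mul_ne_top hBtop hUt)).trans ?_
    refine (ENNReal.div_le_div_right h1 _).trans ?_
    rw [hU, show Pr B * (t * Λ) = t * (Λ * Pr B) by ring]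
    have h2 : Λ * Pr B ≠ 0 := mul_ne_zero hΛ0 hB
    have h3 : Λ * Pr B ≠ ∞ := ENNReal.mul_ne_top hΛ hBtop
    rw [ENNReal.div_eq_inv_mul, ENNReal.mul_inv (Or.inl ht0) (Or.inl ht), mul_assoc,
      ENNReal.inv_mul_cancel h2 h3, mul_one]
  have hev : ∀ ω, I ω < Pr B * U → Pr B / U ≤ ∫⁻ p, R ω p ∂Pr := by
    intro ω hω
    have hpt : ∀ p, 2 ≤ U * R ω p + U⁻¹ * (R ω p)⁻¹ := by
      intro p
      have e : U⁻¹ * (R ω p)⁻¹ = (U * R ω p)⁻¹ := by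
        rw [ENNReal.mul_inv (Or.inl hU0) (Or.inl hUt)]
      rw [e]
      generalize U * R ω p = x
      rcases eq_or_ne x 0 with rfl | hx0
      · simp
      rcases eq_or_ne x ∞ with rfl | hxt
      · simp
      have hxp : 0 < x.toReal := ENNReal.toReal_pos hx0 hxt
      have h5 : (2 : ℝ) ≤ x.toReal + (x.toReal)⁻¹ := by
        have h6 : x.toReal * (x.toReal)⁻¹ = 1 := mul_inv_cancel₀ hxp.ne'
        have h7 : 0 < (x.toReal)⁻¹ := by positivity
        nlinarith [sq_nonneg (x.toReal - 1), mul_nonneg h7.le (sq_nonneg (x.toReal - 1))]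
      have h8 := ENNReal.ofReal_le_ofReal h5
      rw [ENNReal.ofReal_add hxp.le (by positivity), ENNReal.ofReal_inv_of_pos hxp,
        ENNReal.ofReal_toReal hxt] at h8
      simpa using h8
    have h1 : 2 * Pr B ≤ U * (∫⁻ p in B, R ω p ∂Pr) + U⁻¹ * I ω := by
      calc 2 * Pr B = ∫⁻ p in B, 2 ∂Pr := by simp
        _ ≤ ∫⁻ p in B, (U * R ω p + U⁻¹ * (R ω p)⁻¹) ∂Pr := lintegral_mono fun p => hpt p
        _ = _ := by
            have hm1 : Measurable fun p => R ω p := hR.comp measurable_prodMk_left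
            have hm2 : Measurable fun p => (R ω p)⁻¹ := hm1.inv
            rw [lintegral_add_left (hm1.const_mul _), lintegral_const_mul _ hm1,
              lintegral_const_mul _ hm2]
    have h2 : U⁻¹ * I ω ≤ Pr B := by
      calc _ ≤ U⁻¹ * (Pr B * U) := by gcongr
        _ = Pr B * (U⁻¹ * U) := by ring
        _ = _ := by rw [ENNReal.inv_mul_cancel hU0 hUt, mul_one]
    have h3 : Pr B ≤ U * (∫⁻ p in B, R ω p ∂Pr) := by
      have h4 : Pr B + Pr B ≤ U * (∫⁻ p in B, R ω p ∂Pr) + Pr B := by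
        rw [← two_mul]
        exact h1.trans (by gcongr)
      exact (ENNReal.add_le_add_iff_right hBtop).1 h4
    rw [ENNReal.div_le_iff' hU0 hUt]
    refine h3.trans (mul_le_mul_right ?_ _)
    exact setLIntegral_le_lintegral _ _
  have hNΦ : Q ({ω | δ * (Pr B / U) ≤ N ω} ∩ Φᶜ) ≤ τ * U / (δ * Pr B) := by
    have h1 : ∫⁻ ω in Φᶜ, N ω ∂Q ≤ τ := by
      rw [lintegral_lintegral_swap hR.aemeasurable]
      calc _ ≤ ∫⁻ p in A, τ ∂Pr := setLIntegral_mono measurable_const fun p hp => hA p hp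
        _ ≤ _ := by
          simp only [lintegral_const, Measure.restrict_apply MeasurableSet.univ, Set.univ_inter]
          exact mul_le_of_le_one_right' prob_le_one
    have hb0 : δ * (Pr B / U) ≠ 0 := mul_ne_zero hδ0 (ENNReal.div_pos hB hUt).ne'
    have hbt : δ * (Pr B / U) ≠ ∞ := ENNReal.mul_ne_top hδ (ENNReal.div_ne_top hBtop hU0)
    rw [← Measure.restrict_apply (measurableSet_le measurable_const hNm)]
    refine (meas_ge_le_lintegral_div hNm.aemeasurable hb0 hbt).trans ?_
    refine (ENNReal.div_le_div_right h1 _).trans (le_of_eq ?_)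
    rw [ENNReal.div_eq_inv_mul, ENNReal.mul_inv (Or.inl hδ0) (Or.inl hδ),
      ENNReal.inv_div (Or.inl hUt) (Or.inl hU0), ENNReal.div_eq_inv_mul, ENNReal.div_eq_inv_mul,
      ENNReal.mul_inv (Or.inl hδ0) (Or.inl hδ)]
    ring
  have hsub : {ω | δ * ∫⁻ p, R ω p ∂Pr ≤ ∫⁻ p in A, R ω p ∂Pr} ⊆
      (Φ ∪ {ω | Pr B * U ≤ I ω}) ∪ ({ω | δ * (Pr B / U) ≤ N ω} ∩ Φᶜ) := by
    intro ω hω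
    by_cases h1 : ω ∈ Φ
    · exact Or.inl (Or.inl h1)
    by_cases h2 : Pr B * U ≤ I ω
    · exact Or.inl (Or.inr h2)
    refine Or.inr ⟨?_, h1⟩
    have := hev ω (not_le.1 h2)
    exact le_trans (mul_le_mul_right this _) hω
  refine (measure_mono hsub).trans ((measure_union_le _ _).trans ?_)
  exact add_le_add ((measure_union_le _ _).trans (add_le_add le_rfl hI)) hNΦ

/-! ### Networks: measurability, Lipschitz bounds, padding -/

lemma continuous_netOfParams (ν : ℝ) (d r L : ℕ) :
    Continuous fun p : (ParamIdx d r L → ℝ) × (Fin d → ℝ) => netOfParams ν d r L p.1 p.2 := by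
  have hfold : ∀ (l : List (Fin (L - 1)))
      (h : (ParamIdx d r L → ℝ) × (Fin d → ℝ) → Fin r → ℝ), Continuous h →
      Continuous fun p : (ParamIdx d r L → ℝ) × (Fin d → ℝ) => l.foldl
        (fun h l => fun i =>
          lrelu ν ((∑ j, p.1 (Sum.inr (Sum.inr (Sum.inl (l, i, j)))) * h j) +
            p.1 (Sum.inr (Sum.inr (Sum.inr (Sum.inl (l, i))))))) (h p) := by
    intro l
    induction l with
    | nil => intro h hh; simpa using hh
    | cons a l ih =>
      intro h hh
      simp only [List.foldl_cons]
      refine ih (fun p i => lrelu ν ((∑ j, p.1 (Sum.inr (Sum.inr (Sum.inl (a, i, j)))) * h p j) +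
            p.1 (Sum.inr (Sum.inr (Sum.inr (Sum.inl (a, i))))))) ?_
      unfold lrelu
      fun_prop
  unfold netOfParams
  have := hfold (List.finRange (L - 1)) (fun p i =>
    lrelu ν ((∑ j, p.1 (Sum.inl (i, j)) * p.2 j) + p.1 (Sum.inr (Sum.inl i)))) (by
      unfold lrelu; fun_prop)
  simp only
  fun_prop

lemma lrelu_zero (ν : ℝ) : lrelu ν 0 = 0 := by simp [lrelu]

lemma lrelu_of_nonneg {ν x : ℝ} (hν1 : ν < 1) (hx : 0 ≤ x) : lrelu ν x = x := by
  unfold lrelu; rw [max_eq_left]; nlinarith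

lemma lrelu_of_nonpos {ν x : ℝ} (hν1 : ν < 1) (hx : x ≤ 0) : lrelu ν x = ν * x := by
  unfold lrelu; rw [max_eq_right]; nlinarith

lemma lrelu_lip {ν : ℝ} (hν0 : 0 ≤ ν) (hν1 : ν < 1) (x y : ℝ) :
    |lrelu ν x - lrelu ν y| ≤ |x - y| := by
  unfold lrelu
  refine (abs_max_sub_max_le_max _ _ _ _).trans (max_le le_rfl ?_)
  rw [← mul_sub, abs_mul, abs_of_nonneg hν0]
  nlinarith [abs_nonneg (x - y)]

lemma lrelu_abs {ν : ℝ} (hν0 : 0 ≤ ν) (hν1 : ν < 1) (x : ℝ) : |lrelu ν x| ≤ |x| := by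
  have := lrelu_lip hν0 hν1 x 0
  simpa [lrelu_zero] using this

/-- Affine map bounds. -/
lemma affine_bound {m : ℕ} (w : Fin m → ℝ) (b : ℝ) (h : Fin m → ℝ) {B H : ℝ} (hB : 0 ≤ B)
    (hw : ∀ j, |w j| ≤ B) (hb : |b| ≤ B) (hh : ∀ j, |h j| ≤ H) :
    |(∑ j, w j * h j) + b| ≤ B * (m * H + 1) := by
  have h1 : |∑ j, w j * h j| ≤ m * (B * H) := by
    refine (Finset.abs_sum_le_sum_abs _ _).trans ?_
    refine (Finset.sum_le_card_nsmul _ _ (B * H) fun j _ => ?_).trans (by simp)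
    rw [abs_mul]
    exact mul_le_mul (hw j) (hh j) (abs_nonneg _) hB
  calc _ ≤ _ := abs_add_le _ _
    _ ≤ m * (B * H) + B := add_le_add h1 hb
    _ = _ := by ring

lemma affine_diff {m : ℕ} (w w' : Fin m → ℝ) (b b' : ℝ) (h h' : Fin m → ℝ) {B H E ρ : ℝ}
    (hB : 0 ≤ B) (hρ : 0 ≤ ρ)
    (hw : ∀ j, |w' j| ≤ B) (hww : ∀ j, |w j - w' j| ≤ ρ) (hbb : |b - b'| ≤ ρ)
    (hh : ∀ j, |h j| ≤ H) (hhh : ∀ j, |h j - h' j| ≤ E) :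
    |((∑ j, w j * h j) + b) - ((∑ j, w' j * h' j) + b')| ≤ m * (ρ * H + B * E) + ρ := by
  have e : ((∑ j, w j * h j) + b) - ((∑ j, w' j * h' j) + b') =
      (∑ j, ((w j - w' j) * h j + w' j * (h j - h' j))) + (b - b') := by
    have : ∀ j, (w j - w' j) * h j + w' j * (h j - h' j) = w j * h j - w' j * h' j :=
      fun j => by ring
    simp only [this, Finset.sum_sub_distrib]; ring
  rw [e]
  refine (abs_add_le _ _).trans (add_le_add ?_ hbb)
  refine (Finset.abs_sum_le_sum_abs _ _).trans ?_
  refine (Finset.sum_le_card_nsmul _ _ (ρ * H + B * E) fun j _ => ?_).trans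
    (by rw [Finset.card_univ, Fintype.card_fin, nsmul_eq_mul])
  refine (abs_add_le _ _).trans (add_le_add ?_ ?_)
  · rw [abs_mul]
    exact mul_le_mul (hww j) (hh j) (abs_nonneg _) hρ
  · rw [abs_mul]
    exact mul_le_mul (hw j) (hhh j) (abs_nonneg _) hB

lemma net_lip {ν : ℝ} (hν0 : 0 ≤ ν) (hν1 : ν < 1) {d r L : ℕ} (hL : 1 ≤ L) {a B ρ : ℝ}
    (ha : 1 ≤ a) (hB : 1 ≤ B) (hρ : 0 ≤ ρ) (θ θ' : ParamIdx d r L → ℝ)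
    (hθ : ∀ i, |θ i| ≤ B) (hθ' : ∀ i, |θ' i| ≤ B) (hd : ∀ i, |θ i - θ' i| ≤ ρ)
    (x : Fin d → ℝ) (hx : ∀ j, |x j| ≤ a) :
    |netOfParams ν d r L θ x - netOfParams ν d r L θ' x| ≤
      ρ * a * (L + 1) * (B * (r + d + 1)) ^ (L + 1) := by
  set G : ℝ := B * (r + d + 1) with hG
  have hr0 : (0 : ℝ) ≤ r := Nat.cast_nonneg r
  have hd0 : (0 : ℝ) ≤ d := Nat.cast_nonneg d
  have hG1 : 1 ≤ G := by nlinarith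
  have hB0 : 0 ≤ B := by linarith
  have hBG : B * (r + 1) ≤ G := by rw [hG]; gcongr; linarith
  have hrG : (r : ℝ) + 1 ≤ G := le_trans (by nlinarith) hBG
  -- one step
  have step : ∀ (H E : ℝ) (w w' : Fin r → ℝ) (b b' : ℝ) (h h' : Fin r → ℝ), 1 ≤ H → 0 ≤ E →
      (∀ j, |w' j| ≤ B) → (∀ j, |w j - w' j| ≤ ρ) → |b - b'| ≤ ρ → (∀ j, |h j| ≤ H) →
      (∀ j, |h j - h' j| ≤ E) →
      |((∑ j, w j * h j) + b) - ((∑ j, w' j * h' j) + b')| ≤ G * (E + ρ * H) := by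
    intro H E w w' b b' h h' hH hE h1 h2 h3 h4 h5
    refine (affine_diff w w' b b' h h' hB0 hρ h1 h2 h3 h4 h5).trans ?_
    have e1 : r * (ρ * H + B * E) + ρ ≤ B * (r + 1) * E + (r + 1) * (ρ * H) := by
      have : ρ ≤ ρ * H := by nlinarith
      nlinarith [mul_nonneg hB0 hE]
    refine e1.trans ?_
    rw [mul_add G]
    have : 0 ≤ ρ * H := by positivity
    exact add_le_add (mul_le_mul_of_nonneg_right hBG hE) (mul_le_mul_of_nonneg_right hrG this)
  have stepH : ∀ (H : ℝ) (w : Fin r → ℝ) (b : ℝ) (h : Fin r → ℝ), 1 ≤ H →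
      (∀ j, |w j| ≤ B) → |b| ≤ B → (∀ j, |h j| ≤ H) → |(∑ j, w j * h j) + b| ≤ G * H := by
    intro H w b h hH h1 h2 h3
    refine (affine_bound w b h hB0 h1 h2 h3).trans ?_
    calc _ ≤ B * (r + 1) * H := by nlinarith
      _ ≤ _ := by gcongr
  have hfold : ∀ (l : List (Fin (L - 1))) (k : ℕ) (h h' : Fin r → ℝ),
      (∀ j, |h j| ≤ a * G ^ (k + 1)) → (∀ j, |h j - h' j| ≤ ρ * a * (k + 1) * G ^ (k + 1)) →
      (∀ j, |l.foldl (fun h l => fun i =>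
          lrelu ν ((∑ j, θ (Sum.inr (Sum.inr (Sum.inl (l, i, j)))) * h j) +
            θ (Sum.inr (Sum.inr (Sum.inr (Sum.inl (l, i))))))) h j|
          ≤ a * G ^ (k + l.length + 1)) ∧
      (∀ j, |l.foldl (fun h l => fun i =>
          lrelu ν ((∑ j, θ (Sum.inr (Sum.inr (Sum.inl (l, i, j)))) * h j) +
            θ (Sum.inr (Sum.inr (Sum.inr (Sum.inl (l, i))))))) h j -
          l.foldl (fun h l => fun i =>
          lrelu ν ((∑ j, θ' (Sum.inr (Sum.inr (Sum.inl (l, i, j)))) * h j) +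
            θ' (Sum.inr (Sum.inr (Sum.inr (Sum.inl (l, i))))))) h' j|
          ≤ ρ * a * ((k + l.length : ℕ) + 1) * G ^ (k + l.length + 1)) := by
    intro l
    induction l with
    | nil => intro k h h' h1 h2; exact ⟨by simpa using h1, by simpa using h2⟩
    | cons c l ih =>
      intro k h h' h1 h2
      have hH1 : 1 ≤ a * G ^ (k + 1) := by
        have := one_le_pow₀ (n := k + 1) hG1
        nlinarith
      have := ih (k + 1) (fun i =>
          lrelu ν ((∑ j, θ (Sum.inr (Sum.inr (Sum.inl (c, i, j)))) * h j) +
            θ (Sum.inr (Sum.inr (Sum.inr (Sum.inl (c, i)))))))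
          (fun i =>
          lrelu ν ((∑ j, θ' (Sum.inr (Sum.inr (Sum.inl (c, i, j)))) * h' j) +
            θ' (Sum.inr (Sum.inr (Sum.inr (Sum.inl (c, i))))))) ?_ ?_
      · simp only [List.foldl_cons, List.length_cons]
        rw [show k + (l.length + 1) = k + 1 + l.length by ring]
        exact this
      · intro i
        refine (lrelu_abs hν0 hν1 _).trans ?_
        refine (stepH _ _ _ h hH1 (fun j => hθ _) (hθ _) h1).trans (le_of_eq ?_)
        ring
      · intro i
        refine (lrelu_lip hν0 hν1 _ _).trans ?_
        refine (step _ _ _ _ _ _ h h' hH1 (by positivity) (fun j => hθ' _) (fun j => hd _) (hd _)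
          h1 h2).trans (le_of_eq ?_)
        push_cast; ring
  have h0 : ∀ i, |lrelu ν ((∑ j, θ (Sum.inl (i, j)) * x j) + θ (Sum.inr (Sum.inl i)))| ≤
      a * G ^ (0 + 1) := by
    intro i
    refine (lrelu_abs hν0 hν1 _).trans ?_
    refine (affine_bound _ _ x hB0 (fun j => hθ _) (hθ _) hx).trans ?_
    rw [zero_add, pow_one, hG]
    have : (d : ℝ) * a + 1 ≤ a * (r + d + 1) := by nlinarith
    calc _ ≤ B * (a * (r + d + 1)) := by gcongr
      _ = _ := by ring
  have h0' : ∀ i, |lrelu ν ((∑ j, θ (Sum.inl (i, j)) * x j) + θ (Sum.inr (Sum.inl i))) -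
      lrelu ν ((∑ j, θ' (Sum.inl (i, j)) * x j) + θ' (Sum.inr (Sum.inl i)))| ≤
      ρ * a * ((0 : ℕ) + 1) * G ^ (0 + 1) := by
    intro i
    refine (lrelu_lip hν0 hν1 _ _).trans ?_
    refine (affine_diff _ _ _ _ x x hB0 hρ (fun j => hθ' _) (fun j => hd _) (hd _) hx
      (E := 0) (fun j => by simp)).trans ?_
    simp only [mul_zero, add_zero, zero_add, pow_one, Nat.cast_zero, mul_one]
    have h1 : (d : ℝ) * a + 1 ≤ a * G := by
      have : (d : ℝ) * a + 1 ≤ a * (r + d + 1) := by nlinarith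
      refine this.trans ?_
      rw [hG]
      have : (r : ℝ) + d + 1 ≤ B * (r + d + 1) := le_mul_of_one_le_left (by positivity) hB
      gcongr
    calc (d : ℝ) * (ρ * a) + ρ = ρ * (d * a + 1) := by ring
      _ ≤ ρ * (a * G) := by gcongr
      _ = _ := by ring
  obtain ⟨hF1, hF2⟩ := hfold (List.finRange (L - 1)) 0 _ _ h0 h0'
  rw [List.length_finRange, zero_add, show L - 1 + 1 = L by omega] at hF1 hF2
  have hH1 : 1 ≤ a * G ^ L := by
    have := one_le_pow₀ (n := L) hG1
    nlinarith
  have hLc : ((L - 1 : ℕ) : ℝ) + 1 = L := by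
    have : L - 1 + 1 = L := by omega
    exact_mod_cast this
  rw [hLc] at hF2
  unfold netOfParams
  refine (step _ _ _ _ _ _ _ _ hH1 (by positivity) (fun j => hθ' _) (fun j => hd _) (hd _)
          hF1 hF2).trans (le_of_eq ?_)
  ring

/-- Parameters of a network in `LNet` form. -/
def LNet.toParams {d r L : ℕ} (net : LNet d r) (hlen : net.hid.length = L - 1) :
    ParamIdx d r L → ℝ
  | Sum.inl (i, j) => net.W0 i j
  | Sum.inr (Sum.inl i) => net.b0 i
  | Sum.inr (Sum.inr (Sum.inl (l, i, j))) => (net.hid.get (l.cast hlen.symm)).1 i j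
  | Sum.inr (Sum.inr (Sum.inr (Sum.inl (l, i)))) => (net.hid.get (l.cast hlen.symm)).2 i
  | Sum.inr (Sum.inr (Sum.inr (Sum.inr (Sum.inl i)))) => net.Wout i
  | Sum.inr (Sum.inr (Sum.inr (Sum.inr (Sum.inr ())))) => net.bout

lemma LNet.toParams_eval (ν : ℝ) {d r L : ℕ} (net : LNet d r) (hlen : net.hid.length = L - 1)
    (x : Fin d → ℝ) : netOfParams ν d r L (net.toParams hlen) x = net.eval ν x := by
  have e : net.hid = (List.finRange (L - 1)).map fun l => net.hid.get (l.cast hlen.symm) := by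
    apply List.ext_get
    · simp [hlen]
    · intro n h1 h2
      simp
  unfold netOfParams LNet.eval
  rw [e, List.foldl_map]
  rfl

lemma LNet.toParams_le {d r L : ℕ} (net : LNet d r) (hlen : net.hid.length = L - 1) {B : ℝ}
    (hb : net.bounded B) (i) : |net.toParams hlen i| ≤ B := by
  obtain ⟨h1, h2, h3, h4, h5⟩ := hb
  rcases i with ⟨i, j⟩ | i | ⟨l, i, j⟩ | ⟨l, i⟩ | i | _
  · exact h1 i j
  · exact h2 i
  · exact (h3 _ (List.get_mem _ _)).1 i j
  · exact (h3 _ (List.get_mem _ _)).2 i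
  · exact h4 i
  · exact h5

/-- Zero padding of vectors. -/
def vpad {r₀ r : ℕ} (f : Fin r₀ → ℝ) : Fin r → ℝ := fun j => if h : j.1 < r₀ then f ⟨j.1, h⟩ else 0

lemma vpad_abs {r₀ r : ℕ} (f : Fin r₀ → ℝ) {B : ℝ} (hB : 0 ≤ B) (hf : ∀ i, |f i| ≤ B) (j : Fin r) :
    |vpad f j| ≤ B := by
  unfold vpad
  split_ifs
  · exact hf _
  · simpa using hB

lemma sum_vpad {r₀ r : ℕ} (hr : r₀ ≤ r) (f g : Fin r₀ → ℝ) :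
    ∑ j : Fin r, vpad f j * vpad g j = ∑ j, f j * g j := by
  symm
  refine Fintype.sum_of_injective (Fin.castLE hr) (Fin.castLE_injective hr) _ _ ?_ ?_
  · intro i hi
    have : ¬ i.1 < r₀ := fun h => hi ⟨⟨i.1, h⟩, by ext; rfl⟩
    simp [vpad, this]
  · intro i
    simp [vpad]

/-- Zero padding of matrices. -/
def mpad {r₀ r : ℕ} {Y : Type} (W : Fin r₀ → Y → ℝ) : Fin r → Y → ℝ :=
  fun i y => if h : i.1 < r₀ then W ⟨i.1, h⟩ y else 0

/-- Zero padding of a network. -/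
def LNet.wpad {d r₀ : ℕ} (r : ℕ) (net : LNet d r₀) : LNet d r where
  W0 := mpad net.W0
  b0 := vpad net.b0
  hid := net.hid.map fun p => (mpad (fun i => vpad (p.1 i)), vpad p.2)
  Wout := vpad net.Wout
  bout := net.bout

lemma mpad_abs {r₀ r : ℕ} {Y : Type} (W : Fin r₀ → Y → ℝ) {B : ℝ} (hB : 0 ≤ B)
    (hf : ∀ i y, |W i y| ≤ B) (j : Fin r) (y : Y) : |mpad W j y| ≤ B := by
  unfold mpad
  split_ifs
  · exact hf _ _
  · simpa using hB

lemma LNet.wpad_bounded {d r₀ r : ℕ} (net : LNet d r₀) {B : ℝ} (hB : 0 ≤ B) (h : net.bounded B) :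
    (net.wpad r).bounded B := by
  obtain ⟨h1, h2, h3, h4, h5⟩ := h
  refine ⟨mpad_abs _ hB h1, vpad_abs _ hB h2, ?_, vpad_abs _ hB h4, h5⟩
  intro p hp
  simp only [LNet.wpad, List.mem_map] at hp
  obtain ⟨q, hq, rfl⟩ := hp
  exact ⟨mpad_abs _ hB fun i y => vpad_abs _ hB ((h3 q hq).1 i) y, vpad_abs _ hB (h3 q hq).2⟩

lemma LNet.wpad_eval (ν : ℝ) {d r₀ r : ℕ} (hr : r₀ ≤ r) (net : LNet d r₀) (x : Fin d → ℝ) :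
    (net.wpad r).eval ν x = net.eval ν x := by
  have hfold : ∀ (l : List ((Fin r₀ → Fin r₀ → ℝ) × (Fin r₀ → ℝ))) (h : Fin r₀ → ℝ),
      (l.map fun p => ((mpad (fun i => vpad (p.1 i)) : Fin r → Fin r → ℝ),
        (vpad p.2 : Fin r → ℝ))).foldl
        (fun (h : Fin r → ℝ) p => fun i => lrelu ν ((∑ j, p.1 i j * h j) + p.2 i)) (vpad h) =
      vpad (l.foldl
        (fun (h : Fin r₀ → ℝ) p => fun i => lrelu ν ((∑ j, p.1 i j * h j) + p.2 i)) h) := by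
    intro l
    induction l with
    | nil => intro h; rfl
    | cons p l ih =>
      intro h
      simp only [List.map_cons, List.foldl_cons]
      rw [← ih]
      congr 1
      funext i
      by_cases hi : i.1 < r₀
      · simp only [mpad, hi, dite_true]
        rw [sum_vpad hr]
        simp [vpad, hi]
      · simp [mpad, vpad, hi, lrelu_zero]
  unfold LNet.eval
  simp only [LNet.wpad]
  have h0 : (fun i => lrelu ν ((∑ j, mpad net.W0 i j * x j) + vpad net.b0 i)) =
      (vpad (fun i => lrelu ν ((∑ j, net.W0 i j * x j) + net.b0 i)) : Fin r → ℝ) := by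
    funext i
    by_cases hi : i.1 < r₀
    · simp [mpad, vpad, hi]
    · simp [mpad, vpad, hi, lrelu_zero]
  rw [h0, hfold, sum_vpad hr]

/-- Depth padding at the output. -/
def LNet.dpad {d r : ℕ} (i₀ : Fin r) (B' : ℝ) (q : ℕ) (net : LNet d r) : LNet d r where
  W0 := net.W0
  b0 := net.b0
  hid := net.hid ++ ((fun _ j => net.Wout j), fun _ => net.bout + B') ::
    List.replicate q ((fun _ j => if j = i₀ then 1 else 0), fun _ => 0)
  Wout := fun j => if j = i₀ then 1 else 0
  bout := -B'

lemma LNet.dpad_bounded {d r : ℕ} (i₀ : Fin r) {B B' : ℝ} (hB : 0 ≤ B) (hB' : 0 ≤ B') (q : ℕ)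
    (net : LNet d r) (h : net.bounded B) : (net.dpad i₀ B' q).bounded (B + B' + 1) := by
  obtain ⟨h1, h2, h3, h4, h5⟩ := h
  have hone : ∀ j : Fin r, |(if j = i₀ then (1 : ℝ) else 0)| ≤ B + B' + 1 := by
    intro j; split_ifs <;> simp <;> linarith
  refine ⟨fun i j => (h1 i j).trans (by linarith), fun i => (h2 i).trans (by linarith), ?_, hone, ?_⟩
  · intro p hp
    simp only [LNet.dpad, List.mem_append, List.mem_cons, List.mem_replicate] at hp
    rcases hp with hp | rfl | ⟨_, rfl⟩
    · exact ⟨fun i j => ((h3 p hp).1 i j).trans (by linarith),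
        fun i => ((h3 p hp).2 i).trans (by linarith)⟩
    · refine ⟨fun i j => (h4 j).trans (by linarith), fun i => ?_⟩
      refine (abs_add_le _ _).trans ?_
      rw [abs_of_nonneg hB']
      linarith
    · exact ⟨fun _ => hone, fun _ => by simp; linarith⟩
  · simp only [LNet.dpad, abs_neg, abs_of_nonneg hB']
    linarith

lemma LNet.dpad_eval {ν : ℝ} (hν1 : ν < 1) {d r : ℕ} (i₀ : Fin r) {B' : ℝ} (q : ℕ)
    (net : LNet d r) (x : Fin d → ℝ) (hx : |net.eval ν x| ≤ B') :
    (net.dpad i₀ B' q).eval ν x = net.eval ν x := by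
  have hrep : ∀ (q : ℕ) (h : Fin r → ℝ), 0 ≤ h i₀ →
      (List.replicate q (((fun _ j => if j = i₀ then (1 : ℝ) else 0) : Fin r → Fin r → ℝ),
        ((fun _ => 0) : Fin r → ℝ))).foldl
        (fun (h : Fin r → ℝ) p => fun i => lrelu ν ((∑ j, p.1 i j * h j) + p.2 i)) h i₀ = h i₀ := by
    intro q
    induction q with
    | zero => intro h _; rfl
    | succ q ih =>
      intro h hh
      have e : lrelu ν ((∑ j, (if j = i₀ then (1 : ℝ) else 0) * h j) + 0) = h i₀ := by
        simp only [ite_mul, one_mul, zero_mul, Finset.sum_ite_eq', Finset.mem_univ, if_true, add_zero]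
        exact lrelu_of_nonneg hν1 hh
      rw [List.replicate_succ, List.foldl_cons, ih]
      · exact e
      · simp only [e]; exact hh
  have habs := abs_le.1 hx
  unfold LNet.eval at habs ⊢
  simp only [LNet.dpad, List.foldl_append, List.foldl_cons] at habs ⊢
  set hh := net.hid.foldl
    (fun (h : Fin r → ℝ) p => fun i => lrelu ν ((∑ j, p.1 i j * h j) + p.2 i))
    (fun i => lrelu ν ((∑ j, net.W0 i j * x j) + net.b0 i)) with hhh
  have e : lrelu ν ((∑ j, net.Wout j * hh j) + (net.bout + B')) =
      (∑ j, net.Wout j * hh j) + (net.bout + B') := lrelu_of_nonneg hν1 (by linarith)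
  simp only [ite_mul, one_mul, zero_mul, Finset.sum_ite_eq', Finset.mem_univ, if_true]
  rw [e, hrep q _ (by linarith)]
  ring

lemma exists_theta {ν : ℝ} (hν1 : ν < 1) {d r₀ r L : ℕ} (hr : r₀ ≤ r) (hr1 : 1 ≤ r) {B B' : ℝ}
    (hB : 0 ≤ B) (hB' : 0 ≤ B') (net : LNet d r₀) (hb : net.bounded B)
    (hL : net.hid.length + 1 ≤ L) :
    ∃ θ : ParamIdx d r L → ℝ, (∀ i, |θ i| ≤ B + B' + 1) ∧
      ∀ x, |net.eval ν x| ≤ B' → netOfParams ν d r L θ x = net.eval ν x := by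
  have hb' := net.wpad_bounded (r := r) hB hb
  have hlen : (net.wpad r).hid.length = net.hid.length := by simp [LNet.wpad]
  rcases Nat.lt_or_ge (net.hid.length + 1) L with h | h
  · let i₀ : Fin r := ⟨0, hr1⟩
    have hlen2 : ((net.wpad r).dpad i₀ B' (L - net.hid.length - 2)).hid.length = L - 1 := by
      simp only [LNet.dpad, List.length_append, List.length_cons, List.length_replicate, hlen]
      omega
    refine ⟨((net.wpad r).dpad i₀ B' (L - net.hid.length - 2)).toParams hlen2,
      LNet.toParams_le _ _ (LNet.dpad_bounded i₀ hB hB' _ _ hb'), fun x hx => ?_⟩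
    rw [LNet.toParams_eval, LNet.dpad_eval hν1, LNet.wpad_eval ν hr]
    rw [LNet.wpad_eval ν hr]; exact hx
  · have hlen2 : (net.wpad r).hid.length = L - 1 := by omega
    refine ⟨(net.wpad r).toParams hlen2, fun i => ?_, fun x hx => ?_⟩
    · exact (LNet.toParams_le _ _ hb' i).trans (by linarith)
    · rw [LNet.toParams_eval, LNet.wpad_eval ν hr]

lemma prior_box {ι : Type} [Fintype ι] (P : Measure (ι → ℝ)) (π : (ι → ℝ) → ℝ)
    (hdens : P = volume.withDensity fun θ => ENNReal.ofReal (π θ)) (θ₀ : ι → ℝ) {ρ κ δ : ℝ}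
    (hρ : 0 ≤ ρ) (hδ : 0 ≤ δ)
    (hlow : ∀ θ, (∀ i, |θ i| ≤ κ) → δ ^ Fintype.card ι ≤ π θ) (hθ₀ : ∀ i, |θ₀ i| + ρ ≤ κ) :
    ENNReal.ofReal ((δ * (2 * ρ)) ^ Fintype.card ι) ≤ P (Metric.closedBall θ₀ ρ) := by
  rw [hdens, withDensity_apply _ Metric.isClosed_closedBall.measurableSet]
  calc ENNReal.ofReal ((δ * (2 * ρ)) ^ Fintype.card ι)
      = ENNReal.ofReal (δ ^ Fintype.card ι) * volume (Metric.closedBall θ₀ ρ) := by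
        rw [Real.volume_pi_closedBall _ hρ, ← ENNReal.ofReal_mul (by positivity), mul_pow]
    _ = ∫⁻ _ in Metric.closedBall θ₀ ρ, ENNReal.ofReal (δ ^ Fintype.card ι) := by simp
    _ ≤ _ := by
        refine setLIntegral_mono' Metric.isClosed_closedBall.measurableSet fun θ hθ => ?_
        refine ENNReal.ofReal_le_ofReal (hlow θ fun i => ?_)
        have h1 : |θ i - θ₀ i| ≤ ρ := by
          have := (dist_le_pi_dist θ θ₀ i).trans (Metric.mem_closedBall.1 hθ)
          simpa [Real.dist_eq] using this
        have h2 := abs_add_le (θ i - θ₀ i) (θ₀ i)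
        rw [sub_add_cancel] at h2
        linarith [hθ₀ i]

lemma prior_sigma (P : Measure ℝ) (q : ℝ → ℝ)
    (hdens : P = volume.withDensity fun s => ENNReal.ofReal (q s)) {v : ℝ} (hv : 0 < v)
    (hc : ContinuousOn q (Set.Ioo 0 (2 * v))) (hp : ∀ s ∈ Set.Ioo 0 (2 * v), 0 < q s) :
    ∃ cq : ℝ, 0 < cq ∧ ∃ e₁ : ℝ, 0 < e₁ ∧ ∀ e : ℝ, 0 < e → e ≤ e₁ →
      ENNReal.ofReal (cq * e) ≤ P (Set.Icc v (v * (1 + e))) := by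
  have hsub : Set.Icc v (v * (1 + 1 / 2)) ⊆ Set.Ioo 0 (2 * v) := fun s hs =>
    ⟨lt_of_lt_of_le hv hs.1, lt_of_le_of_lt hs.2 (by nlinarith)⟩
  obtain ⟨s₀, hs₀, hmin⟩ := isCompact_Icc.exists_isMinOn
    (Set.nonempty_Icc.2 (by nlinarith : v ≤ v * (1 + 1 / 2))) (hc.mono hsub)
  have hq0 : 0 < q s₀ := hp _ (hsub hs₀)
  refine ⟨q s₀ * v, by positivity, 1 / 2, by norm_num, fun e he he' => ?_⟩
  rw [hdens, withDensity_apply _ measurableSet_Icc]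
  calc ENNReal.ofReal (q s₀ * v * e) = ENNReal.ofReal (q s₀) * volume (Set.Icc v (v * (1 + e))) := by
        rw [Real.volume_Icc, ← ENNReal.ofReal_mul hq0.le]; congr 1; ring
    _ = ∫⁻ _ in Set.Icc v (v * (1 + e)), ENNReal.ofReal (q s₀) := by simp
    _ ≤ _ := by
        refine setLIntegral_mono' measurableSet_Icc fun s hs => ?_
        refine ENNReal.ofReal_le_ofReal (hmin ⟨hs.1, hs.2.trans ?_⟩)
        nlinarith

lemma trunc_abs {F : ℝ} (hF : 0 ≤ F) (x : ℝ) : |trunc F x| ≤ F := by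
  unfold trunc
  exact abs_le.2 ⟨le_min (le_max_right _ _) (by linarith), min_le_right _ _⟩

lemma trunc_sub {F : ℝ} (x y : ℝ) (hy : |y| ≤ F) : |trunc F x - y| ≤ |x - y| := by
  have h := abs_le.1 hy
  have : y = trunc F y := by
    unfold trunc
    rw [max_eq_left h.1, min_eq_left h.2]
  conv_lhs => rw [this]
  unfold trunc
  exact (abs_min_sub_min_le_max _ _ _ _).trans (by
    simp only [sub_self, abs_zero, max_le_iff, abs_nonneg, and_true]
    exact (abs_max_sub_max_le_max _ _ _ _).trans (by simp))

lemma lrat_ne_zero {X : Type*} {f₀ g : X → ℝ} {v s : ℝ} (hs : 0 < s) (z : X × ℝ) :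
    lrat f₀ v g s z ≠ 0 := by
  unfold lrat
  have := gpdf_pos (g z.1) z.2 hs
  simp [ENNReal.div_eq_zero_iff, this]

lemma lrat_ne_top {X : Type*} {f₀ g : X → ℝ} {v s : ℝ} (hv : 0 < v) (z : X × ℝ) :
    lrat f₀ v g s z ≠ ∞ := by
  unfold lrat
  have := gpdf_pos (f₀ z.1) z.2 hv
  exact ENNReal.div_ne_top ENNReal.ofReal_ne_top (by simp [this])

lemma measurable_trunc_net (ν F : ℝ) (d r L : ℕ) :
    Measurable fun p : (ParamIdx d r L → ℝ) × (Fin d → ℝ) =>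
      trunc F (netOfParams ν d r L p.1 p.2) := by
  have := (continuous_netOfParams ν d r L).measurable
  unfold trunc
  fun_prop

lemma finite_bound {ν F : ℝ} {d r L n : ℕ} (PX : Measure (Fin d → ℝ)) [IsProbabilityMeasure PX]
    (f₀ : (Fin d → ℝ) → ℝ) (hf₀ : Measurable f₀) {v : ℝ} (hv : 0 < v)
    [IsProbabilityMeasure (gaussRegLaw d PX f₀ v.toNNReal)]
    (Pr : Measure ((ParamIdx d r L → ℝ) × ℝ)) [IsProbabilityMeasure Pr]
    (A B : Set ((ParamIdx d r L → ℝ) × ℝ)) {pB b₁ b κ δ τ : ℝ} (hpB : 0 < pB)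
    (hB : ENNReal.ofReal pB ≤ Pr B)
    (hBs : ∀ p ∈ B, v ≤ p.2 ∧ (p.2 / v - 1) ^ 2 ≤ b₁)
    (hBf : ∀ p ∈ B, ∀ᵐ x ∂PX, (trunc F (netOfParams ν d r L p.1 x) - f₀ x) ^ 2 ≤ b)
    (hδ : 0 < δ) (hτ : 0 ≤ τ)
    (Φ : Set (Fin n → (Fin d → ℝ) × ℝ)) (hΦ : MeasurableSet Φ)
    (hA : ∀ p ∈ A, ∫⁻ D in Φᶜ,
        ∏ i, lrat f₀ v (fun x => trunc F (netOfParams ν d r L p.1 x)) p.2 (D i)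
        ∂(Measure.pi (fun _ : Fin n => gaussRegLaw d PX f₀ v.toNNReal)) ≤ ENNReal.ofReal τ) :
    Measure.pi (fun _ : Fin n => gaussRegLaw d PX f₀ v.toNNReal)
      {D | ENNReal.ofReal δ < postMass Pr (gaussLik ν F d r L D) A} ≤
    Measure.pi (fun _ : Fin n => gaussRegLaw d PX f₀ v.toNNReal) Φ +
      ENNReal.ofReal (Real.exp (-κ)) +
      ENNReal.ofReal (τ * Real.exp (κ + n * (b₁ / 2 + b / v)) / (δ * pB)) := by
  set Q := Measure.pi (fun _ : Fin n => gaussRegLaw d PX f₀ v.toNNReal) with hQ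
  let R : (Fin n → (Fin d → ℝ) × ℝ) → ((ParamIdx d r L → ℝ) × ℝ) → ℝ≥0∞ := fun D p =>
    ∏ i, lrat f₀ v (fun x => trunc F (netOfParams ν d r L p.1 x)) p.2 (D i)
  have hnet := measurable_trunc_net ν F d r L
  have hR : Measurable (Function.uncurry R) := by
    have : Function.uncurry R = fun q => ∏ i, lrat f₀ v
        (fun x => trunc F (netOfParams ν d r L q.2.1 x)) q.2.2 (q.1 i) := by
      ext q; rfl
    rw [this]
    refine Finset.measurable_prod _ fun i _ => ?_
    unfold lrat
    refine Measurable.div (ENNReal.measurable_ofReal.comp ?_) (ENNReal.measurable_ofReal.comp ?_)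
    · have h1 : Measurable fun q : (Fin n → (Fin d → ℝ) × ℝ) × ((ParamIdx d r L → ℝ) × ℝ) =>
          trunc F (netOfParams ν d r L q.2.1 (q.1 i).1) :=
        hnet.comp (f := fun q : (Fin n → (Fin d → ℝ) × ℝ) × ((ParamIdx d r L → ℝ) × ℝ) =>
          (q.2.1, (q.1 i).1)) (by fun_prop)
      have h2 : Measurable fun q : (Fin n → (Fin d → ℝ) × ℝ) × ((ParamIdx d r L → ℝ) × ℝ) =>
          (q.2.2, (q.1 i).2) := by fun_prop
      exact measurable_gpdf.comp (h1.prodMk h2)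
    · exact measurable_gpdf.comp
        (f := fun q : (Fin n → (Fin d → ℝ) × ℝ) × ((ParamIdx d r L → ℝ) × ℝ) =>
          (f₀ (q.1 i).1, v, (q.1 i).2)) (by fun_prop)
  have hg : ∀ θ : ParamIdx d r L → ℝ, Measurable fun x => trunc F (netOfParams ν d r L θ x) :=
    fun θ => hnet.comp (f := fun x => (θ, x)) (by fun_prop)
  have hBne : Pr B ≠ 0 := by
    intro h
    rw [h] at hB
    simp at hB
    linarith
  have key := post_bound Q Pr R hR A B hBne Φ hΦ (ENNReal.ofReal τ)
    (ENNReal.ofReal (Real.exp (n * (b₁ / 2 + b / v)))) hA (by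
      intro p hp
      have hs := (hBs p hp).1
      have e : ∀ D, (R D p)⁻¹ = ∏ i,
          (lrat f₀ v (fun x => trunc F (netOfParams ν d r L p.1 x)) p.2 (D i))⁻¹ := fun D =>
        ENNReal.prod_inv_distrib (fun i _ j _ _ => Or.inl (lrat_ne_zero (hv.trans_le hs) _))
      simp_rw [e]
      rw [hQ, lintegral_pi_prod _ n (fun z =>
        (lrat f₀ v (fun x => trunc F (netOfParams ν d r L p.1 x)) p.2 z)⁻¹)
        (measurable_lrat hf₀ (hg p.1) v p.2).inv]
      rw [Real.exp_nat_mul, ENNReal.ofReal_pow (Real.exp_pos _).le]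
      gcongr
      refine (chi_bound PX f₀ hv hs (hBf p hp)).trans (ENNReal.ofReal_le_ofReal ?_)
      gcongr
      exact (hBs p hp).2) (by simp [Real.exp_pos]) ENNReal.ofReal_ne_top
    (ENNReal.ofReal (Real.exp κ)) (ENNReal.ofReal δ) (by simp [Real.exp_pos])
    ENNReal.ofReal_ne_top (by simpa using hδ) ENNReal.ofReal_ne_top
  refine (measure_mono ?_).trans (key.trans ?_)
  · intro D hD
    simp only [Set.mem_setOf_eq] at hD ⊢
    let W : ℝ≥0∞ := ∏ i, ENNReal.ofReal (gpdf (f₀ (D i).1) v (D i).2)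
    have hW0 : W ≠ 0 := Finset.prod_ne_zero_iff.2 fun i _ => by
      simpa using gpdf_pos (f₀ (D i).1) (D i).2 hv
    have hWt : W ≠ ∞ := ENNReal.prod_ne_top fun i _ => ENNReal.ofReal_ne_top
    have e : ∀ p, ENNReal.ofReal (gaussLik ν F d r L D p) = W * R D p := by
      intro p
      unfold gaussLik
      rw [ENNReal.ofReal_prod_of_nonneg (fun i _ => gpdf_nonneg _ _ _), ← Finset.prod_mul_distrib]
      refine Finset.prod_congr rfl fun i _ => ?_
      unfold lrat
      rw [ENNReal.mul_div_cancel (by simpa using gpdf_pos (f₀ (D i).1) (D i).2 hv)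
        ENNReal.ofReal_ne_top]
    have hRD : Measurable (R D) := hR.comp (f := fun p => (D, p)) (by fun_prop)
    unfold postMass at hD
    simp_rw [e] at hD
    rw [lintegral_const_mul _ hRD, lintegral_const_mul _ hRD,
      ENNReal.mul_div_mul_left _ _ hW0 hWt] at hD
    exact ENNReal.mul_le_of_le_div hD.le
  · gcongr
    · rw [← ENNReal.ofReal_inv_of_pos (Real.exp_pos _), ← Real.exp_neg]
    · rw [ENNReal.ofReal_div_of_pos (by positivity), ENNReal.ofReal_mul hτ, ENNReal.ofReal_mul hδ.le,
        Real.exp_add, ENNReal.ofReal_mul (Real.exp_pos _).le]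
      gcongr

/-- The main part of the effective dimension. -/
def xrate (β : ℝ) (d n : ℕ) : ℝ := (n : ℝ) ^ ((d : ℝ) / (2 * β + d))

/-- The rate without logarithms. -/
def erate (β : ℝ) (d n : ℕ) : ℝ := (n : ℝ) ^ (-(β / (2 * β + d)))

/-- The effective dimension. -/
def krate (β : ℝ) (d n : ℕ) : ℝ := xrate β d n * Real.log n ^ 3

lemma card_ParamIdx_le (d r L : ℕ) :
    (Fintype.card (ParamIdx d r L) : ℝ) ≤ (L + 1) * (r + d + 1 : ℝ) ^ 2 := by
  have h1 : Fintype.card (ParamIdx d r L) =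
      r * d + (r + ((L - 1) * (r * r) + ((L - 1) * r + (r + 1)))) := by
    simp [ParamIdx, Fintype.card_sum, Fintype.card_prod]
  have h2 : Fintype.card (ParamIdx d r L) ≤ (L + 1) * (r + d + 1) ^ 2 := by
    rw [h1]
    have h3 : L - 1 ≤ L := Nat.sub_le _ _
    have h4 : (L - 1) * (r * r) ≤ L * (r * r) := Nat.mul_le_mul_right _ h3
    have h5 : (L - 1) * r ≤ L * r := Nat.mul_le_mul_right _ h3
    have h6 : L * (r * r) + L * r ≤ L * (r + d + 1) ^ 2 := by
      rw [← mul_add]; exact Nat.mul_le_mul_left _ (by nlinarith)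
    have h7 : (L + 1) * (r + d + 1) ^ 2 = L * (r + d + 1) ^ 2 + (r + d + 1) ^ 2 := by ring
    rw [h7]
    nlinarith
  exact_mod_cast h2

lemma one_le_log {n : ℕ} (hn : 3 ≤ n) : 1 ≤ Real.log n := by
  have h3 : (3 : ℝ) ≤ n := by exact_mod_cast hn
  rw [Real.le_log_iff_exp_le (by linarith)]
  linarith [Real.exp_one_lt_d9]

lemma rates_basic {β : ℝ} (hβ : 0 < β) {d : ℕ} (hd : 0 < d) {n : ℕ} (hn : 3 ≤ n) :
    1 ≤ xrate β d n ∧ xrate β d n ≤ n ∧ 0 < erate β d n ∧ erate β d n ≤ 1 ∧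
    1 / (n : ℝ) ≤ erate β d n ∧ n * erate β d n ^ 2 = xrate β d n ∧
    1 ≤ krate β d n ∧ xrate β d n ≤ krate β d n ∧ Real.log n ≤ krate β d n := by
  have hn1 : (1 : ℝ) ≤ n := by exact_mod_cast (by omega : 1 ≤ n)
  have hn0 : (0 : ℝ) < n := by linarith
  have hd' : (0 : ℝ) < d := by exact_mod_cast hd
  have hs : 0 < 2 * β + d := by positivity
  have hl := one_le_log hn
  have hx1 : 1 ≤ xrate β d n := Real.one_le_rpow hn1 (by positivity)
  have hl3 : Real.log n ≤ Real.log n ^ 3 := by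
    have h2 : 1 ≤ Real.log n ^ 2 := one_le_pow₀ hl
    nlinarith
  have hl31 : 1 ≤ Real.log n ^ 3 := one_le_pow₀ hl
  refine ⟨hx1, ?_, Real.rpow_pos_of_pos hn0 _, Real.rpow_le_one_of_one_le_of_nonpos hn1 ?_,
    ?_, ?_, ?_, ?_, ?_⟩
  · calc xrate β d n ≤ (n : ℝ) ^ (1 : ℝ) := Real.rpow_le_rpow_of_exponent_le hn1 (by
          rw [div_le_one hs]; linarith)
      _ = n := Real.rpow_one _
  · have : 0 ≤ β / (2 * β + d) := by positivity
    linarith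
  · rw [one_div, ← Real.rpow_neg_one]
    refine Real.rpow_le_rpow_of_exponent_le hn1 ?_
    have : β / (2 * β + d) ≤ 1 := by rw [div_le_one hs]; linarith
    linarith
  · unfold erate xrate
    rw [← Real.rpow_natCast, ← Real.rpow_mul hn0.le]
    nth_rewrite 1 [← Real.rpow_one (n : ℝ)]
    rw [← Real.rpow_add hn0]
    congr 1
    push_cast
    field_simp
    ring
  · unfold krate; nlinarith
  · unfold krate; nlinarith
  · unfold krate; nlinarith

lemma sizes {β : ℝ} (hβ : 0 < β) {d : ℕ} (hd : 0 < d) {CL Cr : ℝ} (hCL : 0 < CL) (hCr : 0 < Cr) :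
    ∃ C : ℝ, 1 ≤ C ∧ ∀ n : ℕ, 3 ≤ n →
      1 ≤ Ldepth CL n ∧ 1 ≤ rwidth Cr β d n ∧
      (Ldepth CL n + 1 : ℝ) ≤ C * Real.log n ∧
      (rwidth Cr β d n + d + 1 : ℝ) ^ 2 ≤ C * xrate β d n ∧
      (Fintype.card (ParamIdx d (rwidth Cr β d n) (Ldepth CL n)) : ℝ) ≤
        C * (xrate β d n * Real.log n) := by
  set C₁ := CL + 2 with hC₁
  set W := Cr + d + 2 with hW
  have hd0 : (0 : ℝ) ≤ d := Nat.cast_nonneg d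
  refine ⟨C₁ * W ^ 2, ?_, fun n hn => ?_⟩
  · have : 1 ≤ W ^ 2 := one_le_pow₀ (by linarith)
    nlinarith
  obtain ⟨hx1, hxn, he0, he1, hen, hne, hk1, hkx, hkl⟩ := rates_basic hβ hd hn
  have hl := one_le_log hn
  have hn1 : (1 : ℝ) ≤ n := by exact_mod_cast (by omega : 1 ≤ n)
  have hn0 : (0 : ℝ) < n := by linarith
  have hd' : (0 : ℝ) < d := by exact_mod_cast hd
  have hs : 0 < 2 * β + d := by positivity
  set y : ℝ := (n : ℝ) ^ ((d : ℝ) / (2 * (2 * β + d))) with hy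
  have hy1 : 1 ≤ y := Real.one_le_rpow hn1 (by positivity)
  have hyx : y ^ 2 = xrate β d n := by
    rw [hy, ← Real.rpow_natCast, ← Real.rpow_mul hn0.le]
    unfold xrate
    congr 1
    push_cast
    field_simp
  have hW1 : 1 ≤ W ^ 2 := one_le_pow₀ (by linarith)
  have hL : (Ldepth CL n + 1 : ℝ) ≤ C₁ * Real.log n := by
    have := (Nat.ceil_lt_add_one (by positivity : 0 ≤ CL * Real.log n)).le
    unfold Ldepth
    nlinarith
  have hr : (rwidth Cr β d n + d + 1 : ℝ) ≤ W * y := by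
    have := (Nat.ceil_lt_add_one (by positivity : 0 ≤ Cr * y)).le
    unfold rwidth
    nlinarith
  have hr2 : (rwidth Cr β d n + d + 1 : ℝ) ^ 2 ≤ W ^ 2 * xrate β d n := by
    rw [← hyx, ← mul_pow]
    gcongr
  refine ⟨?_, ?_, ?_, ?_, ?_⟩
  · exact Nat.one_le_ceil_iff.2 (by positivity)
  · exact Nat.one_le_ceil_iff.2 (by positivity)
  · refine hL.trans ?_
    gcongr
    exact le_mul_of_one_le_right (by positivity) hW1
  · refine hr2.trans ?_
    gcongr
    exact le_mul_of_one_le_left (by positivity) (by linarith)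
  · refine (card_ParamIdx_le _ _ _).trans ?_
    calc _ ≤ (C₁ * Real.log n) * (W ^ 2 * xrate β d n) := by gcongr
      _ = _ := by ring

lemma cover_num {n T r J L d : ℕ} {C x : ℝ} (hn3 : 3 ≤ n) (hC1 : 1 ≤ C) (hx1 : 1 ≤ x) (hxn : x ≤ n)
    (hnC : C ≤ n) (hJ : (J : ℝ) ≤ (n : ℝ) ^ 2) (hL : (L + 1 : ℝ) ≤ C * Real.log n)
    (hr : (r + d + 1 : ℝ) ^ 2 ≤ C * x) (hT : (T : ℝ) ≤ C * (x * Real.log n)) :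
    ((warrenB T (n ^ 7 * (r + J)) (L + 1) ^ (L + 1) : ℕ) : ℝ) ≤
      Real.exp (16 * C ^ 2 * (x * Real.log n ^ 3)) := by
  have hl := one_le_log hn3
  have hn3' : (3 : ℝ) ≤ n := by exact_mod_cast hn3
  have hn0 : (0 : ℝ) < n := by linarith
  have hln : Real.log n ≤ n := (Real.log_le_sub_one_of_pos hn0).trans (by linarith)
  have hL' : (L + 1 : ℝ) ≤ (n : ℝ) ^ 2 := hL.trans (by
    rw [sq]; gcongr)
  have hr' : (r : ℝ) ≤ (n : ℝ) ^ 2 := by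
    have hr0 : (0 : ℝ) ≤ r := Nat.cast_nonneg _
    have hd0 : (0 : ℝ) ≤ d := Nat.cast_nonneg _
    have h1 : (r : ℝ) ≤ (r + d + 1 : ℝ) ^ 2 := by nlinarith
    calc _ ≤ _ := h1
      _ ≤ _ := hr
      _ ≤ n * n := by gcongr
      _ = _ := by ring
  have hT' : (T : ℝ) ≤ (n : ℝ) ^ 3 := by
    calc _ ≤ _ := hT
      _ ≤ n * (n * n) := by gcongr
      _ = _ := by ring
  have e1 : ((warrenB T (n ^ 7 * (r + J)) (L + 1) ^ (L + 1) : ℕ) : ℝ) =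
      ((T : ℝ) * ((n : ℝ) ^ 7 * (r + J) * (L + 1) + 2) + 1) ^ (T * (L + 1)) := by
    unfold warrenB
    rw [← pow_mul]
    simp only [Nat.cast_pow, Nat.cast_add, Nat.cast_mul, Nat.cast_one, Nat.cast_ofNat]
  rw [e1]
  generalize (n : ℝ) = z at *
  have hbase : (T : ℝ) * (z ^ 7 * (r + J) * (L + 1) + 2) + 1 ≤ z ^ 16 := by
    calc (T : ℝ) * (z ^ 7 * (r + J) * (L + 1) + 2) + 1
        ≤ z ^ 3 * (z ^ 7 * (z ^ 2 + z ^ 2) * z ^ 2 + 2) + 1 := by gcongr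
      _ = 2 * z ^ 14 + 2 * z ^ 3 + 1 := by ring
      _ ≤ 9 * z ^ 14 := by
          have h1 : z ^ 3 ≤ z ^ 14 := pow_le_pow_right₀ (by linarith) (by norm_num)
          have h2 : 1 ≤ z ^ 14 := one_le_pow₀ (by linarith)
          linarith
      _ ≤ z ^ 2 * z ^ 14 := by gcongr; nlinarith
      _ = _ := by ring
  have e2 : z ^ 16 = Real.exp (16 * Real.log z) := by
    rw [mul_comm, Real.exp_mul, Real.exp_log hn0]; norm_cast
  calc _ ≤ (Real.exp (16 * Real.log z)) ^ (T * (L + 1)) := by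
        rw [← e2]; gcongr
    _ = Real.exp ((T * (L + 1) : ℝ) * (16 * Real.log z)) := by
        rw [← Real.exp_nat_mul]; push_cast; rfl
    _ ≤ _ := by
        apply Real.exp_le_exp.2
        calc (T * (L + 1) : ℝ) * (16 * Real.log z)
            ≤ (C * (x * Real.log z)) * (C * Real.log z) * (16 * Real.log z) := by gcongr
          _ = _ := by ring

/-- Covering numbers of the sieve. -/
lemma cover_rate {β : ℝ} (hβ : 0 < β) {d : ℕ} (hd : 0 < d) {CL Cr : ℝ} (hCL : 0 < CL)
    (hCr : 0 < Cr) {ν F c' : ℝ} (hν1 : ν < 1) (hF : 1 ≤ F) (hc' : 0 < c')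
    (PX : Measure (Fin d → ℝ)) [IsProbabilityMeasure PX] :
    ∃ C : ℝ, 0 < C ∧ ∃ n₀ : ℕ, ∀ n : ℕ, n₀ ≤ n → ∀ e : ℝ, erate β d n ≤ e →
      ∃ S : Finset (ParamIdx d (rwidth Cr β d n) (Ldepth CL n) → ℝ),
        (S.card : ℝ) ≤ Real.exp (C * krate β d n) ∧ ∀ θ, ∃ s ∈ S,
          ∫ x, (trunc F (netOfParams ν d (rwidth Cr β d n) (Ldepth CL n) θ x) -
            trunc F (netOfParams ν d (rwidth Cr β d n) (Ldepth CL n) s x)) ^ 2 ∂PX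
            ≤ (c' * e) ^ 2 := by
  obtain ⟨C, hC1, hsz⟩ := sizes hβ hd hCL hCr
  set Z : ℝ := max C (max (4 * F / c' + 1) (32 * (16 * C ^ 2 + 1) * F ^ 2 / (3 * c' ^ 2) + 1)) with hZ
  obtain ⟨n₁, hn₁⟩ := exists_nat_gt Z
  refine ⟨16 * C ^ 2, by positivity, max 3 n₁, fun n hn e he => ?_⟩
  have hn3 : 3 ≤ n := (le_max_left _ _).trans hn
  have hnZ : Z < n := hn₁.trans_le (by exact_mod_cast (le_max_right _ _).trans hn)
  obtain ⟨hx1, hxn, he0, he1, hen, hne, hk1, hkx, hkl⟩ := rates_basic hβ hd hn3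
  obtain ⟨hL1, hr1, hL, hr, hT⟩ := hsz n hn3
  generalize hLdef : Ldepth CL n = L at *
  generalize hrdef : rwidth Cr β d n = r at *
  have hl := one_le_log hn3
  have hn3' : (3 : ℝ) ≤ n := by exact_mod_cast hn3
  have hn0 : (0 : ℝ) < n := by linarith
  have hnC : C ≤ n := (le_max_left _ _).trans hnZ.le
  have hnJ : 4 * F / c' + 1 ≤ n := ((le_max_left _ _).trans (le_max_right _ _)).trans hnZ.le
  have hnK : 32 * (16 * C ^ 2 + 1) * F ^ 2 / (3 * c' ^ 2) < n :=
    lt_of_lt_of_le (lt_add_one _)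
    (((le_max_right _ _).trans (le_max_right _ _)).trans hnZ.le)
  have hln : Real.log n ≤ n := (Real.log_le_sub_one_of_pos hn0).trans (by linarith)
  have he0' : 0 < e := he0.trans_le he
  have hen' := hen.trans he
  -- numeric bounds
  obtain ⟨J, hJdef⟩ : ∃ J : ℕ, J = ⌈4 * F / (c' * e)⌉₊ := ⟨_, rfl⟩
  have hJ : (J : ℝ) ≤ (n : ℝ) ^ 2 := by
    have h1 : (J : ℝ) ≤ 4 * F / (c' * e) + 1 := by
      rw [hJdef]; exact (Nat.ceil_lt_add_one (by positivity)).le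
    have h2 : 1 / e ≤ n := by
      rw [one_div]
      have := inv_anti₀ (by positivity) hen'
      simpa using this
    have h3 : 4 * F / (c' * e) = 4 * F / c' * (1 / e) := by field_simp
    rw [h3] at h1
    have h4 : 0 ≤ 4 * F / c' := by positivity
    have h5 : 4 * F / c' * (1 / e) ≤ 4 * F / c' * n := mul_le_mul_of_nonneg_left h2 h4
    nlinarith only [h1, h5, hnJ, hn3']
  have hJ2 : 2 * F ≤ J * (c' * e / 2) := by
    have h1 : 4 * F / (c' * e) ≤ J := by rw [hJdef]; exact Nat.le_ceil _
    rw [div_le_iff₀ (by positivity)] at h1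
    linarith only [h1]
  have hNexp := cover_num hn3 hC1 hx1 hxn hnC hJ hL hr hT
  have hk4 : krate β d n ≤ (n : ℝ) ^ 4 := by
    unfold krate
    calc _ ≤ (n : ℝ) * (n : ℝ) ^ 3 := by gcongr
      _ = _ := by ring
  obtain ⟨S, hS, hS'⟩ := packing_net (η := c' * e) (F := F) PX
    (fun (θ : ParamIdx d r L → ℝ) x => trunc F (netOfParams ν d r L θ x))
    (fun θ => (measurable_trunc_net ν F d r L).comp (f := fun x => (θ, x)) (by fun_prop))
    (by linarith only [hF]) (fun θ x => trunc_abs (by linarith only [hF]) _) (n ^ 7)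
    (warrenB (Fintype.card (ParamIdx d r L)) (n ^ 7 * (r + J)) (L + 1) ^ (L + 1))
    (fun x => net_cover hν1 (by linarith only [hF]) (by positivity) hL1 hJ2 x) (by
      generalize warrenB (Fintype.card (ParamIdx d r L)) (n ^ 7 * (r + J)) (L + 1) ^ (L + 1) = N at *
      have h1 : Real.log (N + 1) ≤ (16 * C ^ 2 + 1) * krate β d n := by
        rw [Real.log_le_iff_le_exp (by positivity), add_mul, one_mul, Real.exp_add]
        have h2 : 1 ≤ Real.exp (16 * C ^ 2 * krate β d n) := Real.one_le_exp (by positivity)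
        have h3 : 2 ≤ Real.exp (krate β d n) := by
          linarith only [Real.add_one_le_exp (krate β d n), hk1]
        have h4 : (N : ℝ) ≤ Real.exp (16 * C ^ 2 * krate β d n) := hNexp
        nlinarith only [h2, h3, h4]
      have h5 : 1 ≤ (e * n) := by
        rw [div_le_iff₀ hn0] at hen'; exact hen'
      have h6 : 1 ≤ (e * n) ^ 2 := one_le_pow₀ h5
      rw [div_lt_iff₀ (by positivity)] at hnK
      calc 2 * Real.log (N + 1) ≤ 2 * ((16 * C ^ 2 + 1) * (n : ℝ) ^ 4) := by
            have := mul_le_mul_of_nonneg_left hk4 (by positivity : 0 ≤ 16 * C ^ 2 + 1)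
            linarith only [this, h1]
        _ < 3 * c' ^ 2 * (n : ℝ) ^ 5 / (16 * F ^ 2) := by
            rw [lt_div_iff₀ (by positivity)]
            have := mul_lt_mul_of_pos_right hnK (by positivity : 0 < (n : ℝ) ^ 4)
            nlinarith only [this]
        _ ≤ 3 * c' ^ 2 * ((n : ℝ) ^ 5 * (e * n) ^ 2) / (16 * F ^ 2) := by
            gcongr
            exact le_mul_of_one_le_right (by positivity) h6
        _ = _ := by push_cast; ring)
  refine ⟨S, ?_, hS'⟩
  calc (S.card : ℝ) ≤ _ := by exact_mod_cast hS
    _ ≤ _ := hNexp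

lemma rho_low {n r L d : ℕ} {C x e a κ₀ : ℝ} (hn3 : 3 ≤ n) (hC1 : 1 ≤ C) (hx1 : 1 ≤ x)
    (hxn : x ≤ n) (hnC : C ≤ n) (hna : a ≤ n) (hnκ : κ₀ ≤ n) (ha : 1 ≤ a) (hκ : 1 ≤ κ₀)
    (he : 1 / (n : ℝ) ≤ e) (hL : (L + 1 : ℝ) ≤ C * Real.log n)
    (hr : (r + d + 1 : ℝ) ^ 2 ≤ C * x) :
    Real.exp (-((4 + 3 * C) * Real.log n ^ 2)) ≤
      e / (a * (L + 1) * (κ₀ * (r + d + 1)) ^ (L + 1)) := by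
  have hl := one_le_log hn3
  have hn3' : (3 : ℝ) ≤ n := by exact_mod_cast hn3
  have hn0 : (0 : ℝ) < n := by linarith
  have hln : Real.log n ≤ n := (Real.log_le_sub_one_of_pos hn0).trans (by linarith)
  have hL' : (L + 1 : ℝ) ≤ (n : ℝ) ^ 2 := hL.trans (by
    rw [sq]; gcongr)
  have hr' : (r + d + 1 : ℝ) ≤ (n : ℝ) ^ 2 := by
    have hr0 : (0 : ℝ) ≤ r := Nat.cast_nonneg _
    have hd0 : (0 : ℝ) ≤ d := Nat.cast_nonneg _
    have h1 : (r + d + 1 : ℝ) ≤ (r + d + 1 : ℝ) ^ 2 := by nlinarith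
    calc _ ≤ _ := h1
      _ ≤ _ := hr
      _ ≤ n * n := by gcongr
      _ = _ := by ring
  generalize (n : ℝ) = z at *
  have h1 : a * (L + 1) * (κ₀ * (r + d + 1)) ^ (L + 1) ≤ z * z ^ 2 * (z * z ^ 2) ^ (L + 1) := by
    gcongr
  have h2 : Real.exp (-((4 + 3 * C) * Real.log z ^ 2)) ≤ Real.exp (-((4 + 3 * (L + 1)) * Real.log z)) := by
    apply Real.exp_le_exp.2
    have : (4 + 3 * (L + 1 : ℝ)) ≤ (4 + 3 * C) * Real.log z := by nlinarith only [hL, hl]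
    have := mul_le_mul_of_nonneg_right this (by linarith only [hl] : 0 ≤ Real.log z)
    nlinarith only [this]
  have h3 : Real.exp (-((4 + 3 * (L + 1)) * Real.log z)) =
      (1 / z) / (z * z ^ 2 * (z * z ^ 2) ^ (L + 1)) := by
    rw [Real.exp_neg, mul_comm, Real.exp_mul, Real.exp_log hn0]
    have : z ^ (4 + 3 * (L + 1 : ℝ)) = z ^ (4 + 3 * (L + 1)) := by
      rw [← Real.rpow_natCast]; push_cast; rfl
    rw [this, div_div, one_div]
    congr 1
    rw [pow_add, pow_mul]
    ring
  refine h2.trans (h3.le.trans ?_)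
  have he0 : 0 ≤ e := le_trans (by positivity) he
  gcongr

lemma approx_theta {a : ℝ} {d : ℕ} (hd : 0 < d) {β K F : ℝ} (hβ : 0 < β) (hF : 1 ≤ F)
    {ν : ℝ} (hν1 : ν < 1)
    (f₀ : (Fin d → ℝ) → ℝ) (hf₀ : memHolder a d β K f₀) (hf₀bd : ∀ x, |f₀ x| ≤ F)
    (CL Cr CB c₁ : ℝ) (hCL : 0 < CL) (hCr : 0 < Cr) (hCB : 0 < CB) (hc₁ : 0 < c₁)
    (happrox : ∀ f : (Fin d → ℝ) → ℝ, memHolder a d β K f →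
      ∃ M₀ : ℕ, ∀ M : ℕ, M₀ ≤ M →
        ∃ g : (Fin d → ℝ) → ℝ,
          memDNN ν d ⌈CL * Real.logb 2 M⌉₊ ⌈Cr * (M : ℝ) ^ d⌉₊ CB g ∧
          ∀ x ∈ cube a d, |g x - f x| ≤ c₁ / (M : ℝ) ^ (2 * β)) :
    ∃ n₀ : ℕ, ∀ n : ℕ, n₀ ≤ n →
      ∃ θ : ParamIdx d (rwidth Cr β d n) (Ldepth CL n) → ℝ,
        (∀ i, |θ i| ≤ CB + (F + c₁) + 1) ∧ ∀ x ∈ cube a d,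
          |netOfParams ν d (rwidth Cr β d n) (Ldepth CL n) θ x - f₀ x| ≤
            c₁ * 2 ^ (2 * β) * erate β d n := by
  obtain ⟨M₀, hM₀⟩ := happrox f₀ hf₀
  have hd' : (0 : ℝ) < d := by exact_mod_cast hd
  have hd1 : (1 : ℝ) ≤ d := by exact_mod_cast hd
  have hs : 0 < 2 * β + d := by positivity
  have htend : Tendsto (fun n : ℕ => ⌊(n : ℝ) ^ (1 / (2 * (2 * β + d)))⌋₊) atTop atTop :=
    tendsto_nat_floor_atTop.comp
      ((tendsto_rpow_atTop (by positivity)).comp tendsto_natCast_atTop_atTop)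
  obtain ⟨n₁, hn₁⟩ := eventually_atTop.1 (htend.eventually (eventually_ge_atTop M₀))
  refine ⟨max 3 n₁, fun n hn => ?_⟩
  have hn3 : 3 ≤ n := (le_max_left _ _).trans hn
  have hM := hn₁ n ((le_max_right _ _).trans hn)
  have hl := one_le_log hn3
  have hn3' : (3 : ℝ) ≤ n := by exact_mod_cast hn3
  have hn0 : (0 : ℝ) < n := by linarith
  set u : ℝ := (n : ℝ) ^ (1 / (2 * (2 * β + d))) with hu
  have hu1 : 1 ≤ u := Real.one_le_rpow (by linarith) (by positivity)
  obtain ⟨M, hMdef⟩ : ∃ M : ℕ, M = ⌊u⌋₊ := ⟨_, rfl⟩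
  rw [← hMdef] at hM
  have hM1 : 1 ≤ M := by rw [hMdef]; exact (Nat.one_le_floor_iff _).2 hu1
  have hM1' : (1 : ℝ) ≤ M := by exact_mod_cast hM1
  have hMu : (M : ℝ) ≤ u := by rw [hMdef]; exact Nat.floor_le (by linarith)
  have huM : u / 2 ≤ M := by
    have : u < M + 1 := by rw [hMdef]; exact Nat.lt_floor_add_one u
    linarith
  obtain ⟨g, ⟨net, hlen, hbd, hnet⟩, hg⟩ := hM₀ M hM
  have hdepth : ⌈CL * Real.logb 2 M⌉₊ ≤ Ldepth CL n := by
    unfold Ldepth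
    refine Nat.ceil_mono (mul_le_mul_of_nonneg_left ?_ hCL.le)
    have h1 : Real.log M ≤ 1 / (2 * (2 * β + d)) * Real.log n := by
      rw [← Real.log_rpow hn0]
      exact Real.log_le_log (by linarith) hMu
    have h2 : (1 : ℝ) / (2 * (2 * β + d)) ≤ 1 / 2 := by
      apply one_div_le_one_div_of_le (by norm_num); linarith
    have h3 := Real.log_two_gt_d9
    rw [Real.logb, div_le_iff₀ (by linarith)]
    nlinarith
  have hwidth : ⌈Cr * (M : ℝ) ^ d⌉₊ ≤ rwidth Cr β d n := by
    unfold rwidth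
    refine Nat.ceil_mono (mul_le_mul_of_nonneg_left ?_ hCr.le)
    calc (M : ℝ) ^ d ≤ u ^ d := by gcongr
      _ = _ := by
          rw [hu, ← Real.rpow_natCast, ← Real.rpow_mul hn0.le]
          congr 1
          field_simp
  have hr1 : 1 ≤ rwidth Cr β d n := Nat.one_le_ceil_iff.2 (by positivity)
  obtain ⟨θ, hθ, hθe⟩ := exists_theta hν1 hwidth hr1 hCB.le (by linarith : 0 ≤ F + c₁) net hbd
    (hlen.le.trans hdepth)
  refine ⟨θ, hθ, fun x hx => ?_⟩
  have h1 := hg x hx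
  rw [hnet] at h1
  have hMp : 1 ≤ (M : ℝ) ^ (2 * β) := Real.one_le_rpow hM1' (by positivity)
  have h2 : |net.eval ν x - f₀ x| ≤ c₁ := h1.trans (div_le_self hc₁.le hMp)
  have h3 : |net.eval ν x| ≤ F + c₁ := by
    have := abs_add_le (f₀ x) (net.eval ν x - f₀ x)
    rw [add_sub_cancel] at this
    linarith [hf₀bd x]
  rw [hθe x h3]
  refine h1.trans ?_
  have h4 : u ^ (2 * β) * erate β d n = 1 := by
    unfold erate
    rw [hu, ← Real.rpow_mul hn0.le, ← Real.rpow_add hn0]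
    have : 1 / (2 * (2 * β + (d : ℝ))) * (2 * β) + -(β / (2 * β + d)) = 0 := by field_simp; ring
    rw [this, Real.rpow_zero]
  have h5 : u ^ (2 * β) ≤ 2 ^ (2 * β) * (M : ℝ) ^ (2 * β) := by
    rw [← Real.mul_rpow (by norm_num) (by linarith)]
    exact Real.rpow_le_rpow (by linarith) (by linarith) (by linarith)
  have he0 : 0 < erate β d n := Real.rpow_pos_of_pos hn0 _
  rw [div_le_iff₀ (by positivity), mul_assoc, mul_assoc]
  refine le_mul_of_one_le_right hc₁.le ?_
  calc 1 = u ^ (2 * β) * erate β d n := h4.symm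
    _ ≤ 2 ^ (2 * β) * (M : ℝ) ^ (2 * β) * erate β d n := by gcongr
    _ = _ := by ring

lemma tendsto_erate {β : ℝ} (hβ : 0 < β) {d : ℕ} (hd : 0 < d) :
    Tendsto (fun n : ℕ => erate β d n) atTop (nhds 0) := by
  have hd' : (0 : ℝ) < d := by exact_mod_cast hd
  exact (tendsto_rpow_neg_atTop (by positivity)).comp tendsto_natCast_atTop_atTop

lemma prior_mass {a : ℝ} (ha : 1 ≤ a) {d : ℕ} (hd : 0 < d) {β K F : ℝ} (hβ : 0 < β) (hF : 1 ≤ F)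
    {ν : ℝ} (hν0 : 0 ≤ ν) (hν1 : ν < 1) {v : ℝ} (hv : 0 < v)
    (f₀ : (Fin d → ℝ) → ℝ) (hf₀ : memHolder a d β K f₀) (hf₀bd : ∀ x, |f₀ x| ≤ F)
    (CL Cr CB c₁ : ℝ) (hCL : 0 < CL) (hCr : 0 < Cr) (hCB : 0 < CB) (hc₁ : 0 < c₁)
    (happrox : ∀ f : (Fin d → ℝ) → ℝ, memHolder a d β K f →
      ∃ M₀ : ℕ, ∀ M : ℕ, M₀ ≤ M →
        ∃ g : (Fin d → ℝ) → ℝ,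
          memDNN ν d ⌈CL * Real.logb 2 M⌉₊ ⌈Cr * (M : ℝ) ^ d⌉₊ CB g ∧
          ∀ x ∈ cube a d, |g x - f x| ≤ c₁ / (M : ℝ) ^ (2 * β))
    (Prθ : ∀ n : ℕ, Measure (ParamIdx d (rwidth Cr β d n) (Ldepth CL n) → ℝ))
    [∀ n, IsProbabilityMeasure (Prθ n)]
    (πθ : ∀ n : ℕ, (ParamIdx d (rwidth Cr β d n) (Ldepth CL n) → ℝ) → ℝ)
    (hπθdens : ∀ n, Prθ n = volume.withDensity fun θ => ENNReal.ofReal (πθ n θ))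
    (hπθlow : ∀ κ : ℝ, 0 < κ → ∃ δκ : ℝ, 0 < δκ ∧
      ∀ n : ℕ, ∀ θ : ParamIdx d (rwidth Cr β d n) (Ldepth CL n) → ℝ,
        (∀ i, |θ i| ≤ κ) →
          δκ ^ Fintype.card (ParamIdx d (rwidth Cr β d n) (Ldepth CL n)) ≤ πθ n θ)
    (Prσ : Measure ℝ) [IsProbabilityMeasure Prσ]
    (qσ : ℝ → ℝ)
    (hqσdens : Prσ = volume.withDensity fun s => ENNReal.ofReal (qσ s))
    (hqσcont : ContinuousOn qσ (Set.Ioo 0 (2 * v)))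
    (hqσposOn : ∀ s ∈ Set.Ioo 0 (2 * v), 0 < qσ s) :
    ∃ C : ℝ, 0 < C ∧ ∃ n₀ : ℕ, ∀ n : ℕ, n₀ ≤ n →
      ∃ B : Set ((ParamIdx d (rwidth Cr β d n) (Ldepth CL n) → ℝ) × ℝ),
        ENNReal.ofReal (Real.exp (-(C * krate β d n))) ≤ ((Prθ n).prod Prσ) B ∧
        (∀ p ∈ B, v ≤ p.2 ∧ (p.2 / v - 1) ^ 2 ≤ erate β d n ^ 2) ∧
        ∀ p ∈ B, ∀ x ∈ cube a d,
          (trunc F (netOfParams ν d (rwidth Cr β d n) (Ldepth CL n) p.1 x) - f₀ x) ^ 2 ≤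
            (C * erate β d n) ^ 2 := by
  obtain ⟨C, hC1, hsz⟩ := sizes hβ hd hCL hCr
  obtain ⟨n₁, hn₁⟩ := approx_theta hd hβ hF hν1 f₀ hf₀ hf₀bd CL Cr CB c₁ hCL hCr hCB hc₁ happrox
  obtain ⟨cq, hcq, e₁, he₁, hsig⟩ := prior_sigma Prσ qσ hqσdens hv hqσcont hqσposOn
  set κ₀ : ℝ := CB + (F + c₁) + 2 with hκ₀
  have hκ₀1 : 1 ≤ κ₀ := by linarith
  obtain ⟨δ, hδ, hlow⟩ := hπθlow κ₀ (by linarith)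
  obtain ⟨n₂, hn₂⟩ := eventually_atTop.1
    ((tendsto_erate hβ hd).eventually (eventually_le_nhds he₁))
  obtain ⟨n₃, hn₃⟩ := exists_nat_gt (max C (max a κ₀))
  set C₂ : ℝ := |Real.log (2 * δ)| + (4 + 3 * C) with hC₂
  set Cf : ℝ := 1 + c₁ * 2 ^ (2 * β) with hCf
  have hCf0 : 0 < Cf := by positivity
  set Cm : ℝ := C₂ * C + |Real.log cq| + 1 with hCm
  have hC₂0 : 0 ≤ C₂ := by positivity
  have hCm0 : 0 < Cm := by positivity
  refine ⟨Cm + Cf, by positivity, max 3 (max n₁ (max n₂ n₃)), fun n hn => ?_⟩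
  simp only [max_le_iff] at hn
  obtain ⟨hn3, hnn1, hnn2, hnn3⟩ := hn
  have hnZ : max C (max a κ₀) < n := hn₃.trans_le (by exact_mod_cast hnn3)
  simp only [max_lt_iff] at hnZ
  obtain ⟨hx1, hxn, he0, he1, hen, hne, hk1, hkx, hkl⟩ := rates_basic hβ hd hn3
  obtain ⟨hL1, hr1, hL, hr, hT⟩ := hsz n hn3
  obtain ⟨θ₀, hθ₀, hθ₀f⟩ := hn₁ n hnn1
  have hlown := hlow n
  have hdn := hπθdens n
  have hsign := hsig _ he0 (hn₂ n hnn2)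
  have hρlow := rho_low (x := xrate β d n) hn3 hC1 hx1 hxn hnZ.1.le hnZ.2.1.le hnZ.2.2.le ha hκ₀1 hen hL hr
  have hl := one_le_log hn3
  have hn3' : (3 : ℝ) ≤ n := by exact_mod_cast hn3
  have hn0 : (0 : ℝ) < n := by linarith
  have hd0 : (0 : ℝ) ≤ d := Nat.cast_nonneg d
  clear hn₁ hn₂ hsig hlow hsz happrox
  have hprob : IsProbabilityMeasure (Prθ n) := inferInstance
  clear hπθdens hπθlow
  generalize πθ n = π at *
  generalize Prθ n = P at *
  generalize Ldepth CL n = L at *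
  generalize rwidth Cr β d n = r at *
  have hr0 : (0 : ℝ) ≤ r := Nat.cast_nonneg r
  set G : ℝ := a * (L + 1) * (κ₀ * (r + d + 1)) ^ (L + 1) with hG
  have hG1 : 1 ≤ G := by
    have h1 : 1 ≤ κ₀ * (r + d + 1) := one_le_mul_of_one_le_of_one_le hκ₀1 (by linarith only [hr0, hd0])
    have h2 : 1 ≤ (κ₀ * (r + d + 1)) ^ (L + 1) := one_le_pow₀ h1
    have h3 : (1 : ℝ) ≤ L + 1 := by
      have : (0 : ℝ) ≤ L := Nat.cast_nonneg L
      linarith only [this]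
    exact one_le_mul_of_one_le_of_one_le (one_le_mul_of_one_le_of_one_le ha h3) h2
  set ρ : ℝ := erate β d n / G with hρ
  have hρ0 : 0 < ρ := by positivity
  have hρ1 : ρ ≤ 1 := (div_le_self he0.le hG1).trans he1
  have hbox := prior_box P π hdn θ₀ hρ0.le hδ.le hlown
    (fun i => by have := hθ₀ i; linarith only [this, hρ1, hκ₀])
  refine ⟨Metric.closedBall θ₀ ρ ×ˢ Set.Icc v (v * (1 + erate β d n)), ?_, ?_, ?_⟩
  · rw [Measure.prod_prod]
    refine le_trans ?_ (mul_le_mul' hbox hsign)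
    rw [← ENNReal.ofReal_mul (by positivity)]
    refine ENNReal.ofReal_le_ofReal ?_
    have a1 : Real.exp (-(C₂ * Real.log n ^ 2)) ≤ δ * (2 * ρ) := by
      have b1 : Real.exp (-(|Real.log (2 * δ)| * Real.log n ^ 2)) ≤ 2 * δ := by
        conv_rhs => rw [← Real.exp_log (by positivity : 0 < 2 * δ)]
        apply Real.exp_le_exp.2
        have b2 : 1 ≤ Real.log n ^ 2 := one_le_pow₀ hl
        have b3 := neg_abs_le (Real.log (2 * δ))
        have b4 := abs_nonneg (Real.log (2 * δ))
        nlinarith only [b2, b3, b4]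
      calc Real.exp (-(C₂ * Real.log n ^ 2)) = Real.exp (-(|Real.log (2 * δ)| * Real.log n ^ 2)) *
            Real.exp (-((4 + 3 * C) * Real.log n ^ 2)) := by
            rw [← Real.exp_add]; congr 1; rw [hC₂]; ring
        _ ≤ (2 * δ) * ρ := by gcongr
        _ = _ := by ring
    have a2 : Real.exp (-(|Real.log cq| * Real.log n)) ≤ cq := by
      conv_rhs => rw [← Real.exp_log hcq]
      apply Real.exp_le_exp.2
      have b3 := neg_abs_le (Real.log cq)
      have b4 := abs_nonneg (Real.log cq)
      nlinarith only [hl, b3, b4]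
    have a3 : Real.exp (-Real.log n) ≤ erate β d n := by
      rw [Real.exp_neg, Real.exp_log hn0, ← one_div]; exact hen
    have a4 : Real.exp (-(C₂ * C * krate β d n)) ≤
        (δ * (2 * ρ)) ^ Fintype.card (ParamIdx d r L) := by
      calc Real.exp (-(C₂ * C * krate β d n)) ≤
            Real.exp (Fintype.card (ParamIdx d r L) * (-(C₂ * Real.log n ^ 2))) := by
            apply Real.exp_le_exp.2
            have := mul_le_mul_of_nonneg_right hT
              (by positivity : 0 ≤ C₂ * Real.log n ^ 2)
            have e : C * (xrate β d n * Real.log n) * (C₂ * Real.log n ^ 2) =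
              C₂ * C * krate β d n := by unfold krate; ring
            rw [e] at this
            linarith only [this]
        _ = Real.exp (-(C₂ * Real.log n ^ 2)) ^ Fintype.card (ParamIdx d r L) := by
            rw [Real.exp_nat_mul]
        _ ≤ _ := by gcongr
    calc Real.exp (-((Cm + Cf) * krate β d n)) ≤
          Real.exp (-(C₂ * C * krate β d n)) *
            (Real.exp (-(|Real.log cq| * Real.log n)) * Real.exp (-Real.log n)) := by
          rw [← Real.exp_add, ← Real.exp_add]
          apply Real.exp_le_exp.2
          have c1 := mul_le_mul_of_nonneg_left hkl (abs_nonneg (Real.log cq))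
          have c2 : 0 ≤ Cf * krate β d n := by positivity
          rw [hCm]
          linarith only [c1, c2, hkl]
      _ ≤ _ := by gcongr
  · rintro ⟨θ, s⟩ ⟨-, hs⟩
    simp only [Set.mem_Icc] at hs ⊢
    refine ⟨hs.1, ?_⟩
    have h1 : 1 ≤ s / v := by rw [le_div_iff₀ hv]; linarith only [hs.1]
    have h2 : s / v ≤ 1 + erate β d n := by rw [div_le_iff₀ hv]; linarith only [hs.2]
    exact pow_le_pow_left₀ (by linarith only [h1]) (by linarith only [h2]) 2
  · rintro ⟨θ, s⟩ ⟨hθ, -⟩ x hx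
    simp only at hθ ⊢
    have hdiff : ∀ i, |θ i - θ₀ i| ≤ ρ := fun i => by
      have := (dist_le_pi_dist θ θ₀ i).trans (Metric.mem_closedBall.1 hθ)
      simpa [Real.dist_eq] using this
    have hlip := net_lip hν0 hν1 hL1 ha hκ₀1 hρ0.le θ θ₀ (fun i => by
        have h2 := abs_add_le (θ i - θ₀ i) (θ₀ i)
        rw [sub_add_cancel] at h2
        linarith only [h2, hθ₀ i, hdiff i, hρ1, hκ₀])
      (fun i => by linarith only [hθ₀ i, hκ₀]) hdiff x (fun j => abs_le.2 (hx j))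
    have e : ρ * a * (L + 1) * (κ₀ * (r + d + 1)) ^ (L + 1) = erate β d n := by
      have : ρ * G = erate β d n := div_mul_cancel₀ _ (by positivity)
      rw [← this, hG]; ring
    rw [e] at hlip
    have h3 : |trunc F (netOfParams ν d r L θ x) - f₀ x| ≤ Cf * erate β d n := by
      refine (trunc_sub _ _ (hf₀bd x)).trans ?_
      have := abs_add_le (netOfParams ν d r L θ x - netOfParams ν d r L θ₀ x)
        (netOfParams ν d r L θ₀ x - f₀ x)
      rw [sub_add_sub_cancel] at this
      have h4 := hθ₀f x hx
      rw [hCf]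
      linarith only [this, h4, hlip]
    rw [← sq_abs]
    refine pow_le_pow_left₀ (abs_nonneg _) (h3.trans ?_) 2
    gcongr
    linarith only [hCm0]

lemma eps_facts {β : ℝ} (hβ : 0 < β) {d : ℕ} (hd : 0 < d) {γ : ℝ} (hγ : 2 < γ) (D e₀ : ℝ)
    (he₀ : 0 < e₀) : ∀ᶠ n : ℕ in atTop,
      erate β d n * Real.log n ^ γ ≤ e₀ ∧
      D * krate β d n ≤ (erate β d n * Real.log n ^ γ) ^ 2 * n := by
  have hd' : (0 : ℝ) < d := by exact_mod_cast hd
  have h1 : Tendsto (fun n : ℕ => erate β d n * Real.log n ^ γ) atTop (nhds 0) := by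
    have h := (isLittleO_log_rpow_rpow_atTop γ (s := β / (2 * β + d)) (by positivity)).tendsto_div_nhds_zero
    refine (h.comp tendsto_natCast_atTop_atTop).congr fun n => ?_
    simp only [Function.comp, erate]
    rw [Real.rpow_neg (Nat.cast_nonneg n)]
    field_simp
  have h2 : Tendsto (fun n : ℕ => Real.log n ^ (2 * γ - 3)) atTop atTop :=
    (tendsto_rpow_atTop (by linarith)).comp
      (Real.tendsto_log_atTop.comp tendsto_natCast_atTop_atTop)
  filter_upwards [h1.eventually (eventually_le_nhds he₀), h2.eventually (eventually_ge_atTop D),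
    eventually_ge_atTop 3] with n h3 h4 hn
  refine ⟨h3, ?_⟩
  obtain ⟨hx1, hxn, he0, he1, hen, hne, hk1, hkx, hkl⟩ := rates_basic hβ hd hn
  have hl := one_le_log hn
  have hl0 : 0 < Real.log n := by linarith
  have e1 : (Real.log n ^ γ) ^ 2 = Real.log n ^ 3 * Real.log n ^ (2 * γ - 3) := by
    rw [← Real.rpow_natCast, ← Real.rpow_natCast, ← Real.rpow_mul hl0.le, ← Real.rpow_add hl0]
    congr 1; push_cast; ring
  calc D * krate β d n ≤ Real.log n ^ (2 * γ - 3) * krate β d n := by gcongr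
    _ = (n * erate β d n ^ 2) * (Real.log n ^ 3 * Real.log n ^ (2 * γ - 3)) := by
        rw [hne]; unfold krate; ring
    _ = _ := by rw [← e1]; ring

/-- posterior concentration for nonparametric Gaussian regression with
fully connected Bayesian neural networks.  Under Assumption 1 on the prior for the
network parameters, Assumption 2 on the prior for the noise variance, and with the
architecture determined by constants `C_L, C_r` satisfying the bounded-parameter
approximation theorem, the posterior mass of
`{(θ, σ²) : ‖T_F ∘ f_{θ,ρν} − f₀‖_{2,P_X} + |σ² − σ₀²| > M_n ε_n}` with
`ε_n = n^{−β/(2β+d)} (log n)^γ`, `γ > 2`, converges to `0` in `P₀ⁿ`-probability. -/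
theorem posterior_concentration_gaussian_regression
    (a : ℝ) (ha : 1 ≤ a) (d : ℕ) (hd : 0 < d)
    (β K F : ℝ) (hβ : 0 < β) (hK : 1 ≤ K) (hF : 1 ≤ F)
    (σ₀ : ℝ) (hσ₀ : 0 < σ₀) (ν : ℝ) (hν0 : 0 ≤ ν) (hν1 : ν < 1)
    -- the true regression function
    (f₀ : (Fin d → ℝ) → ℝ) (hf₀ : memHolder a d β K f₀) (hf₀bd : ∀ x, |f₀ x| ≤ F)
    -- the covariate distribution, supported in the cube `[−a,a]^d`
    (PX : Measure (Fin d → ℝ)) (hPXprob : IsProbabilityMeasure PX)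
    (hPXsupp : PX (cube a d) = 1)
    -- the law of one observation `(X, Y)`:  `X ∼ P_X`, `Y | X ∼ N(f₀(X), σ₀²)`
    (μD : Measure ((Fin d → ℝ) × ℝ)) (hμDprob : IsProbabilityMeasure μD)
    (hμD : μD = gaussRegLaw d PX f₀ (Real.toNNReal (σ₀ ^ 2)))
    -- the constants of the bounded-parameter approximation theorem
    (CL Cr CB c₁ : ℝ) (hCL : 0 < CL) (hCr : 0 < Cr) (hCB : 0 < CB) (hc₁ : 0 < c₁)
    (happrox : ∀ f : (Fin d → ℝ) → ℝ, memHolder a d β K f →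
      ∃ M₀ : ℕ, ∀ M : ℕ, M₀ ≤ M →
        ∃ g : (Fin d → ℝ) → ℝ,
          memDNN ν d ⌈CL * Real.logb 2 M⌉₊ ⌈Cr * (M : ℝ) ^ d⌉₊ CB g ∧
          ∀ x ∈ cube a d, |g x - f x| ≤ c₁ / (M : ℝ) ^ (2 * β))
    -- the prior on the network parameters, with density satisfying Assumption 1
    (Prθ : ∀ n : ℕ, Measure (ParamIdx d (rwidth Cr β d n) (Ldepth CL n) → ℝ))
    (hPrθprob : ∀ n, IsProbabilityMeasure (Prθ n))
    (πθ : ∀ n : ℕ, (ParamIdx d (rwidth Cr β d n) (Ldepth CL n) → ℝ) → ℝ)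
    (hπθmeas : ∀ n, Measurable (πθ n)) (hπθnn : ∀ n θ, 0 ≤ πθ n θ)
    (hπθdens : ∀ n, Prθ n = volume.withDensity fun θ => ENNReal.ofReal (πθ n θ))
    (hπθlow : ∀ κ : ℝ, 0 < κ → ∃ δκ : ℝ, 0 < δκ ∧
      ∀ n : ℕ, ∀ θ : ParamIdx d (rwidth Cr β d n) (Ldepth CL n) → ℝ,
        (∀ i, |θ i| ≤ κ) →
          δκ ^ Fintype.card (ParamIdx d (rwidth Cr β d n) (Ldepth CL n)) ≤ πθ n θ)
    -- the prior on the noise variance, satisfying Assumption 2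
    (Prσ : Measure ℝ) (hPrσprob : IsProbabilityMeasure Prσ)
    (qσ : ℝ → ℝ) (hqσmeas : Measurable qσ) (hqσnn : ∀ s, 0 ≤ qσ s)
    (hqσdens : Prσ = volume.withDensity fun s => ENNReal.ofReal (qσ s))
    (hqσpos : Prσ {s | s ≤ 0} = 0)
    (hqσcont : ContinuousOn qσ (Set.Ioo 0 (2 * σ₀ ^ 2)))
    (hqσposOn : ∀ s ∈ Set.Ioo 0 (2 * σ₀ ^ 2), 0 < qσ s)
    (hqσtail : ∃ C : ℝ, 0 < C ∧ ∃ K₀ : ℝ, ∀ K' : ℝ, K₀ ≤ K' →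
      Prσ {s | K' < s} ≤ ENNReal.ofReal (C / K'))
    -- the rate `ε_n = n^{−β/(2β+d)} (log n)^γ` with `γ > 2`, and any `M_n → ∞`
    (γ : ℝ) (hγ : 2 < γ)
    (ε : ℕ → ℝ)
    (hε : ∀ n : ℕ, ε n = (n : ℝ) ^ (-(β / (2 * β + d))) * Real.log n ^ γ)
    (M : ℕ → ℝ) (hM : Tendsto M atTop atTop) :
    ∀ δ : ℝ, 0 < δ →
      Tendsto
        (fun n : ℕ =>
          Measure.pi (fun _ : Fin n => μD)
            {D | ENNReal.ofReal δ <
              postMass ((Prθ n).prod Prσ)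
                (gaussLik ν F d (rwidth Cr β d n) (Ldepth CL n) D)
                {p | M n * ε n <
                  l2dist d PX
                    (fun x =>
                      trunc F (netOfParams ν d (rwidth Cr β d n) (Ldepth CL n) p.1 x))
                    f₀ + |p.2 - σ₀ ^ 2|}})
        atTop (nhds 0) := by
  intro δ hδ
  subst hμD
  have hv : 0 < σ₀ ^ 2 := by positivity
  generalize σ₀ ^ 2 = v at *
  have hf₀m : Measurable f₀ := hf₀.1.continuous.measurable
  have hF0 : 0 < F := by linarith
  obtain ⟨c, hc, c', hc', e₀, he₀, htest⟩ := test_exists PX f₀ hf₀m hv hF0 hf₀bd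
  obtain ⟨CN, hCN, n₁, hcov⟩ := cover_rate hβ hd hCL hCr (ν := ν) hν1 hF hc' PX
  obtain ⟨Cp, hCp, n₂, hmass⟩ := prior_mass ha hd hβ hF hν0 hν1 hv f₀ hf₀ hf₀bd CL Cr CB c₁ hCL hCr
    hCB hc₁ happrox Prθ πθ hπθdens hπθlow Prσ qσ hqσdens hqσcont hqσposOn
  set D : ℝ := CN + Cp + 1 + (1 / 2 + Cp ^ 2 / v) + 1 with hD
  have hcube : ∀ᵐ x ∂PX, x ∈ cube a d := by
    rw [ae_iff_prob_eq_one]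
    · exact hPXsupp
    · have : cube a d = Set.Icc (fun _ => -a) (fun _ => a) := by
        ext x; simp [cube, Pi.le_def, forall_and]
      exact (show MeasurableSet (cube a d) by rw [this]; exact measurableSet_Icc).mem
  have hbound : ∀ᶠ n : ℕ in atTop,
      Measure.pi (fun _ : Fin n => gaussRegLaw d PX f₀ v.toNNReal)
            {D | ENNReal.ofReal δ <
              postMass ((Prθ n).prod Prσ)
                (gaussLik ν F d (rwidth Cr β d n) (Ldepth CL n) D)
                {p | M n * ε n <
                  l2dist d PX
                    (fun x =>
                      trunc F (netOfParams ν d (rwidth Cr β d n) (Ldepth CL n) p.1 x))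
                    f₀ + |p.2 - v|}} ≤ ENNReal.ofReal ((4 + 1 / δ) / n) := by
    filter_upwards [eps_facts hβ hd hγ (D / c) e₀ he₀, eventually_ge_atTop 3,
      eventually_ge_atTop n₁, eventually_ge_atTop n₂, hM.eventually (eventually_ge_atTop 1)]
      with n hen hn3 hnn1 hnn2 hMn
    obtain ⟨hx1, hxn, he0, he1, hen1, hne, hk1, hkx, hkl⟩ := rates_basic hβ hd hn3
    have hl := one_le_log hn3
    have hn3' : (3 : ℝ) ≤ n := by exact_mod_cast hn3
    have hn0 : (0 : ℝ) < n := by linarith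
    have hεn : ε n = erate β d n * Real.log n ^ γ := hε n
    obtain ⟨hεe, hεk⟩ := hen
    rw [← hεn] at hεe hεk
    have hlγ : 1 ≤ Real.log n ^ γ := Real.one_le_rpow hl (by linarith)
    have heε : erate β d n ≤ ε n := by
      rw [hεn]; exact le_mul_of_one_le_right he0.le hlγ
    have hε0 : 0 < ε n := he0.trans_le heε
    have hck : D * krate β d n ≤ c * ε n ^ 2 * n := by
      rw [div_mul_eq_mul_div, div_le_iff₀ hc] at hεk
      linarith only [hεk]
    obtain ⟨S, hS, hS'⟩ := hcov n hnn1 (ε n) heε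
    obtain ⟨B, hB, hBs, hBf⟩ := hmass n hnn2
    obtain ⟨Φ, hΦ, hΦQ, hΦA⟩ := htest (ε n) hε0 hεe
      (fun (θ : ParamIdx d (rwidth Cr β d n) (Ldepth CL n) → ℝ) x =>
        trunc F (netOfParams ν d (rwidth Cr β d n) (Ldepth CL n) θ x))
      (fun θ => (measurable_trunc_net ν F d _ _).comp (f := fun x => (θ, x)) (by fun_prop))
      (fun θ x => trunc_abs hF0.le _) S hS' n (by omega)
    have hfin := finite_bound (ν := ν) (F := F) (n := n) PX f₀ hf₀m hv ((Prθ n).prod Prσ)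
      {p | M n * ε n < l2dist d PX (fun x =>
        trunc F (netOfParams ν d (rwidth Cr β d n) (Ldepth CL n) p.1 x)) f₀ + |p.2 - v|} B
      (κ := krate β d n) (Real.exp_pos _) hB hBs
      (fun p hp => hcube.mono fun x hx => hBf p hp x hx) hδ
      (Real.exp_pos (-(c * ε n ^ 2 * n))).le Φ hΦ (fun p hp => hΦA p.1 p.2 (by
        refine lt_of_le_of_lt ?_ hp
        exact le_mul_of_one_le_left hε0.le hMn))
    refine hfin.trans ?_
    have hk0 : 0 < krate β d n := by linarith only [hk1]
    have hCv : 0 ≤ Cp ^ 2 / v := by positivity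
    have hexp : Real.exp (-krate β d n) ≤ 1 / n := by
      rw [one_div, Real.exp_neg]
      refine inv_anti₀ hn0 ?_
      rw [← Real.log_le_iff_le_exp hn0]; exact hkl
    have t1 : (2 * S.card + 1) * Real.exp (-(c * ε n ^ 2 * n)) ≤ 3 * Real.exp (-krate β d n) := by
      have h1 : 1 ≤ Real.exp (CN * krate β d n) := Real.one_le_exp (by positivity)
      calc (2 * S.card + 1) * Real.exp (-(c * ε n ^ 2 * n))
          ≤ (3 * Real.exp (CN * krate β d n)) * Real.exp (-(D * krate β d n)) := by
            gcongr
            linarith only [h1, hS]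
        _ = 3 * Real.exp (CN * krate β d n - D * krate β d n) := by
            rw [mul_assoc, ← Real.exp_add, sub_eq_add_neg]
        _ ≤ _ := by
            gcongr
            have : 0 ≤ (Cp + 1 + (1 / 2 + Cp ^ 2 / v)) * krate β d n := by positivity
            rw [hD]
            linarith only [this]
    have t2 : Real.exp (-(c * ε n ^ 2 * n)) * Real.exp (krate β d n +
        n * (erate β d n ^ 2 / 2 + (Cp * erate β d n) ^ 2 / v)) /
        (δ * Real.exp (-(Cp * krate β d n))) ≤ 1 / δ * Real.exp (-krate β d n) := by
      have h1 : n * (erate β d n ^ 2 / 2 + (Cp * erate β d n) ^ 2 / v) =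
          (1 / 2 + Cp ^ 2 / v) * xrate β d n := by rw [← hne]; ring
      have h2 := mul_le_mul_of_nonneg_left hkx (by positivity : 0 ≤ 1 / 2 + Cp ^ 2 / v)
      rw [h1, div_le_iff₀ (by positivity), ← Real.exp_add]
      have h3 : 1 / δ * Real.exp (-krate β d n) * (δ * Real.exp (-(Cp * krate β d n))) =
          Real.exp (-krate β d n + -(Cp * krate β d n)) := by
        rw [Real.exp_add]; field_simp
      rw [h3]
      apply Real.exp_le_exp.2
      have h4 : 0 ≤ CN * krate β d n := by positivity
      rw [hD] at hck
      linarith only [h2, hck, h4]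
    calc _ ≤ ENNReal.ofReal (3 * Real.exp (-krate β d n)) + ENNReal.ofReal (Real.exp (-krate β d n)) +
          ENNReal.ofReal (1 / δ * Real.exp (-krate β d n)) := by
          refine add_le_add (add_le_add (hΦQ.trans (ENNReal.ofReal_le_ofReal t1)) le_rfl)
            (ENNReal.ofReal_le_ofReal t2)
      _ = ENNReal.ofReal ((4 + 1 / δ) * Real.exp (-krate β d n)) := by
          rw [← ENNReal.ofReal_add (by positivity) (by positivity),
            ← ENNReal.ofReal_add (by positivity) (by positivity)]
          congr 1; ring
      _ ≤ _ := by
          refine ENNReal.ofReal_le_ofReal ?_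
          rw [div_eq_mul_one_div (4 + 1 / δ)]
          exact mul_le_mul_of_nonneg_left hexp (by positivity)
  have hlim : Tendsto (fun n : ℕ => ENNReal.ofReal ((4 + 1 / δ) / n)) atTop (nhds 0) := by
    rw [← ENNReal.ofReal_zero]
    exact ENNReal.tendsto_ofReal (tendsto_const_div_atTop_nhds_zero_nat _)
  exact tendsto_of_tendsto_of_tendsto_of_le_of_le' tendsto_const_nhds hlim
    (Eventually.of_forall fun _ => zero_le) hbound
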